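/- Fix d > 1 and ε > 0. For each n, let A_n be an n×n random matrix with independent identically distributed Ber(d/n) entries. Then for Lebesgue almost every z ∈ ℂ, the probability P( σ_n(A_n − z·I_n) ≤ exp(−ε n) ) tends to 0 as n → ∞; i.e., the set of z ∈ ℂ for which this convergence fails has Lebesgue measure zero. -/

import Mathlib

open MeasureTheory

/-- The Bernoulli measure on `ℂ`, putting mass `p` at `1` and mass `1 - p` at `0`. -/
noncomputable def bernoulliC (p : ℝ) : Measure ℂ :=
  ENNReal.ofReal p • Measure.dirac 1 + ENNReal.ofReal (1 - p) • Measure.dirac 0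

/-- The law of an `n × n` matrix with iid `Ber(p)` entries (taking values `0` or `1` in `ℂ`). -/
noncomputable def iidMatrixLaw (n : ℕ) (p : ℝ) : Measure (Fin n → Fin n → ℂ) :=
  Measure.pi fun _ => Measure.pi fun _ => bernoulliC p

/-- The Euclidean norm of a vector in `ℂ^n`. -/
noncomputable def vecNorm2 {n : ℕ} (v : Fin n → ℂ) : ℝ :=
  Real.sqrt (∑ i, ‖v i‖ ^ 2)

/-- The least singular value of an `n × n` complex matrix:
the infimum of `‖M v‖₂` over unit vectors `v`. -/
noncomputable def leastSingVal {n : ℕ} (M : Matrix (Fin n) (Fin n) ℂ) : ℝ :=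
  sInf {r | ∃ v : Fin n → ℂ, vecNorm2 v = 1 ∧ r = vecNorm2 (M.mulVec v)}

/-!
Count, at a scale `σ`, the largest dimension, capped at `y ≈ (log n) ^ 2`, of a subspace on which
`A - z` shrinks the sup norm by the factor `σ`. Resampling one uniformly chosen row of `A` from a
denser Bernoulli law hardly changes the law of `A`: the `χ²` cost is divided by `n`. So it hardly
changes the expected nullity. Yet if `A - z` is nearly singular, it has an approximate left null
vector, and if that vector is spread over `δ n` rows, then the resampling lowers the nullity with
probability about `δ`, unless the new row misses the null vector of the other rows, which the
Littlewood–Offord inequality makes unlikely for a spread-out vector. Hence the expected nullity,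
which lies in `[0, y]`, drops along a long sequence of decreasing scales by an amount proportional
to the probability of being nearly singular at the last one, and that probability is small.

Null vectors are spread out because the small blocks `B - z` are quantitatively invertible for
almost every `z` (by Borel–Cantelli, as there are few `0/1` matrices of each small size) and
because the sparse graph has unique-neighbor expansion, which holds as `d * exp (1 - d) < 1` for
`d ≠ 1`. The nullity starts below the cap because, for almost every `z`, the determinant of `A - z`
is not super-exponentially small.
-/

section ApproximateNullity

open Module Matrix

variable {ι 𝕜 : Type*} [NormedField 𝕜]

lemma norm_sum_mul_le_card_mul (s : Finset ι) {f g : ι → 𝕜} {A B : ℝ} (hA : 0 ≤ A)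
    (hf : ∀ j ∈ s, ‖f j‖ ≤ A) (hg : ∀ j ∈ s, ‖g j‖ ≤ B) :
    ‖∑ j ∈ s, f j * g j‖ ≤ s.card * (A * B) :=
  calc ‖∑ j ∈ s, f j * g j‖ ≤ ∑ _j ∈ s, A * B :=
        norm_sum_le_of_le s fun j hj => by
          rw [norm_mul]
          exact mul_le_mul (hf j hj) (hg j hj) (norm_nonneg _) hA
    _ = s.card * (A * B) := by rw [Finset.sum_const, nsmul_eq_mul]

variable [Fintype ι]

lemma norm_sum_mul_le (s : Finset ι) {f g : ι → 𝕜} {A B : ℝ} (hA : 0 ≤ A) (hB : 0 ≤ B)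
    (hf : ∀ j ∈ s, ‖f j‖ ≤ A) (hg : ∀ j ∈ s, ‖g j‖ ≤ B) :
    ‖∑ j ∈ s, f j * g j‖ ≤ Fintype.card ι * (A * B) :=
  (norm_sum_mul_le_card_mul s hA hf hg).trans (by gcongr; exact s.card_le_univ)

lemma norm_mulVec_apply_le {M : Matrix ι ι 𝕜} {B : ℝ} (hB : ∀ i j, ‖M i j‖ ≤ B)
    (v : ι → 𝕜) (i : ι) : ‖(M *ᵥ v) i‖ ≤ Fintype.card ι * B * ‖v‖ := by
  rw [mul_assoc]
  exact norm_sum_mul_le _ ((norm_nonneg _).trans (hB i i)) (norm_nonneg v)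
    (fun j _ => hB i j) (fun j _ => norm_le_pi_norm v j)

lemma exists_norm_apply_eq_norm {v : ι → 𝕜} (hv : v ≠ 0) : ∃ j, ‖v j‖ = ‖v‖ := by
  obtain ⟨i, -⟩ := Function.ne_iff.1 hv
  have : Nonempty ι := ⟨i⟩
  exact (IsGreatest.pi_norm v).1

lemma exists_smul_normalized {v : ι → 𝕜} (hv : v ≠ 0) :
    ∃ c : 𝕜, ‖c‖ = ‖v‖⁻¹ ∧ ‖c • v‖ = 1 ∧ ∃ j, (c • v) j = 1 := by
  obtain ⟨j, hj⟩ := exists_norm_apply_eq_norm hv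
  have hvj : v j ≠ 0 := norm_ne_zero_iff.1 (hj ▸ norm_ne_zero_iff.2 hv)
  have hc : ‖(v j)⁻¹‖ = ‖v‖⁻¹ := by rw [norm_inv, hj]
  exact ⟨(v j)⁻¹, hc, by rw [norm_smul, hc, inv_mul_cancel₀ (norm_ne_zero_iff.2 hv)],
    j, inv_mul_cancel₀ hvj⟩

lemma finrank_le_finrank_inf_ker_add_one {K V : Type*} [Field K] [AddCommGroup V] [Module K V]
    [FiniteDimensional K V] (W : Submodule K V) (f : V →ₗ[K] K) :
    finrank K W ≤ finrank K (W ⊓ LinearMap.ker f : Submodule K V) + 1 := by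
  have hrank := (f.domRestrict W).finrank_range_add_finrank_ker
  have hrange : finrank K (LinearMap.range (f.domRestrict W)) ≤ 1 := by
    simpa using Submodule.finrank_le (LinearMap.range (f.domRestrict W))
  have hker : finrank K (LinearMap.ker (f.domRestrict W)) =
      finrank K (W ⊓ LinearMap.ker f : Submodule K V) := by
    rw [LinearMap.ker_domRestrict, ← Submodule.finrank_map_subtype_eq,
      Submodule.map_comap_subtype]
  omega

/-- The matrix `M` has approximate nullity at least `k` at scale `σ` on the rows in `R`: on some
subspace of dimension at least `k`, these rows shrink the sup norm by the factor `σ`. -/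
def HasApproxNullity (M : Matrix ι ι 𝕜) (R : Set ι) (σ : ℝ) (k : ℕ) : Prop :=
  ∃ W : Submodule 𝕜 (ι → 𝕜), k ≤ finrank 𝕜 W ∧ ∀ v ∈ W, ∀ i ∈ R, ‖(M *ᵥ v) i‖ ≤ σ * ‖v‖

namespace HasApproxNullity

variable {M N : Matrix ι ι 𝕜} {R S : Set ι} {σ τ κ η D : ℝ} {k l : ℕ}

lemma zero (M : Matrix ι ι 𝕜) (R : Set ι) (σ : ℝ) : HasApproxNullity M R σ 0 :=
  ⟨⊥, Nat.zero_le _, fun v hv i _ => by rw [(Submodule.mem_bot 𝕜).1 hv]; simp⟩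

lemma mono (h : HasApproxNullity M R σ k) (hR : S ⊆ R) (hσ : σ ≤ τ) (hl : l ≤ k) :
    HasApproxNullity M S τ l := by
  obtain ⟨W, hW, h⟩ := h
  refine ⟨W, hl.trans hW, fun v hv i hi => (h v hv i (hR hi)).trans ?_⟩
  gcongr

lemma congr_rows (h : HasApproxNullity M R σ k) (hM : ∀ i ∈ R, N i = M i) :
    HasApproxNullity N R σ k := by
  obtain ⟨W, hW, h⟩ := h
  exact ⟨W, hW, fun v hv i hi => by simpa only [mulVec, hM i hi] using h v hv i hi⟩

lemma of_compl_singleton (hσ : 0 ≤ σ) {i : ι} (h : HasApproxNullity M {i}ᶜ σ k) :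
    HasApproxNullity M Set.univ σ (k - 1) := by
  obtain ⟨W, hW, h⟩ := h
  have hrank := finrank_le_finrank_inf_ker_add_one W (LinearMap.proj i ∘ₗ M.mulVecLin)
  refine ⟨W ⊓ LinearMap.ker (LinearMap.proj i ∘ₗ M.mulVecLin), by omega, fun v hv j _ => ?_⟩
  obtain ⟨hvW, hvi⟩ := Submodule.mem_inf.1 hv
  by_cases hj : j = i
  · have hzero : (M *ᵥ v) i = 0 := hvi
    rw [hj, hzero, norm_zero]
    positivity
  · exact h v hvW j hj

/-- An approximate left null vector `u` with a large `i`-th entry writes the `i`-th row as a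
controlled combination of the others, so adding it back does not lower the nullity. -/
lemma of_compl_singleton_of_left {i : ι} {u : ι → 𝕜} (hu : ‖u‖ ≤ 1)
    (hui : κ ≤ ‖u i‖) (hκ : 0 < κ) (hMu : ∀ j, ‖(Mᵀ *ᵥ u) j‖ ≤ η) (hσ : 0 ≤ σ) (hστ : σ ≤ τ)
    (hτ : Fintype.card ι * η + Fintype.card ι * σ ≤ κ * τ)
    (h : HasApproxNullity M {i}ᶜ σ k) : HasApproxNullity M Set.univ τ k := by
  classical
  obtain ⟨W, hW, h⟩ := h
  refine ⟨W, hW, fun v hv j _ => ?_⟩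
  by_cases hj : j ≠ i
  · exact (h v hv j hj).trans (by gcongr)
  obtain rfl := not_ne_iff.1 hj
  have hpair : ∑ l, (Mᵀ *ᵥ u) l * v l = ∑ l, u l * (M *ᵥ v) l := by
    rw [mulVec_transpose]
    exact (dotProduct_mulVec u M v).symm
  have hrow : u j * (M *ᵥ v) j =
      ∑ l, (Mᵀ *ᵥ u) l * v l - ∑ l ∈ Finset.univ.erase j, u l * (M *ᵥ v) l := by
    rw [hpair, ← Finset.add_sum_erase _ _ (Finset.mem_univ j), add_sub_cancel_right]
  have hleft : ‖∑ l, (Mᵀ *ᵥ u) l * v l‖ ≤ Fintype.card ι * (η * ‖v‖) :=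
    norm_sum_mul_le _ ((norm_nonneg _).trans (hMu j)) (norm_nonneg v)
      (fun l _ => hMu l) (fun l _ => norm_le_pi_norm v l)
  have hrest : ‖∑ l ∈ Finset.univ.erase j, u l * (M *ᵥ v) l‖ ≤
      Fintype.card ι * (1 * (σ * ‖v‖)) :=
    norm_sum_mul_le _ zero_le_one (by positivity) (fun l _ => (norm_le_pi_norm u l).trans hu)
      (fun l hl => h v hv l (Finset.ne_of_mem_erase hl))
  refine le_of_mul_le_mul_left ?_ hκ
  calc κ * ‖(M *ᵥ v) j‖ ≤ ‖u j * (M *ᵥ v) j‖ := by rw [norm_mul]; gcongr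
    _ ≤ Fintype.card ι * (η * ‖v‖) + Fintype.card ι * (1 * (σ * ‖v‖)) := by
      rw [hrow]
      exact (norm_sub_le _ _).trans (add_le_add hleft hrest)
    _ = (Fintype.card ι * η + Fintype.card ι * σ) * ‖v‖ := by ring
    _ ≤ κ * τ * ‖v‖ := by gcongr
    _ = κ * (τ * ‖v‖) := mul_assoc _ _ _

end HasApproxNullity

lemma norm_le_of_norm_mulVec_add_smul {M : Matrix ι ι 𝕜} {i : ι} {w g : ι → 𝕜} {c : 𝕜}
    {σ κ D : ℝ} (hg : ‖g‖ = 1) (hgi : κ ≤ ‖(M *ᵥ g) i‖) (hκ : 0 < κ) (hκD : κ ≤ D)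
    (hD : ∀ v, ‖(M *ᵥ v) i‖ ≤ D * ‖v‖) (hw : ‖(M *ᵥ w) i‖ ≤ σ * ‖w‖) (hσ : σ ≤ κ / 2) :
    κ * ‖w‖ ≤ 4 * D * ‖w + c • g‖ := by
  have hc : ‖c‖ * κ ≤ D * ‖w + c • g‖ + σ * ‖w‖ :=
    calc ‖c‖ * κ ≤ ‖c‖ * ‖(M *ᵥ g) i‖ := by gcongr
      _ = ‖(M *ᵥ (w + c • g)) i - (M *ᵥ w) i‖ := by
        rw [← norm_mul, mulVec_add, mulVec_smul, Pi.add_apply, add_sub_cancel_left,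
          Pi.smul_apply, smul_eq_mul]
      _ ≤ D * ‖w + c • g‖ + σ * ‖w‖ := (norm_sub_le _ _).trans (add_le_add (hD _) hw)
  have htri : ‖w‖ ≤ ‖w + c • g‖ + ‖c‖ :=
    calc ‖w‖ = ‖w + c • g - c • g‖ := by rw [add_sub_cancel_right]
      _ ≤ ‖w + c • g‖ + ‖c • g‖ := norm_sub_le _ _
      _ = ‖w + c • g‖ + ‖c‖ := by rw [norm_smul, hg, mul_one]
  nlinarith [norm_nonneg w, norm_nonneg (w + c • g)]

/-- A null vector `g` of the rows other than `i` which the `i`-th row does see is far from any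
approximate null space of `M`, so it adds a dimension once the `i`-th row is removed. -/
lemma HasApproxNullity.compl_singleton {M : Matrix ι ι 𝕜} {σ τ κ D : ℝ} {k : ℕ} {i : ι}
    {g : ι → 𝕜} (hg : ‖g‖ = 1) (hgz : ∀ j ≠ i, (M *ᵥ g) j = 0) (hgi : κ ≤ ‖(M *ᵥ g) i‖)
    (hκ : 0 < κ) (hκD : κ ≤ D) (hD : ∀ v, ‖(M *ᵥ v) i‖ ≤ D * ‖v‖) (hσ0 : 0 ≤ σ)
    (hσ : σ ≤ κ / 2) (hστ : 4 * D * σ ≤ κ * τ) (h : HasApproxNullity M Set.univ σ k) :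
    HasApproxNullity M {i}ᶜ τ (k + 1) := by
  obtain ⟨W, hW, h⟩ := h
  have hg0 : g ≠ 0 := norm_ne_zero_iff.1 (hg ▸ one_ne_zero)
  have hgW : g ∉ W := fun hgW => by
    have := h g hgW i (Set.mem_univ i)
    rw [hg] at this
    linarith
  refine ⟨W ⊔ 𝕜 ∙ g, ?_, fun v hv j hj => ?_⟩
  · have hdisj : Disjoint W (𝕜 ∙ g) := (Submodule.disjoint_span_singleton' hg0).2 hgW
    have hsup := Submodule.finrank_sup_add_finrank_inf_eq W (𝕜 ∙ g)
    rw [hdisj.eq_bot, finrank_bot, finrank_span_singleton hg0] at hsup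
    omega
  · obtain ⟨w, hw, y, hy, rfl⟩ := Submodule.mem_sup.1 hv
    obtain ⟨c, rfl⟩ := Submodule.mem_span_singleton.1 hy
    have hMj : (M *ᵥ (w + c • g)) j = (M *ᵥ w) j := by
      rw [mulVec_add, mulVec_smul, Pi.add_apply, Pi.smul_apply, hgz j hj, smul_zero, add_zero]
    have hwv := norm_le_of_norm_mulVec_add_smul (c := c) hg hgi hκ hκD hD
      (h w hw i (Set.mem_univ i)) hσ
    rw [hMj]
    refine (h w hw j (Set.mem_univ j)).trans (le_of_mul_le_mul_left ?_ hκ)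
    calc κ * (σ * ‖w‖) = σ * (κ * ‖w‖) := mul_left_comm _ _ _
      _ ≤ σ * (4 * D * ‖w + c • g‖) := by gcongr
      _ = 4 * D * σ * ‖w + c • g‖ := by ring
      _ ≤ κ * τ * ‖w + c • g‖ := by gcongr
      _ = κ * (τ * ‖w + c • g‖) := mul_assoc _ _ _

section Determinant

variable [DecidableEq ι]

lemma norm_det_le_factorial_mul_prod (M : Matrix ι ι 𝕜) {c : ι → ℝ} (hc : ∀ i j, ‖M i j‖ ≤ c j) :
    ‖M.det‖ ≤ (Fintype.card ι).factorial * ∏ j, c j := by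
  have hterm (π : Equiv.Perm ι) : ‖Equiv.Perm.sign π • ∏ j, M (π j) j‖ ≤ ∏ j, c j := by
    have hsign : ‖Equiv.Perm.sign π • ∏ j, M (π j) j‖ = ∏ j, ‖M (π j) j‖ := by
      rcases Int.units_eq_one_or (Equiv.Perm.sign π) with h | h <;> simp [h]
    rw [hsign]
    exact Finset.prod_le_prod (fun _ _ => norm_nonneg _) fun j _ => hc _ j
  rw [det_apply]
  refine (norm_sum_le_of_le _ fun π _ => hterm π).trans_eq ?_
  rw [Finset.sum_const, Finset.card_univ, Fintype.card_perm, nsmul_eq_mul]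

lemma det_updateCol_mulVec {R : Type*} [CommRing R] (M : Matrix ι ι R) (v : ι → R) (j : ι) :
    (M.updateCol j (M *ᵥ v)).det = M.det * v j := by
  rw [← cramer_apply, cramer_eq_adjugate_mulVec, mulVec_mulVec, adjugate_mul, smul_mulVec,
    one_mulVec, Pi.smul_apply, smul_eq_mul]

lemma updateCol_mulVec_of_apply_eq_zero {R : Type*} [CommRing R] (M : Matrix ι ι R) (b : ι → R)
    {v : ι → R} {j : ι} (hv : v j = 0) : M.updateCol j b *ᵥ v = M *ᵥ v := by
  ext i
  simp only [mulVec, dotProduct]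
  refine Finset.sum_congr rfl fun l _ => ?_
  obtain rfl | hl := eq_or_ne l j
  · rw [hv, mul_zero, mul_zero]
  · rw [updateCol_ne hl]

lemma norm_det_le_of_small_columns {M : Matrix ι ι 𝕜} {σ D : ℝ} (J : Finset ι)
    (hJ : ∀ i, ∀ j ∈ J, ‖M i j‖ ≤ σ) (hD : ∀ i, ∀ j ∉ J, ‖M i j‖ ≤ D) :
    ‖M.det‖ ≤ (Fintype.card ι).factorial * (σ ^ J.card * D ^ (Fintype.card ι - J.card)) := by
  refine (norm_det_le_factorial_mul_prod M (c := fun j => if j ∈ J then σ else D)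
    fun i j => ?_).trans_eq ?_
  · split_ifs with h
    exacts [hJ i j h, hD i j h]
  · rw [Finset.prod_ite, Finset.prod_const, Finset.prod_const, Finset.filter_univ_mem,
      ← Finset.card_compl, Finset.compl_eq_univ_sdiff, ← Finset.filter_notMem_eq_sdiff]

/-- Column operations along `W` make `k` columns small one at a time; `J` collects the columns
already treated, on which the vectors still available in `W` vanish. -/
lemma norm_det_le_of_small_columns_of_submodule {σ D : ℝ} (k : ℕ) :
    ∀ (M : Matrix ι ι 𝕜) (J : Finset ι) (W : Submodule 𝕜 (ι → 𝕜)), k ≤ finrank 𝕜 W →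
      (∀ v ∈ W, ∀ i, ‖(M *ᵥ v) i‖ ≤ σ * ‖v‖) → (∀ v ∈ W, ∀ j ∈ J, v j = 0) →
      (∀ i, ∀ j ∈ J, ‖M i j‖ ≤ σ) → (∀ i, ∀ j ∉ J, ‖M i j‖ ≤ D) →
      ‖M.det‖ ≤ (Fintype.card ι).factorial *
        (σ ^ (J.card + k) * D ^ (Fintype.card ι - (J.card + k))) := by
  induction k with
  | zero => exact fun M J _ _ _ _ hJ hD => norm_det_le_of_small_columns J hJ hD
  | succ k ih =>
    intro M J W hk hW hWJ hJ hD
    have hne : W ≠ ⊥ := by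
      rintro rfl
      simp at hk
    obtain ⟨w, hwW, hw0⟩ := Submodule.exists_mem_ne_zero_of_ne_bot hne
    obtain ⟨c, -, hv, j, hvj⟩ := exists_smul_normalized hw0
    have hvW : c • w ∈ W := W.smul_mem c hwW
    have hjJ : j ∉ J := fun hj => one_ne_zero (hvj.symm.trans (hWJ _ hvW j hj))
    have hrank := finrank_le_finrank_inf_ker_add_one W (LinearMap.proj j)
    have hdet := ih (M.updateCol j (M *ᵥ (c • w))) (insert j J) (W ⊓ LinearMap.ker (.proj j))
      (by omega)
      (fun x hx i => by
        rw [updateCol_mulVec_of_apply_eq_zero M _ hx.2]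
        exact hW x hx.1 i)
      (fun x hx => Finset.forall_mem_insert .. |>.2 ⟨hx.2, hWJ x hx.1⟩)
      (fun i l hl => by
        obtain rfl | hlj := eq_or_ne l j
        · rw [updateCol_self]
          simpa only [hv, mul_one] using hW _ hvW i
        · rw [updateCol_ne hlj]
          exact hJ i l (Finset.mem_of_mem_insert_of_ne hl hlj))
      (fun i l hl => by
        rw [Finset.mem_insert, not_or] at hl
        rw [updateCol_ne hl.1]
        exact hD i l hl.2)
    rw [det_updateCol_mulVec, hvj, mul_one, Finset.card_insert_of_notMem hjJ] at hdet
    rwa [add_assoc, add_comm 1] at hdet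

lemma HasApproxNullity.norm_det_le {M : Matrix ι ι 𝕜} {σ D : ℝ} {k : ℕ}
    (h : HasApproxNullity M Set.univ σ k) (hD : ∀ i j, ‖M i j‖ ≤ D) :
    ‖M.det‖ ≤ (Fintype.card ι).factorial * (σ ^ k * D ^ (Fintype.card ι - k)) := by
  obtain ⟨W, hW, h⟩ := h
  simpa using norm_det_le_of_small_columns_of_submodule k M ∅ W hW
    (fun v hv i => h v hv i (Set.mem_univ i)) (by simp) (by simp) (by simpa using hD)

lemma HasApproxNullity.exists_left {M : Matrix ι ι 𝕜} {σ : ℝ} (hdet : M.det ≠ 0)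
    (h : HasApproxNullity M Set.univ σ 1) :
    ∃ u : ι → 𝕜, ‖u‖ = 1 ∧ ∀ j, ‖(Mᵀ *ᵥ u) j‖ ≤ Fintype.card ι * σ := by
  obtain ⟨W, hW, h⟩ := h
  have hne : W ≠ ⊥ := by
    rintro rfl
    simp at hW
  obtain ⟨w, hwW, hw0⟩ := Submodule.exists_mem_ne_zero_of_ne_bot hne
  obtain ⟨c, -, hv, j, hvj⟩ := exists_smul_normalized hw0
  have hinv : M⁻¹ * M = 1 := nonsing_inv_mul M (isUnit_iff_ne_zero.2 hdet)
  have hσ (i : ι) : ‖(M *ᵥ (c • w)) i‖ ≤ σ := by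
    simpa only [hv, mul_one] using h _ (W.smul_mem c hwW) i (Set.mem_univ i)
  have hone : 1 ≤ Fintype.card ι * (‖M⁻¹ j‖ * σ) := by
    have hsum : ∑ l, M⁻¹ j l * (M *ᵥ (c • w)) l = 1 := by
      rw [← hvj, ← congrFun (one_mulVec (c • w)) j, ← hinv, ← mulVec_mulVec]
      rfl
    rw [← norm_one (α := 𝕜), ← hsum]
    exact norm_sum_mul_le _ (norm_nonneg _) ((norm_nonneg _).trans (hσ j))
      (fun l _ => norm_le_pi_norm (M⁻¹ j) l) (fun l _ => hσ l)
  have hx0 : M⁻¹ j ≠ 0 := fun hx => by simp [hx] at hone; linarith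
  have hMx : Mᵀ *ᵥ M⁻¹ j = (1 : Matrix ι ι 𝕜) j := by
    rw [mulVec_transpose, ← hinv]
    rfl
  obtain ⟨b, hb, hbx, -⟩ := exists_smul_normalized hx0
  refine ⟨b • M⁻¹ j, hbx, fun l => ?_⟩
  have hentry : ‖(1 : Matrix ι ι 𝕜) j l‖ ≤ 1 := by
    rw [one_apply]
    split_ifs <;> simp
  rw [mulVec_smul, hMx, Pi.smul_apply, norm_smul, hb]
  calc ‖M⁻¹ j‖⁻¹ * ‖(1 : Matrix ι ι 𝕜) j l‖ ≤ ‖M⁻¹ j‖⁻¹ * (Fintype.card ι * (‖M⁻¹ j‖ * σ)) := by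
        gcongr
        exact hentry.trans hone
    _ = Fintype.card ι * σ := by
        have := norm_ne_zero_iff.2 hx0
        field_simp

end Determinant

end ApproximateNullity

section ShiftedMatrix

open Matrix

variable {ι : Type*} [DecidableEq ι]

/-- The matrix `A - z • 1`, where `A` is the `0/1` matrix with support `a`. -/
noncomputable def shiftedMatrix (a : ι → ι → Bool) (z : ℂ) : Matrix ι ι ℂ :=
  Matrix.of (fun i j => if a i j then 1 else 0) - z • 1

lemma shiftedMatrix_apply (a : ι → ι → Bool) (z : ℂ) (i j : ι) :
    shiftedMatrix a z i j = (if a i j then 1 else 0) - (if i = j then z else 0) := by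
  simp [shiftedMatrix, one_apply]

lemma norm_shiftedMatrix_apply_le (a : ι → ι → Bool) (z : ℂ) (i j : ι) :
    ‖shiftedMatrix a z i j‖ ≤ 1 + ‖z‖ := by
  rw [shiftedMatrix_apply]
  refine (norm_sub_le _ _).trans (add_le_add ?_ ?_) <;> split_ifs <;> simp

lemma shiftedMatrix_apply_eq_zero {a : ι → ι → Bool} (z : ℂ) {i j : ι} (h : ¬(a i j ∨ i = j)) :
    shiftedMatrix a z i j = 0 := by
  rw [not_or] at h
  simp [shiftedMatrix_apply, h]

lemma le_norm_shiftedMatrix_apply {a : ι → ι → Bool} {z : ℂ} {c : ℝ} (hc1 : c ≤ 1)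
    (hcz : c ≤ ‖z‖) (hc1z : c ≤ ‖1 - z‖) {i j : ι} (h : a i j ∨ i = j) :
    c ≤ ‖shiftedMatrix a z i j‖ := by
  rw [shiftedMatrix_apply]
  by_cases ha : a i j <;> by_cases hij : i = j <;> simp_all

lemma shiftedMatrix_transpose (a : ι → ι → Bool) (z : ℂ) :
    (shiftedMatrix a z)ᵀ = shiftedMatrix (fun i j => a j i) z := by
  ext i j
  simp only [transpose_apply, shiftedMatrix_apply, eq_comm (a := i)]

lemma shiftedMatrix_comp {κ : Type*} [DecidableEq κ] (a : ι → ι → Bool) (z : ℂ) {e : κ → ι}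
    (he : e.Injective) :
    shiftedMatrix (fun i j => a (e i) (e j)) z = (shiftedMatrix a z).submatrix e e := by
  ext i j
  simp only [submatrix_apply, shiftedMatrix_apply, he.eq_iff]

end ShiftedMatrix

section Delocalization

open Finset Matrix

section SmallBlocks

variable {ι : Type*} [DecidableEq ι]

/-- Every matrix `B - z • 1` with `B` a `0/1` matrix of size at most `m` is invertible, with an
inverse bounded by `Q` in the sup norm. -/
def SmallBlocksInvertible (z : ℂ) (m : ℕ) (Q : ℝ) : Prop :=
  ∀ k ≤ m, ∀ (B : Fin k → Fin k → Bool) (v : Fin k → ℂ), ‖v‖ ≤ Q * ‖shiftedMatrix B z *ᵥ v‖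

lemma SmallBlocksInvertible.norm_apply_le {z : ℂ} {m : ℕ} {Q t : ℝ}
    (h : SmallBlocksInvertible z m Q) (hQ : 0 ≤ Q) (a : ι → ι → Bool) {S : Finset ι}
    (hS : #S ≤ m) {v : ι → ℂ} (ht : 0 ≤ t)
    (hv : ∀ i ∈ S, ‖∑ j ∈ S, shiftedMatrix a z i j * v j‖ ≤ t) {j : ι} (hj : j ∈ S) :
    ‖v j‖ ≤ Q * t := by
  let e : Fin #S ≃ S := S.equivFin.symm
  have hblock : ‖shiftedMatrix (fun k l => a (e k) (e l)) z *ᵥ fun k => v (e k)‖ ≤ t := by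
    have he : Function.Injective fun k => (e k : ι) := Subtype.val_injective.comp e.injective
    rw [shiftedMatrix_comp a z he, pi_norm_le_iff_of_nonneg ht]
    intro k
    have hsum := hv (e k) (e k).2
    rw [← S.sum_coe_sort, ← e.sum_comp] at hsum
    exact hsum
  calc ‖v j‖ = ‖v (e (e.symm ⟨j, hj⟩))‖ := by rw [e.apply_symm_apply]
    _ ≤ ‖fun k => v (e k)‖ := norm_le_pi_norm (fun k => v (e k)) _
    _ ≤ Q * _ := h #S hS _ _
    _ ≤ Q * t := by gcongr

end SmallBlocks

variable {ι : Type*} [Fintype ι] [DecidableEq ι]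

/-- The rows of `a` that meet `S` in exactly one column, where the diagonal belongs to `a`. -/
def uniqueNeighborRows (a : ι → ι → Bool) (S : Finset ι) : Finset ι :=
  {i | #{j ∈ S | a i j ∨ i = j} = 1}

/-- Unique-neighbor expansion: a positive fraction `1 / K` of every set `S` of columns with
`m ≤ #S < δ n` is matched by rows meeting `S` exactly once. -/
def IsUniqueNeighborExpander (a : ι → ι → Bool) (m K : ℕ) (δ : ℝ) : Prop :=
  ∀ S : Finset ι, m ≤ #S → #S < δ * Fintype.card ι → #S ≤ K * #(uniqueNeighborRows a S)

/-- Every column of `a` has at most `Δ` ones. -/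
def ColumnDegreeLE {ι : Type*} [Fintype ι] (a : ι → ι → Bool) (Δ : ℕ) : Prop :=
  ∀ j, #{i | a i j} ≤ Δ

lemma card_le_mul_card_of_forall_exists_neighbor {ι : Type*} [Fintype ι]
    {a : ι → ι → Bool} {Δ : ℕ}
    (hdeg : ColumnDegreeLE a Δ) {R T : Finset ι} (h : ∀ i ∈ R, ∃ j ∈ T, a i j ∨ i = j) :
    #R ≤ (Δ + 1) * #T := by
  classical
  choose! f hfT hf using h
  refine card_le_mul_card_image_of_maps_to (f := f) hfT (Δ + 1) fun j _ => ?_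
  have hfiber : {i ∈ R | f i = j} ⊆ insert j ({i | a i j} : Finset ι) := by
    intro i hi
    obtain ⟨hiR, rfl⟩ := mem_filter.1 hi
    rcases hf i hiR with h | h
    · exact mem_insert_of_mem (mem_filter.2 ⟨mem_univ i, h⟩)
    · exact mem_insert.2 (Or.inl h)
  exact (card_le_card hfiber).trans ((card_insert_le _ _).trans (Nat.succ_le_succ (hdeg j)))

/-- The set of coordinates at which `g` has norm at least `θ`. -/
noncomputable def superlevel (g : ι → ℂ) (θ : ℝ) : Finset ι :=
  {j | θ ≤ ‖g j‖}

/-- The localized alternative to delocalization: up to an error `β`, the vector `g` lives on at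
most `m` coordinates, including an exceptional one (in `E`) at which it has norm at least `γ`. -/
def IsLocalizedAt (g : ι → ℂ) (E : Finset ι) (m : ℕ) (γ β : ℝ) : Prop :=
  ∃ i ∈ E, ∃ S : Finset ι, #S ≤ m ∧ i ∈ S ∧ γ ≤ ‖g i‖ ∧ ∀ j ∉ S, ‖g j‖ < β

/-- The dichotomy for approximate null vectors of `M`: a unit vector that `M` maps within `η` of
`0` off a single coordinate is either of norm at least `κ` on a proportion `δ` of the coordinates,
or localized. -/
def IsDelocalized (M : Matrix ι ι ℂ) (m : ℕ) (δ κ η γ β : ℝ) : Prop :=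
  ∀ (g : ι → ℂ) (E : Finset ι), ‖g‖ = 1 → #E ≤ 1 → (∀ i ∉ E, ‖(M *ᵥ g) i‖ ≤ η) →
    δ * Fintype.card ι ≤ #(superlevel g κ) ∨ IsLocalizedAt g E m γ β

section Superlevel

variable {ι : Type*} [Fintype ι] {g : ι → ℂ}

lemma mem_superlevel {θ : ℝ} {j : ι} : j ∈ superlevel g θ ↔ θ ≤ ‖g j‖ := by
  simp [superlevel]

lemma superlevel_antitone (g : ι → ℂ) : Antitone (superlevel g) := fun _ _ h _ hj =>
  mem_superlevel.2 (h.trans (mem_superlevel.1 hj))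

lemma exists_superlevel_eq_succ (hg : ‖g‖ = 1) {β : ℝ} (hβ0 : 0 ≤ β) (hβ1 : β ≤ 1)
    {m : ℕ} (hm : #(superlevel g (β ^ m)) ≤ m) :
    ∃ k < m, superlevel g (β ^ k) = superlevel g (β ^ (k + 1)) := by
  by_contra! hstrict
  have hgrow : ∀ k ≤ m, k + 1 ≤ #(superlevel g (β ^ k)) := by
    intro k
    induction k with
    | zero =>
      intro _
      obtain ⟨j, hj⟩ := exists_norm_apply_eq_norm (norm_ne_zero_iff.1 (hg ▸ one_ne_zero))
      exact card_pos.2 ⟨j, mem_superlevel.2 (by rw [pow_zero, hj, hg])⟩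
    | succ k ih =>
      intro hk
      have hssub : superlevel g (β ^ k) ⊂ superlevel g (β ^ (k + 1)) :=
        (superlevel_antitone g (pow_le_pow_of_le_one hβ0 hβ1 k.le_succ)).ssubset_of_ne
          (hstrict k hk)
      exact (ih (by omega)).trans_lt (card_lt_card hssub)
  exact absurd (hgrow m le_rfl) (by omega)

end Superlevel

lemma norm_sum_sdiff_le (a : ι → ι → Bool) (z : ℂ) {g : ι → ℂ} {S E : Finset ι} (hE : #E ≤ 1)
    {η β γ : ℝ} (hβ0 : 0 ≤ β) (hγ0 : 0 ≤ γ) {i : ι} (hη : ‖(shiftedMatrix a z *ᵥ g) i‖ ≤ η)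
    (hoff : ∀ j ∉ S, ‖g j‖ ≤ β) (hES : ∀ j ∈ S ∩ E, ‖g j‖ ≤ γ) :
    ‖∑ j ∈ S \ E, shiftedMatrix a z i j * g j‖ ≤
      η + Fintype.card ι * ((1 + ‖z‖) * β) + (1 + ‖z‖) * γ := by
  have hz : 0 ≤ 1 + ‖z‖ := by positivity
  have hsplit : ∑ j ∈ S \ E, shiftedMatrix a z i j * g j = (shiftedMatrix a z *ᵥ g) i -
      ∑ j ∈ Sᶜ, shiftedMatrix a z i j * g j - ∑ j ∈ S ∩ E, shiftedMatrix a z i j * g j := by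
    have hrow : (shiftedMatrix a z *ᵥ g) i = ∑ j ∈ S, shiftedMatrix a z i j * g j +
        ∑ j ∈ Sᶜ, shiftedMatrix a z i j * g j := (sum_add_sum_compl S _).symm
    rw [hrow, add_sub_cancel_right, ← sum_inter_add_sum_sdiff S E, add_sub_cancel_left]
  have hcompl : ‖∑ j ∈ Sᶜ, shiftedMatrix a z i j * g j‖ ≤ Fintype.card ι * ((1 + ‖z‖) * β) :=
    norm_sum_mul_le _ hz hβ0 (fun j _ => norm_shiftedMatrix_apply_le a z i j)
      fun j hj => hoff j (mem_compl.1 hj)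
  have hinter : ‖∑ j ∈ S ∩ E, shiftedMatrix a z i j * g j‖ ≤ (1 + ‖z‖) * γ :=
    calc ‖∑ j ∈ S ∩ E, shiftedMatrix a z i j * g j‖ ≤ #(S ∩ E) * ((1 + ‖z‖) * γ) :=
          norm_sum_mul_le_card_mul _ hz (fun j _ => norm_shiftedMatrix_apply_le a z i j) hES
      _ ≤ (1 : ℕ) * ((1 + ‖z‖) * γ) := by
          gcongr
          exact (card_le_card inter_subset_right).trans hE
      _ = (1 + ‖z‖) * γ := by rw [Nat.cast_one, one_mul]
  rw [hsplit]
  exact (norm_sub_le _ _).trans (add_le_add ((norm_sub_le _ _).trans (add_le_add hη hcompl)) hinter)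

/-- Between the scales `β ^ 0, …, β ^ m` a vector with few large entries has a gap, where the
invertibility of the corresponding small block forces it to be small, or localized at `E`. -/
lemma lt_card_superlevel_or_isLocalizedAt {z : ℂ} {m : ℕ} {Q η β : ℝ}
    (h : SmallBlocksInvertible z m Q) (hQ : 1 ≤ Q) (a : ι → ι → Bool) {g : ι → ℂ}
    (hg : ‖g‖ = 1) {E : Finset ι} (hE : #E ≤ 1) (hη0 : 0 ≤ η) (hβ0 : 0 < β) (hβ : β ≤ 1 / 2)
    (hη : ∀ i ∉ E, ‖(shiftedMatrix a z *ᵥ g) i‖ ≤ η)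
    (hsmall : Q * (η + Fintype.card ι * ((1 + ‖z‖) * β)) ≤ 1 / 4) :
    m < #(superlevel g (β ^ m)) ∨ IsLocalizedAt g E m (1 / (4 * Q * (1 + ‖z‖))) β := by
  by_contra! hcon
  obtain ⟨hcard, hnotloc⟩ := hcon
  have hβ1 : β ≤ 1 := by linarith
  obtain ⟨k, hk, hgap⟩ := exists_superlevel_eq_succ hg hβ0.le hβ1 hcard
  set S := superlevel g (β ^ k)
  have hS : #S ≤ m :=
    (card_le_card (superlevel_antitone g (pow_le_pow_of_le_one hβ0.le hβ1 hk.le))).trans hcard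
  have hoff : ∀ j ∉ S, ‖g j‖ < β := fun j hj => by
    rw [hgap, mem_superlevel, not_le] at hj
    exact hj.trans_le (pow_le_of_le_one hβ0.le hβ1 k.succ_ne_zero)
  set γ := 1 / (4 * Q * (1 + ‖z‖)) with hγ
  have hQγ : Q * ((1 + ‖z‖) * γ) = 1 / 4 := by
    rw [hγ]
    field_simp
  have hES : ∀ j ∈ S ∩ E, ‖g j‖ < γ := fun j hj => by
    rw [mem_inter] at hj
    by_contra! hge
    exact hnotloc ⟨j, hj.2, S, hS, hj.1, hge, hoff⟩
  have hblock : ∀ j ∈ S \ E, ‖g j‖ ≤ 1 / 2 := fun j hj =>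
    calc ‖g j‖ ≤ Q * (η + Fintype.card ι * ((1 + ‖z‖) * β) + (1 + ‖z‖) * γ) :=
          h.norm_apply_le (by linarith) a ((card_le_card sdiff_subset).trans hS) (by positivity)
            (fun i hi => norm_sum_sdiff_le a z hE hβ0.le (by positivity)
              (hη i (mem_sdiff.1 hi).2) (fun j hj => (hoff j hj).le) fun j hj => (hES j hj).le) hj
      _ ≤ 1 / 2 := by rw [mul_add, hQγ]; linarith
  have hγ4 : γ ≤ 1 / 4 := by
    rw [hγ]
    gcongr
    nlinarith [norm_nonneg z]
  obtain ⟨j, hj⟩ := exists_norm_apply_eq_norm (norm_ne_zero_iff.1 (hg ▸ one_ne_zero))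
  rw [hg] at hj
  by_cases hjS : j ∈ S
  · by_cases hjE : j ∈ E
    · linarith [hES j (mem_inter.2 ⟨hjS, hjE⟩)]
    · linarith [hblock j (mem_sdiff.2 ⟨hjS, hjE⟩)]
  · linarith [hoff j hjS]

lemma mulVec_apply_eq_of_unique_neighbor {a : ι → ι → Bool} (z : ℂ) (g : ι → ℂ) {S : Finset ι}
    {i j₀ : ι} (h : ({j ∈ S | a i j ∨ i = j} : Finset ι) = {j₀}) :
    (shiftedMatrix a z *ᵥ g) i =
      shiftedMatrix a z i j₀ * g j₀ + ∑ j ∈ Sᶜ, shiftedMatrix a z i j * g j := by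
  have hS : ∑ j ∈ S, shiftedMatrix a z i j * g j = shiftedMatrix a z i j₀ * g j₀ := by
    rw [← sum_singleton (fun j => shiftedMatrix a z i j * g j) j₀, ← h]
    refine (sum_filter_of_ne fun j _ hne => ?_).symm
    by_contra hij
    exact hne (by rw [shiftedMatrix_apply_eq_zero z hij, zero_mul])
  rw [← hS]
  exact (sum_add_sum_compl S _).symm

lemma exists_neighbor_mem_superlevel_sdiff {a : ι → ι → Bool} {z : ℂ} {c q η θ : ℝ} {g : ι → ℂ}
    (hc1 : c ≤ 1) (hcz : c ≤ ‖z‖) (hc1z : c ≤ ‖1 - z‖) (hq : 0 < q)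
    (hqc : 2 * (Fintype.card ι + 1) * (1 + ‖z‖) * q ≤ c) (hθ : 0 < θ) (hηθ : η ≤ c * θ / 2)
    {i : ι} (hη : ‖(shiftedMatrix a z *ᵥ g) i‖ ≤ η)
    (hi : i ∈ uniqueNeighborRows a (superlevel g θ)) :
    ∃ j ∈ superlevel g (θ * q) \ superlevel g θ, a i j ∨ i = j := by
  set S := superlevel g θ
  obtain ⟨j₀, hj₀⟩ := card_eq_one.1 (mem_filter.1 hi).2
  obtain ⟨hj₀S, hij₀⟩ := mem_filter.1 (hj₀ ▸ mem_singleton_self j₀)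
  by_contra! hno
  have hlarge : c * θ ≤ ‖shiftedMatrix a z i j₀ * g j₀‖ := by
    rw [norm_mul]
    exact mul_le_mul (le_norm_shiftedMatrix_apply hc1 hcz hc1z hij₀) (mem_superlevel.1 hj₀S) hθ.le
      (norm_nonneg _)
  have hrest : ‖∑ j ∈ Sᶜ, shiftedMatrix a z i j * g j‖ ≤
      Fintype.card ι * ((1 + ‖z‖) * (θ * q)) := by
    rw [← sum_filter_of_ne (p := fun j => j ∉ superlevel g (θ * q)) fun j hj hne hjq => hne (by
      rw [shiftedMatrix_apply_eq_zero z fun hij => ?_, zero_mul]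
      exact (not_or.2 (hno j (mem_sdiff.2 ⟨hjq, mem_compl.1 hj⟩))) hij)]
    refine norm_sum_mul_le _ (by positivity) (by positivity)
      (fun j _ => norm_shiftedMatrix_apply_le a z i j) fun j hj => ?_
    exact (not_le.1 (mt mem_superlevel.2 (mem_filter.1 hj).2)).le
  have hle : c * θ ≤ η + Fintype.card ι * ((1 + ‖z‖) * (θ * q)) := by
    refine hlarge.trans ?_
    rw [← sub_eq_of_eq_add (mulVec_apply_eq_of_unique_neighbor z g hj₀)]
    exact (norm_sub_le _ _).trans (add_le_add hη hrest)
  have hqθ : 2 * (Fintype.card ι + 1) * (1 + ‖z‖) * q * θ ≤ c * θ := by gcongr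
  have hpos : 0 < (1 + ‖z‖) * (θ * q) := by positivity
  linarith

section Growth

variable {a : ι → ι → Bool} {z : ℂ} {m K Δ : ℕ} {δ c q η θ : ℝ} {g : ι → ℂ} {E : Finset ι}

lemma card_superlevel_growth (hc1 : c ≤ 1) (hcz : c ≤ ‖z‖) (hc1z : c ≤ ‖1 - z‖) (hq : 0 < q)
    (hqc : 2 * (Fintype.card ι + 1) * (1 + ‖z‖) * q ≤ c) (hq1 : q ≤ 1)
    (hexp : IsUniqueNeighborExpander a m K δ) (hdeg : ColumnDegreeLE a Δ) (hm : 2 * K ≤ m)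
    (hE : #E ≤ 1) (hθ : 0 < θ) (hη : ∀ i ∉ E, ‖(shiftedMatrix a z *ᵥ g) i‖ ≤ η)
    (hηθ : η ≤ c * θ / 2) (hS : m ≤ #(superlevel g θ))
    (hSδ : #(superlevel g θ) < δ * Fintype.card ι) :
    #(superlevel g θ) * (2 * K * (Δ + 1) + 1) ≤ 2 * K * (Δ + 1) * #(superlevel g (θ * q)) := by
  set S := superlevel g θ
  set T := superlevel g (θ * q)
  set U := uniqueNeighborRows a S
  have hST : S ⊆ T := superlevel_antitone g (mul_le_of_le_one_right hθ.le hq1)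
  have hUE : #(U \ E) ≤ (Δ + 1) * #(T \ S) :=
    card_le_mul_card_of_forall_exists_neighbor hdeg fun i hi =>
      exists_neighbor_mem_superlevel_sdiff hc1 hcz hc1z hq hqc hθ hηθ
        (hη i (mem_sdiff.1 hi).2) (mem_sdiff.1 hi).1
  have hU : #U ≤ (Δ + 1) * #(T \ S) + 1 := by
    have := le_card_sdiff E U
    omega
  have hcard : #(T \ S) + #S = #T := card_sdiff_add_card_eq_card hST
  have hSU : #S ≤ K * ((Δ + 1) * #(T \ S) + 1) := (hexp S hS hSδ).trans (Nat.mul_le_mul_left K hU)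
  rw [← hcard]
  nlinarith

lemma le_or_pow_le_of_growth {f : ℕ → ℝ} {A r : ℝ} {t : ℕ} (hr : 0 ≤ r) (hf0 : 1 ≤ f 0)
    (hf : Monotone f) (hstep : ∀ s < t, f s < A → r * f s ≤ f (s + 1)) :
    ∀ s ≤ t, A ≤ f s ∨ r ^ s ≤ f s := by
  intro s
  induction s with
  | zero => exact fun _ => Or.inr (by rwa [pow_zero])
  | succ s ih =>
    intro hs
    by_cases hA : A ≤ f s
    · exact Or.inl (hA.trans (hf s.le_succ))
    · refine Or.inr (le_trans ?_ (hstep s hs (not_le.1 hA)))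
      rw [pow_succ']
      exact mul_le_mul_of_nonneg_left ((ih (by omega)).resolve_left hA) hr

lemma le_card_superlevel_of_growth (hc : 0 < c) (hc1 : c ≤ 1) (hcz : c ≤ ‖z‖)
    (hc1z : c ≤ ‖1 - z‖) (hq : 0 < q) (hqc : 2 * (Fintype.card ι + 1) * (1 + ‖z‖) * q ≤ c)
    (hq1 : q ≤ 1) (hexp : IsUniqueNeighborExpander a m K δ) (hdeg : ColumnDegreeLE a Δ)
    (hm : 2 * K ≤ m) (hK : 1 ≤ K) (hE : #E ≤ 1) (hθ : 0 < θ) {t : ℕ}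
    (hη : ∀ i ∉ E, ‖(shiftedMatrix a z *ᵥ g) i‖ ≤ η) (hηθ : η ≤ c * (θ * q ^ t) / 2)
    (hS : m ≤ #(superlevel g θ))
    (ht : (Fintype.card ι : ℝ) < (1 + 1 / ((2 * K * (Δ + 1) : ℕ) : ℝ)) ^ t) :
    δ * Fintype.card ι ≤ #(superlevel g (θ * q ^ t)) := by
  set x := 2 * K * (Δ + 1)
  have hx : (0 : ℝ) < x := by positivity
  have hanti : Antitone fun s : ℕ => θ * q ^ s := fun r s hrs =>
    mul_le_mul_of_nonneg_left (pow_le_pow_of_le_one hq.le hq1 hrs) hθ.le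
  have hmono : Monotone fun s : ℕ => superlevel g (θ * q ^ s) :=
    (superlevel_antitone g).comp hanti
  have hm0 : m ≤ #(superlevel g (θ * q ^ 0)) := by rwa [pow_zero, mul_one]
  have hgrow := le_or_pow_le_of_growth (f := fun s => (#(superlevel g (θ * q ^ s)) : ℝ))
    (A := δ * Fintype.card ι) (r := 1 + 1 / (x : ℝ)) (t := t) (by positivity)
    (by exact_mod_cast (show 1 ≤ m by omega).trans hm0)
    (fun r s hrs => Nat.cast_le.2 (card_le_card (hmono hrs)))
    (fun s hs hlt => by
      have hηs : η ≤ c * (θ * q ^ s) / 2 := hηθ.trans (by have := hanti hs.le; gcongr)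
      have hstep := card_superlevel_growth hc1 hcz hc1z hq hqc hq1 hexp hdeg hm hE
        (by positivity) hη hηs (hm0.trans (card_le_card (hmono s.zero_le))) hlt
      rw [mul_assoc θ, ← pow_succ, ← Nat.cast_le (α := ℝ)] at hstep
      push_cast at hstep
      refine le_of_mul_le_mul_left (a := (x : ℝ)) ?_ hx
      calc x * ((1 + 1 / (x : ℝ)) * #(superlevel g (θ * q ^ s)))
          = #(superlevel g (θ * q ^ s)) * (x + 1) := by field_simp
        _ ≤ x * #(superlevel g (θ * q ^ (s + 1))) := by simpa [x] using hstep)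
  refine (hgrow t le_rfl).resolve_right fun hpow => (ht.trans_le hpow).not_ge ?_
  exact_mod_cast card_le_univ _

lemma isDelocalized_shiftedMatrix {Q β κ : ℝ} {t : ℕ} (hc : 0 < c) (hc1 : c ≤ 1) (hcz : c ≤ ‖z‖)
    (hc1z : c ≤ ‖1 - z‖) (hblocks : SmallBlocksInvertible z m Q) (hQ : 1 ≤ Q)
    (hexp : IsUniqueNeighborExpander a m K δ) (hdeg : ColumnDegreeLE a Δ)
    (hm : 2 * K ≤ m) (hK : 1 ≤ K)
    (ht : (Fintype.card ι : ℝ) < (1 + 1 / ((2 * K * (Δ + 1) : ℕ) : ℝ)) ^ t)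
    (hβ0 : 0 < β) (hβ : β ≤ 1 / 2) (hκ0 : 0 ≤ κ)
    (hκ : κ ≤ β ^ m * (c / (2 * (Fintype.card ι + 1) * (1 + ‖z‖))) ^ t)
    (hsmall : Q * (c / 2 * κ + Fintype.card ι * ((1 + ‖z‖) * β)) ≤ 1 / 4) :
    IsDelocalized (shiftedMatrix a z) m δ κ (c / 2 * κ) (1 / (4 * Q * (1 + ‖z‖))) β := by
  intro g E hg hE hη
  set q := c / (2 * (Fintype.card ι + 1) * (1 + ‖z‖))
  have hD : 1 ≤ 2 * (Fintype.card ι + 1) * (1 + ‖z‖) := by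
    nlinarith [norm_nonneg z, Nat.cast_nonneg (α := ℝ) (Fintype.card ι)]
  have hq0 : 0 < q := by positivity
  refine (lt_card_superlevel_or_isLocalizedAt hblocks hQ a hg hE (by positivity) hβ0 hβ hη
    hsmall).imp_left fun hlt => ?_
  have hηθ : c / 2 * κ ≤ c * (β ^ m * q ^ t) / 2 := by
    rw [mul_div_right_comm]
    gcongr
  refine (le_card_superlevel_of_growth hc hc1 hcz hc1z hq0 (mul_div_cancel₀ c (by positivity)).le
    (div_le_one_of_le₀ (hc1.trans hD) (by positivity)) hexp hdeg hm hK hE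
    (by positivity) hη hηθ hlt.le ht).trans ?_
  exact_mod_cast card_le_card (superlevel_antitone g hκ)

end Growth

end Delocalization

section FiniteProbability

variable {α : Type*} [Fintype α] {w : α → ℝ}

/-- `w` is the mass function of a probability on the finite type `α`. -/
structure IsProbWeight (w : α → ℝ) : Prop where
  nonneg : ∀ x, 0 ≤ w x
  sum_eq_one : ∑ x, w x = 1

/-- The expectation of `F` under the mass function `w`. -/
def expectation (w F : α → ℝ) : ℝ := ∑ x, w x * F x

open Classical in
/-- The probability of the event `E` under the mass function `w`. -/
noncomputable def probability (w : α → ℝ) (E : α → Prop) : ℝ :=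
  expectation w fun x => if E x then 1 else 0

lemma probability_eq_expectation (w : α → ℝ) (E : α → Prop) [DecidablePred E] :
    probability w E = expectation w fun x => if E x then 1 else 0 := by
  unfold probability
  congr!

lemma expectation_add (w F G : α → ℝ) :
    expectation w (fun x => F x + G x) = expectation w F + expectation w G := by
  simp only [expectation, mul_add, Finset.sum_add_distrib]

lemma expectation_sub (w F G : α → ℝ) :
    expectation w (fun x => F x - G x) = expectation w F - expectation w G := by
  simp only [expectation, mul_sub, Finset.sum_sub_distrib]

lemma expectation_const_mul (w : α → ℝ) (c : ℝ) (F : α → ℝ) :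
    expectation w (fun x => c * F x) = c * expectation w F := by
  simp only [expectation, mul_left_comm _ c, Finset.mul_sum]

lemma expectation_sum {κ : Type*} (w : α → ℝ) (s : Finset κ) (F : κ → α → ℝ) :
    expectation w (fun x => ∑ i ∈ s, F i x) = ∑ i ∈ s, expectation w (F i) := by
  simp only [expectation, Finset.mul_sum]
  exact Finset.sum_comm

namespace IsProbWeight

lemma expectation_const (hw : IsProbWeight w) (c : ℝ) : expectation w (fun _ => c) = c := by
  rw [expectation, ← Finset.sum_mul, hw.sum_eq_one, one_mul]

lemma expectation_mono (hw : IsProbWeight w) {F G : α → ℝ} (h : ∀ x, F x ≤ G x) :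
    expectation w F ≤ expectation w G :=
  Finset.sum_le_sum fun x _ => mul_le_mul_of_nonneg_left (h x) (hw.nonneg x)

lemma expectation_nonneg (hw : IsProbWeight w) {F : α → ℝ} (h : ∀ x, 0 ≤ F x) :
    0 ≤ expectation w F :=
  Finset.sum_nonneg fun x _ => mul_nonneg (hw.nonneg x) (h x)

lemma expectation_le_const (hw : IsProbWeight w) {F : α → ℝ} {c : ℝ} (h : ∀ x, F x ≤ c) :
    expectation w F ≤ c :=
  (hw.expectation_mono h).trans_eq (hw.expectation_const c)

lemma probability_nonneg (hw : IsProbWeight w) (E : α → Prop) : 0 ≤ probability w E :=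
  hw.expectation_nonneg fun x => by split_ifs <;> simp

lemma probability_le_expectation (hw : IsProbWeight w) {E : α → Prop} {F : α → ℝ}
    (hF : ∀ x, 0 ≤ F x) (hE : ∀ x, E x → 1 ≤ F x) : probability w E ≤ expectation w F :=
  hw.expectation_mono fun x => by
    split_ifs with hx
    exacts [hE x hx, hF x]

lemma probability_mono (hw : IsProbWeight w) {E E' : α → Prop} (h : ∀ x, E x → E' x) :
    probability w E ≤ probability w E' :=
  hw.probability_le_expectation (fun x => by split_ifs <;> simp) fun x hx => by simp [h x hx]

lemma probability_exists_le (hw : IsProbWeight w) {κ : Type*} (s : Finset κ)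
    (E : κ → α → Prop) :
    probability w (fun x => ∃ i ∈ s, E i x) ≤ ∑ i ∈ s, probability w (E i) := by
  classical
  have hnonneg : ∀ i x, (0 : ℝ) ≤ if E i x then 1 else 0 := fun i x => by split_ifs <;> simp
  calc probability w (fun x => ∃ i ∈ s, E i x)
      ≤ expectation w (fun x => ∑ i ∈ s, if E i x then 1 else 0) :=
        hw.probability_le_expectation (fun x => Finset.sum_nonneg fun i _ => hnonneg i x)
          fun x ⟨i, hi, hE⟩ => by
            simpa [hE] using Finset.single_le_sum (fun i _ => hnonneg i x) hi
    _ = ∑ i ∈ s, probability w (E i) := by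
        rw [expectation_sum]
        rfl

lemma probability_or_le (hw : IsProbWeight w) (E F : α → Prop) :
    probability w (fun x => E x ∨ F x) ≤ probability w E + probability w F := by
  rw [probability, probability, probability, ← expectation_add]
  refine hw.expectation_mono fun x => ?_
  by_cases hE : E x <;> by_cases hF : F x <;> simp [hE, hF]

end IsProbWeight

lemma probability_equiv {β : Type*} [Fintype β] (e : α ≃ β) {v : β → ℝ}
    (h : ∀ x, v (e x) = w x) (E : β → Prop) :
    probability w (fun x => E (e x)) = probability v E := by
  classical
  simp only [probability, expectation, ← h]
  exact e.sum_comp fun y => v y * if E y then 1 else 0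

end FiniteProbability

section ProductWeight

open Finset

variable {ι α : Type*} [Fintype ι]

/-- The mass function of a family of independent variables indexed by `ι`, each of law `w`. -/
def productWeight (w : α → ℝ) (x : ι → α) : ℝ := ∏ i, w (x i)

lemma productWeight_pos {w : α → ℝ} (hw : ∀ b, 0 < w b) (x : ι → α) : 0 < productWeight w x :=
  prod_pos fun _ _ => hw _

lemma productWeight_transpose (w : α → ℝ) (a : ι → ι → α) :
    productWeight (productWeight w) (fun i j => a j i) = productWeight (productWeight w) a :=
  prod_comm

variable [DecidableEq ι] [Fintype α]

lemma expectation_productWeight_prod (w : α → ℝ) (f : ι → α → ℝ) :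
    expectation (productWeight w) (fun x => ∏ i, f i (x i)) = ∏ i, expectation w (f i) := by
  simp only [expectation, Fintype.prod_sum, productWeight, prod_mul_distrib]

lemma IsProbWeight.productWeight {w : α → ℝ} (hw : IsProbWeight w) :
    IsProbWeight (productWeight (ι := ι) w) where
  nonneg x := prod_nonneg fun i _ => hw.nonneg (x i)
  sum_eq_one := by
    have h := expectation_productWeight_prod (ι := ι) w fun _ _ => 1
    simpa [expectation, hw.sum_eq_one] using h

lemma probability_transpose (w : α → ℝ) (E : (ι → ι → α) → Prop) :
    probability (productWeight (productWeight w)) (fun a => E fun i j => a j i) =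
      probability (productWeight (productWeight w)) E :=
  probability_equiv (Equiv.piComm fun _ _ => α) (productWeight_transpose w) E

lemma expectation_productWeight_split (w : α → ℝ) (s : Finset ι) (F : (ι → α) → ℝ) :
    expectation (productWeight w) F =
      expectation (productWeight w) fun y : {i // i ∉ s} → α =>
        expectation (productWeight w) fun x : s → α =>
          F ((Equiv.piEquivPiSubtypeProd (· ∈ s) fun _ => α).symm (x, y)) := by
  let e := Equiv.piEquivPiSubtypeProd (· ∈ s) fun _ : ι => α
  have hsplit : ∀ (x : s → α) (y : {i // i ∉ s} → α),
      productWeight w (e.symm (x, y)) = productWeight w y * productWeight w x := by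
    intro x y
    rw [mul_comm, productWeight, ← Fintype.prod_subtype_mul_prod_subtype (· ∈ s)]
    congr 1 <;> refine prod_congr (by ext; simp) fun i _ => ?_ <;>
      simp [e, Equiv.piEquivPiSubtypeProd, i.2]
  simp only [expectation]
  rw [← e.symm.sum_comp, Fintype.sum_prod_type_right]
  refine sum_congr rfl fun y _ => ?_
  rw [mul_sum]
  refine sum_congr rfl fun x _ => ?_
  rw [hsplit, mul_assoc]

end ProductWeight

section Resampling

open Finset Function

variable {ι α : Type*} [Fintype ι] [DecidableEq ι] [Fintype α] {w v : α → ℝ}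

lemma expectation_resample (hw : IsProbWeight w) (hpos : ∀ b, 0 < w b) (v : α → ℝ) (i : ι)
    (F : (ι → α) → ℝ) :
    expectation (productWeight w) (fun x => expectation v fun b => F (update x i b)) =
      expectation (productWeight w) (fun x => v (x i) / w (x i) * F x) := by
  have hswap : ∑ p : (ι → α) × α, productWeight w p.1 * (v p.2 * F (update p.1 i p.2)) =
      ∑ p : (ι → α) × α, w p.2 * (productWeight w p.1 * (v (p.1 i) / w (p.1 i) * F p.1)) := by
    refine sum_nbij' (fun p => (update p.1 i p.2, p.1 i)) (fun p => (update p.1 i p.2, p.1 i))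
      (by simp) (by simp) (by simp) (by simp) ?_
    rintro ⟨x, b⟩ -
    have hx : ∀ x : ι → α, productWeight w x = w (x i) * ∏ k ∈ univ.erase i, w (x k) :=
      fun x => (mul_prod_erase _ _ (mem_univ i)).symm
    have herase : ∏ k ∈ univ.erase i, w (update x i b k) = ∏ k ∈ univ.erase i, w (x k) :=
      prod_congr rfl fun k hk => by rw [update_of_ne (ne_of_mem_erase hk)]
    simp only [hx, update_self, herase]
    have := (hpos b).ne'
    field_simp
  rw [Fintype.sum_prod_type, Fintype.sum_prod_type_right] at hswap
  simp only [← mul_sum] at hswap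
  rw [← sum_mul, hw.sum_eq_one, one_mul] at hswap
  exact hswap

/-- The second moment of the density of `v` with respect to `w`, that is `1 + χ²(v, w)`. -/
noncomputable def densityMoment (v w : α → ℝ) : ℝ := expectation v fun b => v b / w b

lemma densityMoment_productWeight (v w : α → ℝ) :
    densityMoment (productWeight (ι := ι) v) (productWeight w) =
      densityMoment v w ^ Fintype.card ι := by
  have h := expectation_productWeight_prod (ι := ι) v fun _ b => v b / w b
  simpa [densityMoment, productWeight, prod_div_distrib] using h

/-- The density, with respect to the product law of `w`, of the law obtained by resampling a
uniformly chosen coordinate from `v`. -/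
noncomputable def resampleDensity (v w : α → ℝ) (x : ι → α) : ℝ :=
  (Fintype.card ι : ℝ)⁻¹ * ∑ i, v (x i) / w (x i)

lemma expectation_average_resample (hw : IsProbWeight w) (hpos : ∀ b, 0 < w b) (v : α → ℝ)
    (F : (ι → α) → ℝ) :
    expectation (productWeight w) (fun x =>
        (Fintype.card ι : ℝ)⁻¹ * ∑ i, expectation v fun b => F (update x i b)) =
      expectation (productWeight w) (fun x => resampleDensity v w x * F x) := by
  simp only [resampleDensity, mul_assoc, sum_mul, expectation_const_mul, expectation_sum,
    expectation_resample hw hpos]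

lemma expectation_density (hw : IsProbWeight w) (hpos : ∀ b, 0 < w b) (hv : IsProbWeight v)
    (i : ι) : expectation (productWeight w) (fun x => v (x i) / w (x i)) = 1 := by
  have h := expectation_resample hw hpos v i fun _ => 1
  simpa only [mul_one, hv.expectation_const, hw.productWeight.expectation_const] using h.symm

lemma expectation_density_mul (hw : IsProbWeight w) (hpos : ∀ b, 0 < w b) (hv : IsProbWeight v)
    (i k : ι) :
    expectation (productWeight w) (fun x => v (x i) / w (x i) * (v (x k) / w (x k))) =
      if k = i then densityMoment v w else 1 := by
  rw [← expectation_resample hw hpos v i fun x => v (x k) / w (x k)]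
  split_ifs with hki
  · subst hki
    simp only [update_self]
    exact hw.productWeight.expectation_const _
  · simp only [update_of_ne hki, hv.expectation_const]
    exact expectation_density hw hpos hv k

variable [Nonempty ι]

lemma expectation_resampleDensity (hw : IsProbWeight w) (hpos : ∀ b, 0 < w b)
    (hv : IsProbWeight v) :
    expectation (productWeight (ι := ι) w) (resampleDensity v w) = 1 := by
  have h := expectation_average_resample (ι := ι) hw hpos v fun _ => 1
  simpa [hv.expectation_const, hw.productWeight.expectation_const] using h.symm

lemma expectation_resampleDensity_sq_le (hw : IsProbWeight w) (hpos : ∀ b, 0 < w b)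
    (hv : IsProbWeight v) :
    expectation (productWeight (ι := ι) w) (fun x => resampleDensity v w x ^ 2) ≤
      1 + densityMoment v w / Fintype.card ι := by
  have hrow : ∀ i : ι, ∑ k, (if k = i then densityMoment v w else 1) ≤
      densityMoment v w + Fintype.card ι := fun i =>
    calc ∑ k, (if k = i then densityMoment v w else 1)
        ≤ ∑ k, ((if k = i then densityMoment v w else 0) + 1) := sum_le_sum fun k _ => by
          split_ifs
          · exact le_add_of_nonneg_right zero_le_one
          · rw [zero_add]
      _ = densityMoment v w + Fintype.card ι := by simp [sum_add_distrib]
  simp only [resampleDensity, mul_pow, sq (Finset.sum _ _), sum_mul_sum, expectation_const_mul,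
    expectation_sum, expectation_density_mul hw hpos hv]
  refine (mul_le_mul_of_nonneg_left (sum_le_sum fun i _ => hrow i) (by positivity)).trans_eq ?_
  rw [sum_const, card_univ, nsmul_eq_mul]
  field_simp
  ring

/-- Planting: since the density `D` of the resampled law has mean `1` and variance at most
`densityMoment v w / n`, resampling a random coordinate hardly changes a bounded expectation. -/
lemma expectation_le_expectation_average_resample (hw : IsProbWeight w) (hpos : ∀ b, 0 < w b)
    (hv : IsProbWeight v) {F : (ι → α) → ℝ} {y s : ℝ} (hs : 0 < s) (hF0 : ∀ x, 0 ≤ F x)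
    (hFy : ∀ x, F x ≤ y) (hy : 0 ≤ y) :
    expectation (productWeight w) F ≤
      expectation (productWeight w) (fun x =>
        (Fintype.card ι : ℝ)⁻¹ * ∑ i, expectation v fun b => F (update x i b)) +
        y * (s + densityMoment v w / (Fintype.card ι * s)) := by
  rw [expectation_average_resample hw hpos]
  set D : (ι → α) → ℝ := resampleDensity v w
  have hpoint : ∀ x, F x ≤ D x * F x + y * (s + s⁻¹ * (1 - 2 * D x + D x ^ 2)) := by
    intro x
    have hamgm : |1 - D x| ≤ s + s⁻¹ * (1 - 2 * D x + D x ^ 2) := by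
      have hsq : 1 - 2 * D x + D x ^ 2 = |1 - D x| ^ 2 := by rw [sq_abs]; ring
      rw [hsq, inv_mul_eq_div, ← sub_le_iff_le_add', le_div_iff₀ hs]
      nlinarith [sq_nonneg (|1 - D x| - s), abs_nonneg (1 - D x)]
    have hF : F x * (1 - D x) ≤ y * |1 - D x| :=
      (mul_le_mul_of_nonneg_left (le_abs_self _) (hF0 x)).trans
        (mul_le_mul_of_nonneg_right (hFy x) (abs_nonneg _))
    linarith [mul_le_mul_of_nonneg_left hamgm hy]
  refine (hw.productWeight.expectation_mono hpoint).trans ?_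
  have hW := hw.productWeight (ι := ι)
  simp only [expectation_add, expectation_sub, expectation_const_mul, hW.expectation_const]
  rw [expectation_resampleDensity hw hpos hv]
  have hvar := expectation_resampleDensity_sq_le (ι := ι) hw hpos hv
  gcongr
  calc s⁻¹ * (1 - 2 * 1 + expectation (productWeight w) fun x => D x ^ 2)
      ≤ s⁻¹ * (densityMoment v w / Fintype.card ι) := by gcongr; linarith
    _ = densityMoment v w / (Fintype.card ι * s) := by field_simp

end Resampling

section BernoulliWeight

/-- The mass function of the Bernoulli law `Ber(p)` on `Bool`. -/
def bernoulliWeight (p : ℝ) (b : Bool) : ℝ := if b then p else 1 - p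

lemma bernoulliWeight_pos {p : ℝ} (h0 : 0 < p) (h1 : p < 1) (b : Bool) :
    0 < bernoulliWeight p b := by
  cases b <;> simp [bernoulliWeight, h0, h1]

lemma expectation_bernoulliWeight (p : ℝ) (f : Bool → ℝ) :
    expectation (bernoulliWeight p) f = p * f true + (1 - p) * f false := by
  simp [expectation, bernoulliWeight]

lemma isProbWeight_bernoulliWeight {p : ℝ} (h0 : 0 ≤ p) (h1 : p ≤ 1) :
    IsProbWeight (bernoulliWeight p) where
  nonneg b := by cases b <;> simp [bernoulliWeight, h0, h1]
  sum_eq_one := by simp [bernoulliWeight]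

lemma densityMoment_bernoulliWeight {p : ℝ} (h0 : 0 < p) (h1 : p < 1) (P : ℝ) :
    densityMoment (bernoulliWeight P) (bernoulliWeight p) = 1 + (P - p) ^ 2 / (p * (1 - p)) := by
  rw [densityMoment, expectation_bernoulliWeight]
  simp only [bernoulliWeight, if_true, Bool.false_eq_true, if_false]
  have : 1 - p ≠ 0 := by linarith
  field_simp
  ring

end BernoulliWeight

section BinomialMass

open Finset

/-- The probability that a binomial variable with parameters `m` and `p` equals `k`. -/
noncomputable def binomialMass (p : ℝ) (m k : ℕ) : ℝ := m.choose k * p ^ k * (1 - p) ^ (m - k)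

variable {p : ℝ}

lemma binomialMass_nonneg (h0 : 0 ≤ p) (h1 : p ≤ 1) (m k : ℕ) : 0 ≤ binomialMass p m k :=
  mul_nonneg (by positivity) (pow_nonneg (by linarith) _)

lemma sum_binomialMass (p : ℝ) (m : ℕ) : ∑ j ∈ range (m + 1), binomialMass p m j = 1 := by
  have h := congrArg (Polynomial.eval p) (bernsteinPolynomial.sum ℝ m)
  simpa [Polynomial.eval_finsetSum, bernsteinPolynomial, binomialMass] using h

lemma variance_binomialMass (p : ℝ) (m : ℕ) :
    ∑ j ∈ range (m + 1), (m * p - j) ^ 2 * binomialMass p m j = m * p * (1 - p) := by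
  have h := congrArg (Polynomial.eval p) (bernsteinPolynomial.variance (R := ℝ) m)
  simpa [Polynomial.eval_finsetSum, bernsteinPolynomial, binomialMass] using h

lemma binomialMass_succ (h0 : p ≠ 0) (h1 : p ≠ 1) {m k : ℕ} (hk : k + 1 ≤ m) :
    binomialMass p m (k + 1) = binomialMass p m k + binomialMass p (m + 1) (k + 1) *
      (((m + 1 : ℕ) * p - (k + 1 : ℕ)) / ((m + 1 : ℕ) * p * (1 - p))) := by
  obtain ⟨e, rfl⟩ := Nat.exists_eq_add_of_le hk
  have q0 : 1 - p ≠ 0 := sub_ne_zero.2 h1.symm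
  have hchoose : (k + 1 + e + 1 : ℝ) * (k + 1 + e).choose k =
      (k + 1 + e + 1).choose (k + 1) * (k + 1) := by
    exact_mod_cast Nat.add_one_mul_choose_eq (k + 1 + e) k
  have hchoose_succ : ((k + 1 + e).choose (k + 1) : ℝ) * (k + 1 + e + 1) =
      (k + 1 + e + 1).choose (k + 1) * (e + 1) := by
    have h := Nat.choose_mul_succ_eq (k + 1 + e) (k + 1)
    rw [show k + 1 + e + 1 - (k + 1) = e + 1 by omega] at h
    exact_mod_cast h
  unfold binomialMass
  rw [show k + 1 + e - (k + 1) = e by omega, show k + 1 + e - k = e + 1 by omega,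
    show k + 1 + e + 1 - (k + 1) = e + 1 by omega]
  have hN : (k + 1 + e + 1 : ℝ) ≠ 0 := by positivity
  rw [eq_div_of_mul_eq hN hchoose_succ, eq_div_of_mul_eq hN ((mul_comm _ _).trans hchoose)]
  push_cast
  field_simp
  ring

lemma binomialMass_le_sum_abs (h0 : 0 < p) (h1 : p < 1) {m k : ℕ} (hk : k ≤ m) :
    binomialMass p m k ≤ ∑ j ∈ range (k + 1), binomialMass p (m + 1) j *
      (|((m + 1 : ℕ) : ℝ) * p - j| / ((m + 1 : ℕ) * p * (1 - p))) := by
  have q0 : 0 < 1 - p := by linarith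
  induction k with
  | zero =>
    simp only [zero_add, range_one, sum_singleton, binomialMass, Nat.choose_zero_right,
      Nat.cast_one, pow_zero, mul_one, one_mul, tsub_zero, Nat.cast_zero]
    rw [abs_of_nonneg (by positivity), pow_succ]
    apply le_of_eq
    field_simp
  | succ k ih =>
    rw [sum_range_succ, binomialMass_succ h0.ne' h1.ne hk]
    refine add_le_add (ih (by omega))
      (mul_le_mul_of_nonneg_left ?_ (binomialMass_nonneg h0.le h1.le _ _))
    gcongr
    exact le_abs_self _

lemma sum_abs_mul_binomialMass_le (h0 : 0 ≤ p) (h1 : p ≤ 1) (m : ℕ) {s : ℝ} (hs : 0 < s) :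
    ∑ j ∈ range (m + 1), binomialMass p m j * |m * p - j| ≤ s + m * p * (1 - p) / s := by
  have habs : ∀ y : ℝ, |y| ≤ s + y ^ 2 / s := fun y => by
    rw [← sub_le_iff_le_add', le_div_iff₀ hs, ← sq_abs]
    nlinarith [sq_nonneg (|y| - s), abs_nonneg y]
  calc ∑ j ∈ range (m + 1), binomialMass p m j * |m * p - j|
      ≤ ∑ j ∈ range (m + 1), binomialMass p m j * (s + (m * p - j) ^ 2 / s) :=
        sum_le_sum fun j _ =>
          mul_le_mul_of_nonneg_left (habs _) (binomialMass_nonneg h0 h1 m j)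
    _ = (∑ j ∈ range (m + 1), binomialMass p m j) * s +
          (∑ j ∈ range (m + 1), (m * p - j) ^ 2 * binomialMass p m j) / s := by
        rw [sum_mul, sum_div, ← sum_add_distrib]
        exact sum_congr rfl fun j _ => by ring
    _ = s + m * p * (1 - p) / s := by rw [sum_binomialMass, variance_binomialMass, one_mul]

/-- Choosing `s` of the order of the standard deviation `√(m p (1 - p))`, every point mass of the
binomial law is at most of order `1 / s`. -/
lemma binomialMass_le (h0 : 0 < p) (h1 : p < 1) {m k : ℕ} (hk : k ≤ m) {s : ℝ} (hs : 0 < s) :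
    binomialMass p m k ≤ s / ((m + 1 : ℕ) * p * (1 - p)) + 1 / s := by
  set v : ℝ := (m + 1 : ℕ) * p * (1 - p)
  have hv0 : 0 < v := mul_pos (by positivity) (sub_pos.2 h1)
  calc binomialMass p m k
      ≤ ∑ j ∈ range (k + 1), binomialMass p (m + 1) j * (|((m + 1 : ℕ) : ℝ) * p - j| / v) :=
        binomialMass_le_sum_abs h0 h1 hk
    _ ≤ ∑ j ∈ range (m + 1 + 1), binomialMass p (m + 1) j *
          (|((m + 1 : ℕ) : ℝ) * p - j| / v) :=
        sum_le_sum_of_subset_of_nonneg (range_mono (by omega)) fun j _ _ =>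
          mul_nonneg (binomialMass_nonneg h0.le h1.le _ _) (by positivity)
    _ = (∑ j ∈ range (m + 1 + 1), binomialMass p (m + 1) j * |((m + 1 : ℕ) : ℝ) * p - j|) / v := by
        simp only [sum_div, mul_div_assoc]
    _ ≤ (s + v / s) / v := by
        gcongr
        exact sum_abs_mul_binomialMass_le h0.le h1.le (m + 1) hs
    _ = s / v + 1 / s := by field_simp

lemma sum_pow_mul_pow_le_of_isAntichain {α : Type*} [Fintype α] {η : ℝ}
    (hη : ∀ k ≤ Fintype.card α, binomialMass p (Fintype.card α) k ≤ η) {A : Finset (Finset α)}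
    (hA : IsAntichain (· ⊆ ·) (A : Set (Finset α))) (hη0 : 0 ≤ η) :
    ∑ s ∈ A, p ^ #s * (1 - p) ^ (Fintype.card α - #s) ≤ η := by
  calc ∑ s ∈ A, p ^ #s * (1 - p) ^ (Fintype.card α - #s)
      ≤ ∑ s ∈ A, η * ((Fintype.card α).choose #s : ℝ)⁻¹ := by
        refine sum_le_sum fun s _ => ?_
        rw [le_mul_inv_iff₀' (by exact_mod_cast Nat.choose_pos (card_le_univ s)), ← mul_assoc]
        exact hη #s (card_le_univ s)
    _ = η * ∑ s ∈ A, ((Fintype.card α).choose #s : ℝ)⁻¹ := by rw [mul_sum]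
    _ ≤ η * 1 := by
        gcongr
        exact lubell_yamamoto_meshalkin_inequality_sum_inv_choose hA
    _ = η := mul_one η

end BinomialMass

section LittlewoodOfford

open Finset

variable {ι : Type*} [Fintype ι] {p η r : ℝ}

lemma productWeight_bernoulliWeight (p : ℝ) (x : ι → Bool) :
    productWeight (bernoulliWeight p) x =
      p ^ #{i | x i} * (1 - p) ^ (Fintype.card ι - #{i | x i}) := by
  classical
  have hcompl : Fintype.card ι - #{i | x i} = #{i | ¬x i} := by
    rw [← card_compl, compl_filter]
  simp only [productWeight, bernoulliWeight, prod_ite, prod_const, hcompl]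

lemma isAntichain_filter_abs_sum_add_lt {f : ι → ℝ} (hf : ∀ i, 2 * r ≤ f i) (c : ℝ) :
    IsAntichain (· ⊆ ·)
      (({s | |∑ i ∈ s, f i + c| < r} : Finset (Finset ι)) : Set (Finset ι)) := by
  classical
  intro s hs t ht hne hst
  simp only [coe_filter, mem_univ, true_and, Set.mem_ofPred_eq, abs_lt] at hs ht
  obtain ⟨i, hit, his⟩ := exists_of_ssubset (hst.ssubset_of_ne hne)
  have hle : ∑ j ∈ s, f j + f i ≤ ∑ j ∈ t, f j := by
    rw [add_comm, ← sum_insert his]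
    exact sum_le_sum_of_subset_of_nonneg (insert_subset hit hst) fun j _ _ => by
      linarith [hf j]
  linarith [hf i]

/-- Erdős' proof of the Littlewood–Offord inequality: the subsets whose sum falls in an interval
of length `2 r` form an antichain. -/
lemma probability_abs_sum_add_lt_le [DecidableEq ι] (hη0 : 0 ≤ η)
    (hη : ∀ k ≤ Fintype.card ι, binomialMass p (Fintype.card ι) k ≤ η)
    {f : ι → ℝ} (hf : ∀ i, 2 * r ≤ f i) (c : ℝ) :
    probability (productWeight (bernoulliWeight p))
      (fun x : ι → Bool => |∑ i, (if x i then f i else 0) + c| < r) ≤ η := by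
  classical
  refine le_trans (le_of_eq ?_)
    (sum_pow_mul_pow_le_of_isAntichain hη (isAntichain_filter_abs_sum_add_lt hf c) hη0)
  rw [probability, expectation, sum_filter]
  refine sum_nbij' (fun x => ({i | x i} : Finset ι)) (fun s i => decide (i ∈ s)) (by simp) (by simp)
    (fun x _ => by ext i; simp) (fun s _ => by ext i; simp) fun x _ => ?_
  rw [← productWeight_bernoulliWeight, ← sum_filter, mul_ite, mul_one, mul_zero]

lemma probability_abs_sum_add_lt_le_of_subset [DecidableEq ι] (h0 : 0 ≤ p) (h1 : p ≤ 1)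
    (hη0 : 0 ≤ η) (H : Finset ι) (hη : ∀ k ≤ #H, binomialMass p #H k ≤ η) {f : ι → ℝ}
    (hf : ∀ i ∈ H, 2 * r ≤ f i) (c : ℝ) :
    probability (productWeight (bernoulliWeight p))
      (fun x : ι → Bool => |∑ i, (if x i then f i else 0) + c| < r) ≤ η := by
  rw [probability, expectation_productWeight_split _ H]
  refine (isProbWeight_bernoulliWeight h0 h1).productWeight.expectation_le_const fun y => ?_
  have hsum : ∀ x : H → Bool, ∑ i, (if (Equiv.piEquivPiSubtypeProd (· ∈ H) fun _ => Bool).symm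
      (x, y) i then f i else 0) + c =
      ∑ i, (if x i then f i else 0) + (∑ i, (if y i then f i else 0) + c) := by
    intro x
    rw [← Fintype.sum_subtype_add_sum_subtype (· ∈ H), add_assoc]
    congr 1
    · refine sum_congr (by ext; simp) fun i _ => ?_
      simp [Equiv.piEquivPiSubtypeProd, i.2]
    · congr 1
      refine sum_congr (by ext; simp) fun i _ => ?_
      simp [Equiv.piEquivPiSubtypeProd, i.2]
  simp only [hsum]
  exact probability_abs_sum_add_lt_le (ι := H) hη0 (by rwa [Fintype.card_coe])
    (fun i => hf i i.2) _

lemma exists_card_superlevel_le_card_re (g : ι → ℂ) (κ : ℝ) :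
    ∃ u : ℂ, ‖u‖ = 1 ∧ #(superlevel g κ) ≤ 4 * #{i | κ / 2 ≤ (u * g i).re} := by
  classical
  let U : Finset ℂ := {1, -1, Complex.I, -Complex.I}
  have hsub : superlevel g κ ⊆ U.biUnion fun u => {i | κ / 2 ≤ (u * g i).re} := by
    intro i hi
    rw [mem_superlevel] at hi
    have hnorm := Complex.norm_le_abs_re_add_abs_im (g i)
    have hcases : κ / 2 ≤ |(g i).re| ∨ κ / 2 ≤ |(g i).im| := by
      by_contra! h
      linarith
    simp only [le_abs] at hcases
    simp only [U, mem_biUnion, mem_insert, mem_singleton, mem_filter, mem_univ, true_and,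
      exists_eq_or_imp, exists_eq_left, one_mul, neg_mul, Complex.neg_re, Complex.I_mul_re,
      neg_neg]
    tauto
  obtain ⟨u, hu, hmax⟩ := exists_max_image U (fun u => #{i | κ / 2 ≤ (u * g i).re}) ⟨1, by simp [U]⟩
  refine ⟨u, ?_, (card_le_card hsub).trans ((card_biUnion_le_card_mul U _ _ hmax).trans
    (Nat.mul_le_mul_right _ card_le_four))⟩
  simp only [U, mem_insert, mem_singleton] at hu
  rcases hu with rfl | rfl | rfl | rfl <;> simp

/-- At least a quarter of the large coordinates are large in a common direction, which reduces the
claim to real numbers. -/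
lemma probability_norm_sum_add_lt_le [DecidableEq ι] {κ δ : ℝ} (h0 : 0 ≤ p) (h1 : p ≤ 1)
    (hη0 : 0 ≤ η) {g : ι → ℂ} (hg : δ ≤ #(superlevel g κ))
    (hη : ∀ m k : ℕ, δ / 4 ≤ m → k ≤ m → binomialMass p m k ≤ η) (c : ℂ) :
    probability (productWeight (bernoulliWeight p))
      (fun x : ι → Bool => ‖∑ i, (if x i then g i else 0) + c‖ < κ / 4) ≤ η := by
  obtain ⟨u, hu, hcard⟩ := exists_card_superlevel_le_card_re g κ
  have hH : δ / 4 ≤ #{i | κ / 2 ≤ (u * g i).re} := by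
    have : (#(superlevel g κ) : ℝ) ≤ 4 * #{i | κ / 2 ≤ (u * g i).re} := by exact_mod_cast hcard
    linarith
  refine le_trans ((isProbWeight_bernoulliWeight h0 h1).productWeight.probability_mono
    fun x hx => ?_) (probability_abs_sum_add_lt_le_of_subset (f := fun i => (u * g i).re)
      (r := κ / 4) h0 h1 hη0 {i | κ / 2 ≤ (u * g i).re} (fun k hk => hη _ k hH hk)
      (fun i hi => ?_) (u * c).re)
  · calc |∑ i, (if x i then (u * g i).re else 0) + (u * c).re|
        = |(u * (∑ i, (if x i then g i else 0) + c)).re| := by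
          simp only [mul_add, mul_sum, mul_ite, mul_zero, Complex.add_re, Complex.re_sum,
            apply_ite Complex.re, Complex.zero_re]
      _ ≤ ‖u * (∑ i, (if x i then g i else 0) + c)‖ := Complex.abs_re_le_norm _
      _ < κ / 4 := by rwa [norm_mul, hu, one_mul]
  · linarith [(mem_filter.1 hi).2]

end LittlewoodOfford

section RandomUniqueNeighbors

open Finset

variable {ι : Type*} [Fintype ι] [DecidableEq ι] {p θ : ℝ}

lemma probability_forall_mem_eq_false (p : ℝ) (T : Finset ι) :
    probability (productWeight (bernoulliWeight p)) (fun r : ι → Bool => ∀ j ∈ T, r j = false) =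
      (1 - p) ^ #T := by
  have hind : ∀ r : ι → Bool, (if ∀ j ∈ T, r j = false then (1 : ℝ) else 0) =
      ∏ j, if j ∈ T then (if r j then 0 else 1) else 1 := by
    intro r
    rw [prod_ite_mem, univ_inter]
    split_ifs with h
    · exact (prod_eq_one fun j hj => by simp [h j hj]).symm
    · push Not at h
      obtain ⟨j, hj, hr⟩ := h
      exact (prod_eq_zero hj (by simpa using hr)).symm
  simp only [probability_eq_expectation, hind]
  rw [expectation_productWeight_prod _
      fun j (b : Bool) => if j ∈ T then (if b then 0 else 1) else 1,
    ← prod_const, ← univ_inter T, ← prod_ite_mem]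
  refine prod_congr rfl fun j _ => ?_
  by_cases hj : j ∈ T <;> simp [expectation_bernoulliWeight, hj]

lemma probability_eq_true_and_forall_mem_eq_false (p : ℝ) {T : Finset ι} {k : ι} (hk : k ∉ T) :
    probability (productWeight (bernoulliWeight p))
      (fun r : ι → Bool => r k = true ∧ ∀ j ∈ T, r j = false) = p * (1 - p) ^ #T := by
  have hind : ∀ r : ι → Bool, (if r k = true ∧ ∀ j ∈ T, r j = false then (1 : ℝ) else 0) =
      (if ∀ j ∈ T, r j = false then 1 else 0) -
        (if ∀ j ∈ insert k T, r j = false then 1 else 0) := by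
    intro r
    simp only [forall_mem_insert]
    by_cases hr : r k = true <;> by_cases hT : ∀ j ∈ T, r j = false <;> simp [hr, hT]
  have hT := probability_forall_mem_eq_false p T
  have hinsert := probability_forall_mem_eq_false p (insert k T)
  rw [card_insert_of_notMem hk] at hinsert
  simp only [probability_eq_expectation] at hT hinsert ⊢
  simp only [hind]
  rw [expectation_sub, hT, hinsert]
  ring

lemma one_sub_mul_le_one_sub_pow (h0 : 0 ≤ p) (h1 : p ≤ 1) {k m : ℕ} (hkm : k ≤ m) :
    1 - m * p ≤ (1 - p) ^ k := by
  have hbernoulli := one_add_mul_le_pow (a := -p) (by linarith) m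
  calc 1 - m * p ≤ (1 - p) ^ m := by
        simpa only [mul_neg, ← sub_eq_add_neg] using hbernoulli
    _ ≤ (1 - p) ^ k := pow_le_pow_of_le_one (by linarith) (by linarith) hkm

lemma le_probability_unique_of_mem (h0 : 0 ≤ p) (h1 : p ≤ 1) {S : Finset ι} {i : ι}
    (hi : i ∈ S) :
    1 - #S * p ≤ probability (productWeight (bernoulliWeight p))
      (fun r : ι → Bool => #{j ∈ S | r j ∨ i = j} = 1) := by
  calc 1 - #S * p ≤ (1 - p) ^ #(S.erase i) :=
        one_sub_mul_le_one_sub_pow h0 h1 card_erase_le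
    _ = probability (productWeight (bernoulliWeight p))
          (fun r : ι → Bool => ∀ j ∈ S.erase i, r j = false) :=
        (probability_forall_mem_eq_false p _).symm
    _ ≤ _ := (isProbWeight_bernoulliWeight h0 h1).productWeight.probability_mono fun r hr => by
        refine card_eq_one.2 ⟨i, ?_⟩
        ext j
        by_cases hj : j = i
        · simp [hj, hi]
        · by_cases hjS : j ∈ S
          · simp [hj, Ne.symm hj, hr j (mem_erase.2 ⟨hj, hjS⟩)]
          · simp [hj, hjS]

lemma le_probability_unique_of_notMem (h0 : 0 ≤ p) (h1 : p ≤ 1) {S : Finset ι} {i : ι}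
    (hi : i ∉ S) :
    #S * p * (1 - #S * p) ≤ probability (productWeight (bernoulliWeight p))
      (fun r : ι → Bool => #{j ∈ S | r j ∨ i = j} = 1) := by
  classical
  have hprob : ∀ k ∈ S, p * (1 - #S * p) ≤ probability (productWeight (bernoulliWeight p))
      (fun r : ι → Bool => r k = true ∧ ∀ j ∈ S.erase k, r j = false) := fun k _ => by
    rw [probability_eq_true_and_forall_mem_eq_false p (notMem_erase k S)]
    exact mul_le_mul_of_nonneg_left (one_sub_mul_le_one_sub_pow h0 h1 card_erase_le) h0
  have hdisj : ∀ r : ι → Bool,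
      (∑ k ∈ S, if r k = true ∧ ∀ j ∈ S.erase k, r j = false then (1 : ℝ) else 0) ≤
        if #{j ∈ S | r j ∨ i = j} = 1 then 1 else 0 := by
    intro r
    by_cases hr : ∃ k ∈ S, r k = true ∧ ∀ j ∈ S.erase k, r j = false
    · obtain ⟨k, hk, hrk, hrS⟩ := hr
      have hfilter : ({j ∈ S | r j ∨ i = j} : Finset ι) = {k} := by
        ext j
        have hne : j ∈ S → i ≠ j := fun hj hij => hi (hij ▸ hj)
        have hfalse : j ∈ S → j ≠ k → r j = false := fun hj hjk => hrS j (mem_erase.2 ⟨hjk, hj⟩)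
        grind
      rw [hfilter, card_singleton, if_pos rfl, sum_eq_single_of_mem k hk]
      · split_ifs <;> simp
      · intro j hj hjk
        rw [if_neg]
        rintro ⟨hrj, -⟩
        simp [hrS j (mem_erase.2 ⟨hjk, hj⟩)] at hrj
    · push Not at hr
      rw [sum_eq_zero fun k hk => if_neg fun ⟨hrk, hrS⟩ => by
        obtain ⟨j, hj, hrj⟩ := hr k hk hrk
        exact hrj (hrS j hj)]
      split_ifs <;> simp
  calc #S * p * (1 - #S * p) = ∑ k ∈ S, p * (1 - #S * p) := by
        rw [sum_const, nsmul_eq_mul, mul_assoc]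
    _ ≤ ∑ k ∈ S, expectation (productWeight (bernoulliWeight p))
          (fun r : ι → Bool => if r k = true ∧ ∀ j ∈ S.erase k, r j = false then 1 else 0) :=
        sum_le_sum fun k hk => (hprob k hk).trans_eq (probability_eq_expectation _ _)
    _ ≤ _ := by
        rw [← expectation_sum, probability_eq_expectation]
        exact (isProbWeight_bernoulliWeight h0 h1).productWeight.expectation_mono hdisj

lemma IsProbWeight.expectation_ite_one {α : Type*} [Fintype α] {w : α → ℝ} (hw : IsProbWeight w)
    (E : α → Prop) [DecidablePred E] (θ : ℝ) :
    expectation w (fun x => if E x then θ else 1) = 1 - (1 - θ) * probability w E := by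
  have hind : ∀ x, (if E x then θ else 1) = 1 - (1 - θ) * if E x then 1 else 0 := fun x => by
    split_ifs <;> ring
  simp only [hind, expectation_sub, expectation_const_mul, hw.expectation_const,
    probability_eq_expectation]

/-- The events that different rows meet `S` exactly once are independent. -/
lemma expectation_pow_card_uniqueNeighborRows_le (h0 : 0 ≤ p) (h1 : p ≤ 1) (hθ : 0 ≤ θ)
    (hθ1 : θ ≤ 1) (S : Finset ι) :
    expectation (productWeight (productWeight (bernoulliWeight p)))
      (fun a : ι → ι → Bool => θ ^ #(uniqueNeighborRows a S)) ≤
      (θ + #S * p) ^ #S * Real.exp (-((1 - θ) * (#S * p * (1 - #S * p)))) ^ #Sᶜ := by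
  have hw : IsProbWeight (productWeight (ι := ι) (bernoulliWeight p)) :=
    (isProbWeight_bernoulliWeight h0 h1).productWeight
  have hprod : ∀ a : ι → ι → Bool, θ ^ #(uniqueNeighborRows a S) =
      ∏ i, if #{j ∈ S | a i j ∨ i = j} = 1 then θ else 1 := fun a => by
    rw [prod_ite, prod_const, prod_const_one, mul_one, uniqueNeighborRows]
  simp only [hprod]
  rw [expectation_productWeight_prod _
    fun i (r : ι → Bool) => if #{j ∈ S | r j ∨ i = j} = 1 then θ else 1, ← prod_mul_prod_compl S]
  have hnonneg : ∀ i, 0 ≤ expectation (productWeight (bernoulliWeight p))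
      (fun r : ι → Bool => if #{j ∈ S | r j ∨ i = j} = 1 then θ else 1) := fun i =>
    hw.expectation_nonneg fun r => by split_ifs <;> linarith
  refine mul_le_mul ?_ ?_ (prod_nonneg fun i _ => hnonneg i) (by positivity)
  · refine (prod_le_prod (fun i _ => hnonneg i) fun i hi => ?_).trans_eq (prod_const _)
    rw [hw.expectation_ite_one]
    nlinarith [le_probability_unique_of_mem h0 h1 hi,
      mul_nonneg hθ (mul_nonneg (Nat.cast_nonneg (#S) : (0 : ℝ) ≤ #S) h0)]
  · refine (prod_le_prod (fun i _ => hnonneg i) fun i hi => ?_).trans_eq (prod_const _)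
    rw [hw.expectation_ite_one]
    have hle := mul_le_mul_of_nonneg_left
      (le_probability_unique_of_notMem h0 h1 (mem_compl.1 hi)) (sub_nonneg.2 hθ1)
    linarith [Real.add_one_le_exp (-((1 - θ) * (#S * p * (1 - #S * p))))]

lemma probability_mul_card_uniqueNeighborRows_lt_le (h0 : 0 ≤ p) (h1 : p ≤ 1) (hθ : 0 < θ)
    (hθ1 : θ ≤ 1) {K : ℕ} (hK : 1 ≤ K) (S : Finset ι) :
    probability (productWeight (productWeight (bernoulliWeight p)))
      (fun a : ι → ι → Bool => K * #(uniqueNeighborRows a S) < #S) ≤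
      θ ^ (-(#S / K : ℝ)) * ((θ + #S * p) ^ #S *
        Real.exp (-((1 - θ) * (#S * p * (1 - #S * p)))) ^ #Sᶜ) := by
  have hw : IsProbWeight (productWeight (ι := ι) (productWeight (ι := ι) (bernoulliWeight p))) :=
    (isProbWeight_bernoulliWeight h0 h1).productWeight.productWeight
  refine (hw.probability_le_expectation
    (F := fun a => θ ^ (-(#S / K : ℝ)) * θ ^ #(uniqueNeighborRows a S))
    (fun a => by positivity) fun a ha => ?_).trans ?_
  · rw [← Real.rpow_natCast, ← Real.rpow_add hθ]
    refine Real.one_le_rpow_of_pos_of_le_one_of_nonpos hθ hθ1 ?_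
    have hcard : (K : ℝ) * #(uniqueNeighborRows a S) ≤ #S := by exact_mod_cast ha.le
    have hK' : (0 : ℝ) < K := by exact_mod_cast hK
    have := (le_div_iff₀' hK').2 hcard
    linarith
  · rw [expectation_const_mul]
    exact mul_le_mul_of_nonneg_left (expectation_pow_card_uniqueNeighborRows_le h0 h1 hθ.le hθ1 S)
      (by positivity)

lemma choose_le_exp_one_mul_div_pow (n : ℕ) {m : ℕ} (hm : 1 ≤ m) :
    (n.choose m : ℝ) ≤ (Real.exp 1 * n / m) ^ m := by
  have hm' : (0 : ℝ) < m := by exact_mod_cast hm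
  have hexp := Real.pow_div_factorial_le_exp (m : ℝ) hm'.le m
  calc (n.choose m : ℝ) ≤ (n : ℝ) ^ m / m.factorial := Nat.choose_le_pow_div m n
    _ = (n : ℝ) ^ m / m ^ m * (m ^ m / m.factorial) := by field_simp
    _ ≤ (n : ℝ) ^ m / m ^ m * Real.exp m := by gcongr
    _ = (Real.exp 1 * n / m) ^ m := by
        rw [div_pow, mul_pow, ← Real.exp_nat_mul, mul_one]
        ring

lemma one_sub_mul_le_mul_mul_one_sub {d δ x : ℝ} (hd : 0 ≤ d) (hx : 0 ≤ x) (hxδ : x ≤ δ)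
    (hδ : δ ≤ 1) : 1 - (2 + d) * δ ≤ (1 - x) * ((1 - δ * x) * (1 - d * x)) := by
  have hδx : δ * x ≤ δ := mul_le_of_le_one_right (hx.trans hxδ) (hxδ.trans hδ)
  have hdx : d * x ≤ d * δ := mul_le_mul_of_nonneg_left hxδ hd
  have hy : 0 ≤ x + δ * x * (1 - x) :=
    add_nonneg hx (mul_nonneg (mul_nonneg (hx.trans hxδ) hx) (by linarith))
  have hy' : 0 ≤ δ * x * x := mul_nonneg (mul_nonneg (hx.trans hxδ) hx) hx
  nlinarith [mul_nonneg hy (mul_nonneg hd hx)]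

lemma exp_neg_pow_le {d δ x : ℝ} (hd : 0 ≤ d) (hx : 0 ≤ x) (hxδ : x ≤ δ) (hδ : δ ≤ 1)
    {n m : ℕ} (hmn : m ≤ n) (hm : (m : ℝ) = n * x) :
    Real.exp (-((1 - δ * x) * (d * x * (1 - d * x)))) ^ (n - m) ≤
      Real.exp (-d + d * (2 + d) * δ) ^ m := by
  rw [← Real.exp_nat_mul, ← Real.exp_nat_mul, Real.exp_le_exp, Nat.cast_sub hmn]
  calc (n - m : ℝ) * -((1 - δ * x) * (d * x * (1 - d * x)))
      = -(m * d * ((1 - x) * ((1 - δ * x) * (1 - d * x)))) := by rw [hm]; ring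
    _ ≤ -(m * d * (1 - (2 + d) * δ)) :=
        neg_le_neg (mul_le_mul_of_nonneg_left (one_sub_mul_le_mul_mul_one_sub hd hx hxδ hδ)
          (by positivity))
    _ = m * (-d + d * (2 + d) * δ) := by ring

lemma mul_rpow_neg_div_le {δ x : ℝ} (hδ : 0 < δ) (hx : 0 < x) {n m : ℕ} (hm1 : 1 ≤ m)
    (hm : (m : ℝ) = n * x) (K : ℕ) :
    (δ * x) ^ (-(m / K : ℝ)) ≤ ((n / δ) ^ (K : ℝ)⁻¹) ^ m := by
  rw [← Real.rpow_natCast, ← Real.rpow_mul (by positivity), inv_mul_eq_div,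
    Real.rpow_neg (by positivity), ← Real.inv_rpow (by positivity)]
  refine Real.rpow_le_rpow (by positivity) ?_ (by positivity)
  rw [inv_eq_one_div, div_le_div_iff₀ (by positivity) hδ, one_mul]
  calc δ ≤ m * δ := le_mul_of_one_le_left hδ.le (by exact_mod_cast hm1)
    _ = n * (δ * x) := by rw [hm]; ring

/-- The expected number of badly expanding sets of size `m`: the choice `θ = δ m / n` balances the
two terms of the base of the main factor of the Chernoff bound. -/
lemma sum_probability_mul_card_uniqueNeighborRows_lt_le {K m : ℕ} {d δ : ℝ} (hd : 0 < d)
    (hn : d ≤ Fintype.card ι) (hδ : 0 < δ) (hδ1 : δ ≤ 1) (hK : 1 ≤ K) (hm : 1 ≤ m)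
    (hmδ : (m : ℝ) ≤ δ * Fintype.card ι) :
    ∑ S ∈ (univ : Finset ι).powersetCard m,
      probability (productWeight (productWeight (bernoulliWeight (d / Fintype.card ι))))
        (fun a : ι → ι → Bool => K * #(uniqueNeighborRows a S) < #S) ≤
      ((δ + d) * Real.exp (1 - d + d * (2 + d) * δ) *
        (Fintype.card ι / δ) ^ (K : ℝ)⁻¹) ^ m := by
  set n := Fintype.card ι with hn_def
  have hn0 : (0 : ℝ) < n := hd.trans_le hn
  have hm0 : (0 : ℝ) < m := by exact_mod_cast hm
  obtain ⟨x, hx⟩ : ∃ x : ℝ, (m : ℝ) = n * x := ⟨m / n, by field_simp⟩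
  have hx0 : 0 < x := by
    rw [hx] at hm0
    exact pos_of_mul_pos_right hm0 hn0.le
  have hxδ : x ≤ δ := by
    rw [hx, mul_comm] at hmδ
    exact le_of_mul_le_mul_right hmδ hn0
  have hmn : m ≤ n := by
    have : (m : ℝ) ≤ n := hmδ.trans (mul_le_of_le_one_left hn0.le hδ1)
    exact_mod_cast this
  have hθ1 : δ * x ≤ 1 := mul_le_one₀ hδ1 hx0.le (hxδ.trans hδ1)
  have hmd : m * (d / n) = d * x := by rw [hx]; field_simp
  calc ∑ S ∈ (univ : Finset ι).powersetCard m,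
        probability (productWeight (productWeight (bernoulliWeight (d / n))))
          (fun a : ι → ι → Bool => K * #(uniqueNeighborRows a S) < #S)
      ≤ ∑ _S ∈ (univ : Finset ι).powersetCard m, (δ * x) ^ (-(m / K : ℝ)) *
          ((δ * x + d * x) ^ m *
            Real.exp (-((1 - δ * x) * (d * x * (1 - d * x)))) ^ (n - m)) := by
        refine sum_le_sum fun S hS => ?_
        have h := probability_mul_card_uniqueNeighborRows_lt_le (p := d / n) (by positivity)
          (div_le_one_of_le₀ hn hn0.le) (mul_pos hδ hx0) hθ1 hK S
        have hcard := (mem_powersetCard.1 hS).2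
        simp only [card_compl, hcard, ← hn_def, hmd] at h ⊢
        exact h
    _ = n.choose m * ((δ * x) ^ (-(m / K : ℝ)) * ((δ * x + d * x) ^ m *
          Real.exp (-((1 - δ * x) * (d * x * (1 - d * x)))) ^ (n - m))) := by
        rw [sum_const, card_powersetCard, card_univ, nsmul_eq_mul]
    _ ≤ (Real.exp 1 * n / m) ^ m * (((n / δ) ^ (K : ℝ)⁻¹) ^ m * ((δ * x + d * x) ^ m *
          Real.exp (-d + d * (2 + d) * δ) ^ m)) := by
        gcongr ?_ * (?_ * (_ * ?_))
        · exact choose_le_exp_one_mul_div_pow n hm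
        · exact mul_rpow_neg_div_le hδ hx0 hm hx K
        · exact exp_neg_pow_le hd.le hx0.le hxδ hδ1 hmn hx
    _ = _ := by
        simp only [← mul_pow]
        rw [hx, show 1 - d + d * (2 + d) * δ = 1 + (-d + d * (2 + d) * δ) by ring, Real.exp_add 1]
        field_simp

lemma probability_not_isUniqueNeighborExpander_le {K m : ℕ} {d δ ρ : ℝ} (hd : 0 < d)
    (hn : d ≤ Fintype.card ι) (hδ : 0 < δ) (hδ1 : δ ≤ 1) (hK : 1 ≤ K) (hm : 1 ≤ m) (hρ1 : ρ < 1)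
    (hρ : (δ + d) * Real.exp (1 - d + d * (2 + d) * δ) *
      (Fintype.card ι / δ) ^ (K : ℝ)⁻¹ ≤ ρ) :
    probability (productWeight (productWeight (bernoulliWeight (d / Fintype.card ι))))
      (fun a : ι → ι → Bool => ¬IsUniqueNeighborExpander a m K δ) ≤ ρ ^ m / (1 - ρ) := by
  set n := Fintype.card ι
  have hw : IsProbWeight (productWeight (ι := ι) (productWeight (ι := ι)
      (bernoulliWeight (d / n)))) :=
    (isProbWeight_bernoulliWeight (by positivity)
      (div_le_one_of_le₀ hn n.cast_nonneg)).productWeight.productWeight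
  have hρ0 : 0 ≤ ρ := le_trans (by positivity) hρ
  let sizes : Finset ℕ := {k ∈ range (n + 1) | m ≤ k ∧ (k : ℝ) < δ * n}
  calc probability (productWeight (productWeight (bernoulliWeight (d / n))))
        (fun a : ι → ι → Bool => ¬IsUniqueNeighborExpander a m K δ)
      ≤ probability (productWeight (productWeight (bernoulliWeight (d / n))))
          (fun a : ι → ι → Bool => ∃ k ∈ sizes, ∃ S ∈ (univ : Finset ι).powersetCard k,
            K * #(uniqueNeighborRows a S) < #S) := by
        refine hw.probability_mono fun a ha => ?_
        simp only [IsUniqueNeighborExpander, not_forall, not_le] at ha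
        obtain ⟨S, hmS, hSδ, hS⟩ := ha
        exact ⟨#S, mem_filter.2 ⟨mem_range.2 (Nat.lt_succ_of_le (card_le_univ S)), hmS, hSδ⟩, S,
          mem_powersetCard.2 ⟨subset_univ S, rfl⟩, hS⟩
    _ ≤ ∑ k ∈ sizes, ρ ^ k := by
        refine (hw.probability_exists_le _ _).trans (sum_le_sum fun k hk => ?_)
        obtain ⟨-, hmk, hkδ⟩ := mem_filter.1 hk
        refine (hw.probability_exists_le _ _).trans
          ((sum_probability_mul_card_uniqueNeighborRows_lt_le hd hn hδ hδ1 hK (hm.trans hmk)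
            hkδ.le).trans ?_)
        gcongr
    _ ≤ ∑ k ∈ Ico m (n + 1 + m), ρ ^ k := by
        refine sum_le_sum_of_subset_of_nonneg (fun k hk => ?_) fun _ _ _ => by positivity
        simp only [sizes, mem_filter, mem_range] at hk
        exact mem_Ico.2 (by omega)
    _ ≤ ρ ^ m / (1 - ρ) := geom_sum_Ico_le_of_lt_one hρ0 hρ1

lemma expectation_productWeight_apply {α : Type*} [Fintype α] {w : α → ℝ} (hw : IsProbWeight w)
    (i : ι) (F : α → ℝ) :
    expectation (productWeight w) (fun x : ι → α => F (x i)) = expectation w F := by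
  have h := expectation_productWeight_prod w fun k b => if k = i then F b else 1
  simp only [prod_ite_eq', mem_univ, if_true] at h
  rw [h, prod_eq_single_of_mem i (mem_univ i) fun k _ hk => by
    simp only [hk, if_false, hw.expectation_const]]
  simp only [if_true]

lemma probability_lt_card_filter_le (h0 : 0 ≤ p) (h1 : p ≤ 1) (Δ : ℕ) :
    probability (productWeight (bernoulliWeight p)) (fun r : ι → Bool => Δ < #{j | r j}) ≤
      Real.exp (p * Fintype.card ι) / 2 ^ Δ := by
  have hw : IsProbWeight (productWeight (ι := ι) (bernoulliWeight p)) :=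
    (isProbWeight_bernoulliWeight h0 h1).productWeight
  calc probability (productWeight (bernoulliWeight p)) (fun r : ι → Bool => Δ < #{j | r j})
      ≤ expectation (productWeight (bernoulliWeight p))
          (fun r : ι → Bool => (2 ^ Δ)⁻¹ * ∏ j, if r j then 2 else 1) := by
        have hprod : ∀ r : ι → Bool, ∏ j, (if r j then (2 : ℝ) else 1) = 2 ^ #{j | r j} :=
          fun r => by rw [prod_ite, prod_const, prod_const_one, mul_one]
        simp only [hprod]
        refine hw.probability_le_expectation (fun r => by positivity) fun r hr => ?_
        rw [inv_mul_eq_div, one_le_div (by positivity)]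
        exact pow_le_pow_right₀ one_le_two hr.le
    _ = (2 ^ Δ)⁻¹ * (1 + p) ^ Fintype.card ι := by
        rw [expectation_const_mul,
          expectation_productWeight_prod _ fun _ (b : Bool) => if b then 2 else 1]
        simp only [expectation_bernoulliWeight, if_true, Bool.false_eq_true, if_false, prod_const,
          card_univ]
        ring
    _ ≤ (2 ^ Δ)⁻¹ * Real.exp p ^ Fintype.card ι := by
        gcongr
        linarith [Real.add_one_le_exp p]
    _ = Real.exp (p * Fintype.card ι) / 2 ^ Δ := by
        rw [← Real.exp_nat_mul, mul_comm p, inv_mul_eq_div]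

lemma probability_not_columnDegreeLE_le (h0 : 0 ≤ p) (h1 : p ≤ 1) (Δ : ℕ) :
    probability (productWeight (productWeight (bernoulliWeight p)))
      (fun a : ι → ι → Bool => ¬ColumnDegreeLE a Δ) ≤
      Fintype.card ι * (Real.exp (p * Fintype.card ι) / 2 ^ Δ) := by
  have hw : IsProbWeight (productWeight (ι := ι) (bernoulliWeight p)) :=
    (isProbWeight_bernoulliWeight h0 h1).productWeight
  rw [← probability_transpose]
  calc probability (productWeight (productWeight (bernoulliWeight p)))
        (fun a : ι → ι → Bool => ¬ColumnDegreeLE (fun i j => a j i) Δ)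
      ≤ probability (productWeight (productWeight (bernoulliWeight p)))
          (fun a : ι → ι → Bool => ∃ i ∈ univ, Δ < #{j | a i j}) :=
        hw.productWeight.probability_mono fun a ha => by
          simpa [ColumnDegreeLE] using ha
    _ ≤ ∑ i : ι, probability (productWeight (productWeight (bernoulliWeight p)))
          (fun a : ι → ι → Bool => Δ < #{j | a i j}) :=
        hw.productWeight.probability_exists_le _ _
    _ ≤ ∑ _i : ι, Real.exp (p * Fintype.card ι) / 2 ^ Δ :=
        sum_le_sum fun i _ => (expectation_productWeight_apply hw i _).trans_le
          (probability_lt_card_filter_le h0 h1 Δ)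
    _ = Fintype.card ι * (Real.exp (p * Fintype.card ι) / 2 ^ Δ) := by
        rw [sum_const, card_univ, nsmul_eq_mul]

end RandomUniqueNeighbors

section CappedNullity

open Matrix

variable {ι 𝕜 : Type*} [NormedField 𝕜] [Fintype ι] {M N : Matrix ι ι 𝕜} {y k : ℕ} {σ σ' : ℝ}

/-- The largest `k ≤ y` such that `M` has approximate nullity `k` at scale `σ`. -/
noncomputable def cappedNullity (M : Matrix ι ι 𝕜) (y : ℕ) (σ : ℝ) : ℕ :=
  sSup {k | k ≤ y ∧ HasApproxNullity M Set.univ σ k}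

lemma cappedNullity_mem (M : Matrix ι ι 𝕜) (y : ℕ) (σ : ℝ) :
    cappedNullity M y σ ∈ {k | k ≤ y ∧ HasApproxNullity M Set.univ σ k} :=
  Nat.sSup_mem ⟨0, y.zero_le, .zero M Set.univ σ⟩ ⟨y, fun _ h => h.1⟩

lemma cappedNullity_le (M : Matrix ι ι 𝕜) (y : ℕ) (σ : ℝ) : cappedNullity M y σ ≤ y :=
  (cappedNullity_mem M y σ).1

lemma hasApproxNullity_cappedNullity (M : Matrix ι ι 𝕜) (y : ℕ) (σ : ℝ) :
    HasApproxNullity M Set.univ σ (cappedNullity M y σ) :=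
  (cappedNullity_mem M y σ).2

lemma HasApproxNullity.le_cappedNullity (h : HasApproxNullity M Set.univ σ k) (hk : k ≤ y) :
    k ≤ cappedNullity M y σ :=
  le_csSup ⟨y, fun _ h => h.1⟩ ⟨hk, h⟩

lemma HasApproxNullity.le_cappedNullity_of_not (h : HasApproxNullity M Set.univ σ k)
    (hy : ¬HasApproxNullity M Set.univ σ y) : k ≤ cappedNullity M y σ :=
  h.le_cappedNullity <| not_lt.1 fun hyk => hy (h.mono subset_rfl le_rfl hyk.le)

variable {i : ι}

lemma HasApproxNullity.compl_singleton_of_rows_eq (hMN : ∀ j ≠ i, N j = M j) {R : Set ι}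
    (hR : {i}ᶜ ⊆ R) (hσ : σ' ≤ σ) (h : HasApproxNullity N R σ' k) :
    HasApproxNullity M {i}ᶜ σ k :=
  (h.mono hR hσ le_rfl).congr_rows fun j hj => (hMN j hj).symm

lemma cappedNullity_le_add_one_of_rows_eq (hMN : ∀ j ≠ i, N j = M j) (hσ' : 0 ≤ σ')
    (hσ : σ' ≤ σ) : cappedNullity N y σ' ≤ cappedNullity M y σ + 1 := by
  have hM : HasApproxNullity M Set.univ σ (cappedNullity N y σ' - 1) :=
    .of_compl_singleton (hσ'.trans hσ) <|
      (hasApproxNullity_cappedNullity N y σ').compl_singleton_of_rows_eq hMN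
        (Set.subset_univ _) hσ
  have := hM.le_cappedNullity ((Nat.sub_le _ _).trans (cappedNullity_le N y σ'))
  omega

/-- The scale `σ'` is so much smaller than `σ` that replacing a row of an `n × n` matrix whose rows
have size at most `D` respects approximate nullity at these scales; `κ` and `κ'` are the sizes of
the entries of left null vectors, and of products with the new row, that count as large. -/
structure IsScaleStep (n : ℕ) (D κ κ' σ σ' : ℝ) : Prop where
  pos : 0 < κ
  le_one : κ ≤ 1
  pos' : 0 < κ'
  le_one' : κ' ≤ 1
  one_le : 1 ≤ D
  scale_nonneg : 0 ≤ σ'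
  scale_le_one : σ ≤ 1
  scale_le : 8 * n ^ 2 * D * σ' ≤ κ * κ' * σ

namespace IsScaleStep

variable {n : ℕ} {D κ κ' : ℝ}

lemma scale_nonneg_left (h : IsScaleStep n D κ κ' σ σ') : 0 ≤ σ := by
  have := h.pos
  have := h.pos'
  have := h.one_le
  have := h.scale_nonneg
  exact nonneg_of_mul_nonneg_right (le_trans (by positivity) h.scale_le) (by positivity)

lemma four_mul_le (h : IsScaleStep n D κ κ' σ σ') (hn : 0 < n) :
    4 * D * σ' ≤ κ' * (κ * σ / (2 * n ^ 2)) := by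
  rw [← mul_div_assoc, le_div_iff₀ (by positivity)]
  linarith [h.scale_le]

lemma intermediate_le (h : IsScaleStep n D κ κ' σ σ') (hn : 0 < n) :
    n * (κ * σ / (2 * n ^ 2)) ≤ κ * σ / 2 := by
  have hn1 : (1 : ℝ) ≤ n := by exact_mod_cast hn
  have hκσ : 0 ≤ κ * σ := mul_nonneg h.pos.le h.scale_nonneg_left
  rw [show n * (κ * σ / (2 * n ^ 2)) = κ * σ / 2 / n by field_simp]
  exact div_le_self (by positivity) hn1

lemma intermediate_le_scale (h : IsScaleStep n D κ κ' σ σ') (hn : 0 < n) :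
    κ * σ / (2 * n ^ 2) ≤ σ := by
  have hn1 : (1 : ℝ) ≤ n ^ 2 := one_le_pow₀ (by exact_mod_cast hn)
  have hκσ := mul_le_of_le_one_left h.scale_nonneg_left h.le_one
  have hσ := h.scale_nonneg_left
  rw [div_le_iff₀ (by positivity)]
  nlinarith

lemma scale_le_intermediate (h : IsScaleStep n D κ κ' σ σ') (hn : 0 < n) :
    σ' ≤ κ * σ / (2 * n ^ 2) := by
  have h4 := h.four_mul_le hn
  have hσ' := h.scale_nonneg
  have hσ : 0 ≤ κ * σ / (2 * n ^ 2) := by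
    have := h.pos
    have := h.scale_nonneg_left
    positivity
  nlinarith [h.one_le, h.le_one']

lemma scale_le_half (h : IsScaleStep n D κ κ' σ σ') (hn : 0 < n) : σ' ≤ κ' / 2 := by
  have h4 := h.four_mul_le hn
  have hσ' := h.scale_nonneg
  have hσ := (h.intermediate_le_scale hn).trans h.scale_le_one
  nlinarith [h.one_le, h.pos']

end IsScaleStep

open Classical in
/-- The new `i`-th row adds to the rank of the other rows unless it misses their null vector `g`,
while the old one does not if the approximate left null vector `u` is large at `i`. -/
lemma cappedNullity_le_of_rows_eq {D κ κ' : ℝ} {g u : ι → 𝕜}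
    (hscale : IsScaleStep (Fintype.card ι) D κ κ' σ σ') (hMN : ∀ j ≠ i, N j = M j)
    (hy : ¬HasApproxNullity M Set.univ σ y) (hD : ∀ v, ‖(N *ᵥ v) i‖ ≤ D * ‖v‖) (hg : ‖g‖ = 1)
    (hgz : ∀ j ≠ i, (M *ᵥ g) j = 0) (hu : ‖u‖ ≤ 1)
    (hMu : ∀ j, ‖(Mᵀ *ᵥ u) j‖ ≤ κ * σ / (2 * Fintype.card ι)) :
    (cappedNullity N y σ' : ℝ) ≤ cappedNullity M y σ +
      (if ‖(N *ᵥ g) i‖ < κ' then 1 else 0) - (if κ ≤ ‖u i‖ then 1 else 0) := by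
  have hn : 0 < Fintype.card ι := Fintype.card_pos_iff.2 ⟨i⟩
  set τ := κ * σ / (2 * (Fintype.card ι : ℝ) ^ 2)
  have hτ := hscale.scale_le_intermediate hn
  have hτ0 := hscale.scale_nonneg.trans hτ
  set m := cappedNullity N y σ'
  have hN : HasApproxNullity N Set.univ σ' m := hasApproxNullity_cappedNullity N y σ'
  have hremove : HasApproxNullity M {i}ᶜ τ m :=
    hN.compl_singleton_of_rows_eq hMN (Set.subset_univ _) hτ
  have hremove_seen (h : κ' ≤ ‖(N *ᵥ g) i‖) : HasApproxNullity M {i}ᶜ τ (m + 1) :=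
    (hN.compl_singleton hg (fun j hj => by rw [← hgz j hj, mulVec, mulVec, hMN j hj]) h hscale.pos'
      (hscale.le_one'.trans hscale.one_le) hD hscale.scale_nonneg (hscale.scale_le_half hn)
      (hscale.four_mul_le hn)).compl_singleton_of_rows_eq hMN subset_rfl le_rfl
  have hadd {k : ℕ} (h : HasApproxNullity M {i}ᶜ τ k) : k - 1 ≤ cappedNullity M y σ :=
    ((HasApproxNullity.of_compl_singleton hτ0 h).mono subset_rfl (hscale.intermediate_le_scale hn)
      le_rfl).le_cappedNullity_of_not hy
  have hadd_spanned {k : ℕ} (hk : κ ≤ ‖u i‖) (h : HasApproxNullity M {i}ᶜ τ k) :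
      k ≤ cappedNullity M y σ := by
    refine (h.of_compl_singleton_of_left hu hk hscale.pos hMu hτ0
      (hscale.intermediate_le_scale hn) ?_).le_cappedNullity_of_not hy
    have := hscale.intermediate_le hn
    rw [show (Fintype.card ι : ℝ) * (κ * σ / (2 * Fintype.card ι)) = κ * σ / 2 by field_simp]
    linarith
  rw [le_sub_iff_add_le]
  split_ifs with hk hseen hseen
  · exact_mod_cast Nat.succ_le_succ (hadd_spanned hk hremove)
  · exact_mod_cast hadd_spanned hk (hremove_seen (not_lt.1 hseen))
  · rw [add_zero]
    exact_mod_cast Nat.le_add_of_sub_le (hadd hremove)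
  · rw [add_zero, add_zero]
    exact_mod_cast hadd (hremove_seen (not_lt.1 hseen))

end CappedNullity

section Drift

open Function Matrix Finset

lemma exists_norm_eq_one_mulVec_eq_zero {ι 𝕜 : Type*} [NormedField 𝕜] [Fintype ι]
    (M : Matrix ι ι 𝕜) (i : ι) : ∃ g : ι → 𝕜, ‖g‖ = 1 ∧ ∀ j ≠ i, (M *ᵥ g) j = 0 := by
  classical
  have hdet : (M.updateRow i 0).det = 0 := det_eq_zero_of_row_eq_zero i (by simp)
  obtain ⟨v, hv, hMv⟩ := exists_mulVec_eq_zero_iff.2 hdet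
  obtain ⟨c, -, hc, -⟩ := exists_smul_normalized hv
  refine ⟨c • v, hc, fun j hj => ?_⟩
  have hj0 : (M *ᵥ v) j = 0 := by
    have h := congrFun hMv j
    rwa [mulVec, updateRow_ne hj] at h
  rw [mulVec_smul, Pi.smul_apply, hj0, smul_zero]

variable {ι : Type*} [DecidableEq ι]

lemma shiftedMatrix_update_of_ne (a : ι → ι → Bool) (z : ℂ) {i j : ι} (r : ι → Bool)
    (hj : j ≠ i) : shiftedMatrix (update a i r) z j = shiftedMatrix a z j := by
  ext k
  rw [shiftedMatrix_apply, shiftedMatrix_apply, update_of_ne hj]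

variable [Fintype ι]

/-- The pattern `a` for which resampling a row of `shiftedMatrix a z` from the law `v` is expected
to lower an approximate nullity below `σ`: approximate left null vectors are spread over a
proportion `δ` of the coordinates, and a new row sees a null vector of the other rows except with
probability `ε`. -/
structure IsRobust (v : (ι → Bool) → ℝ) (z : ℂ) (y : ℕ) (κ κ' δ ε σ : ℝ) (a : ι → ι → Bool) :
    Prop where
  det_ne_zero : (shiftedMatrix a z).det ≠ 0
  not_hasApproxNullity : ¬HasApproxNullity (shiftedMatrix a z) Set.univ σ y
  le_card_superlevel : ∀ u : ι → ℂ, ‖u‖ = 1 →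
    (∀ j, ‖((shiftedMatrix a z)ᵀ *ᵥ u) j‖ ≤ κ * σ / 2) → δ * Fintype.card ι ≤ #(superlevel u κ)
  probability_le : ∀ (i : ι) (g : ι → ℂ), ‖g‖ = 1 →
    (∀ j ≠ i, (shiftedMatrix a z *ᵥ g) j = 0) →
    probability v (fun r => ‖(shiftedMatrix (update a i r) z *ᵥ g) i‖ < κ') ≤ ε

variable {v : (ι → Bool) → ℝ} {z : ℂ} {y : ℕ} {κ κ' δ ε σ₀ σ σ' : ℝ} {a : ι → ι → Bool}

namespace IsRobust

open Classical in
lemma exists_left_vector (ha : IsRobust v z y κ κ' δ ε σ₀ a) (hσ₀ : σ ≤ σ₀)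
    (hscale : IsScaleStep (Fintype.card ι) (Fintype.card ι * (1 + ‖z‖)) κ κ' σ σ')
    (hn : 0 < Fintype.card ι) :
    ∃ u : ι → ℂ, ‖u‖ ≤ 1 ∧
      (∀ j, ‖((shiftedMatrix a z)ᵀ *ᵥ u) j‖ ≤ κ * σ / (2 * Fintype.card ι)) ∧
      δ * Fintype.card ι * (if HasApproxNullity (shiftedMatrix a z) Set.univ σ' 1 then 1 else 0) ≤
        #(superlevel u κ) := by
  have hn1 : (1 : ℝ) ≤ Fintype.card ι := by exact_mod_cast hn
  have hκ := hscale.pos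
  have hσ := hscale.scale_nonneg_left
  by_cases hnull : HasApproxNullity (shiftedMatrix a z) Set.univ σ' 1
  · obtain ⟨u, hu, hMu⟩ := hnull.exists_left ha.det_ne_zero
    have hMu' (j) : ‖((shiftedMatrix a z)ᵀ *ᵥ u) j‖ ≤ κ * σ / (2 * Fintype.card ι) := by
      refine (hMu j).trans ((mul_le_mul_of_nonneg_left (hscale.scale_le_intermediate hn)
        (by positivity)).trans_eq ?_)
      field_simp
    refine ⟨u, hu.le, hMu', ?_⟩
    rw [if_pos hnull, mul_one]
    refine ha.le_card_superlevel u hu fun j => (hMu' j).trans ?_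
    have hσ₀' := hσ.trans hσ₀
    gcongr
    linarith
  · refine ⟨0, by simp, fun j => ?_, by simp [hnull]⟩
    rw [mulVec_zero, Pi.zero_apply, norm_zero]
    positivity

open Classical in
lemma expectation_cappedNullity_update_le (ha : IsRobust v z y κ κ' δ ε σ₀ a) (hσ₀ : σ ≤ σ₀)
    (hscale : IsScaleStep (Fintype.card ι) (Fintype.card ι * (1 + ‖z‖)) κ κ' σ σ')
    (hv : IsProbWeight v) {u : ι → ℂ} (hu : ‖u‖ ≤ 1)
    (hMu : ∀ j, ‖((shiftedMatrix a z)ᵀ *ᵥ u) j‖ ≤ κ * σ / (2 * Fintype.card ι)) (i : ι) :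
    expectation v (fun r => (cappedNullity (shiftedMatrix (update a i r) z) y σ' : ℝ)) ≤
      cappedNullity (shiftedMatrix a z) y σ + ε - (if κ ≤ ‖u i‖ then 1 else 0) := by
  obtain ⟨g, hg, hgz⟩ := exists_norm_eq_one_mulVec_eq_zero (shiftedMatrix a z) i
  have hy : ¬HasApproxNullity (shiftedMatrix a z) Set.univ σ y := fun h =>
    ha.not_hasApproxNullity (h.mono subset_rfl hσ₀ le_rfl)
  calc expectation v (fun r => (cappedNullity (shiftedMatrix (update a i r) z) y σ' : ℝ))
      ≤ expectation v (fun r => cappedNullity (shiftedMatrix a z) y σ +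
          (if ‖(shiftedMatrix (update a i r) z *ᵥ g) i‖ < κ' then 1 else 0) -
          (if κ ≤ ‖u i‖ then 1 else 0)) :=
        hv.expectation_mono fun r => cappedNullity_le_of_rows_eq hscale
          (fun j hj => shiftedMatrix_update_of_ne a z r hj) hy
          (fun x => norm_mulVec_apply_le (norm_shiftedMatrix_apply_le _ z) x i) hg hgz hu hMu
    _ = cappedNullity (shiftedMatrix a z) y σ +
          probability v (fun r => ‖(shiftedMatrix (update a i r) z *ᵥ g) i‖ < κ') -
          (if κ ≤ ‖u i‖ then 1 else 0) := by
        rw [expectation_sub, expectation_add, hv.expectation_const, hv.expectation_const,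
          probability_eq_expectation]
    _ ≤ _ := by gcongr; exact ha.probability_le i g hg hgz

open Classical in
lemma average_expectation_cappedNullity_le (ha : IsRobust v z y κ κ' δ ε σ₀ a) (hσ₀ : σ ≤ σ₀)
    (hscale : IsScaleStep (Fintype.card ι) (Fintype.card ι * (1 + ‖z‖)) κ κ' σ σ')
    (hv : IsProbWeight v) (hn : 0 < Fintype.card ι) :
    (Fintype.card ι : ℝ)⁻¹ * ∑ i, expectation v
        (fun r => (cappedNullity (shiftedMatrix (update a i r) z) y σ' : ℝ)) ≤
      cappedNullity (shiftedMatrix a z) y σ + ε -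
        δ * (if HasApproxNullity (shiftedMatrix a z) Set.univ σ' 1 then 1 else 0) := by
  obtain ⟨u, hu, hMu, hcard⟩ := ha.exists_left_vector hσ₀ hscale hn
  rw [inv_mul_le_iff₀ (by positivity)]
  calc ∑ i, expectation v (fun r => (cappedNullity (shiftedMatrix (update a i r) z) y σ' : ℝ))
      ≤ ∑ i, ((cappedNullity (shiftedMatrix a z) y σ + ε : ℝ) - (if κ ≤ ‖u i‖ then 1 else 0)) :=
        sum_le_sum fun i _ => ha.expectation_cappedNullity_update_le hσ₀ hscale hv hu hMu i
    _ = Fintype.card ι * (cappedNullity (shiftedMatrix a z) y σ + ε) - #(superlevel u κ) := by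
        rw [sum_sub_distrib, sum_boole, sum_const, card_univ, nsmul_eq_mul, superlevel]
    _ ≤ _ := by linarith

end IsRobust

open Classical in
lemma average_expectation_cappedNullity_le_add_indicator (hσ₀ : σ ≤ σ₀)
    (hscale : IsScaleStep (Fintype.card ι) (Fintype.card ι * (1 + ‖z‖)) κ κ' σ σ')
    (hv : IsProbWeight v) (hn : 0 < Fintype.card ι) (hδ0 : 0 ≤ δ) (hδ1 : δ ≤ 1) (hε : 0 ≤ ε)
    {ρ : ℝ} (hρ : ρ ≤ σ') (a : ι → ι → Bool) :
    (Fintype.card ι : ℝ)⁻¹ * ∑ i, expectation v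
        (fun r => (cappedNullity (shiftedMatrix (update a i r) z) y σ' : ℝ)) ≤
      cappedNullity (shiftedMatrix a z) y σ + ε +
        2 * (if ¬IsRobust v z y κ κ' δ ε σ₀ a then 1 else 0) -
        δ * (if HasApproxNullity (shiftedMatrix a z) Set.univ ρ 1 then 1 else 0) := by
  by_cases ha : IsRobust v z y κ κ' δ ε σ₀ a
  · refine (ha.average_expectation_cappedNullity_le hσ₀ hscale hv hn).trans ?_
    have hmono : HasApproxNullity (shiftedMatrix a z) Set.univ ρ 1 →
        HasApproxNullity (shiftedMatrix a z) Set.univ σ' 1 := fun h => h.mono subset_rfl hρ le_rfl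
    split_ifs <;> first | tauto | linarith
  · have hstep (i : ι) :
        expectation v (fun r => (cappedNullity (shiftedMatrix (update a i r) z) y σ' : ℝ)) ≤
          cappedNullity (shiftedMatrix a z) y σ + 1 :=
      hv.expectation_le_const fun r => by
        exact_mod_cast cappedNullity_le_add_one_of_rows_eq
          (fun j hj => shiftedMatrix_update_of_ne a z r hj) hscale.scale_nonneg
          ((hscale.scale_le_intermediate hn).trans (hscale.intermediate_le_scale hn))
    calc (Fintype.card ι : ℝ)⁻¹ * ∑ i, expectation v
          (fun r => (cappedNullity (shiftedMatrix (update a i r) z) y σ' : ℝ))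
        ≤ cappedNullity (shiftedMatrix a z) y σ + 1 := by
          rw [inv_mul_le_iff₀ (by positivity)]
          refine (sum_le_card_nsmul _ _ _ fun i _ => hstep i).trans_eq ?_
          rw [card_univ, nsmul_eq_mul]
      _ ≤ _ := by
          rw [if_pos ha]
          split_ifs <;> linarith

variable {w : (ι → Bool) → ℝ} {s ρ τ : ℝ} {L : ℕ}

/-- Pass to the law with one resampled row, whose cost is controlled by `densityMoment v w`, and
use that such a row tends to lower the nullity. -/
lemma expectation_cappedNullity_le (hσ₀ : σ ≤ σ₀)
    (hscale : IsScaleStep (Fintype.card ι) (Fintype.card ι * (1 + ‖z‖)) κ κ' σ σ')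
    (hw : IsProbWeight w) (hpos : ∀ r, 0 < w r) (hv : IsProbWeight v) (hn : 0 < Fintype.card ι)
    (hδ0 : 0 ≤ δ) (hδ1 : δ ≤ 1) (hε : 0 ≤ ε) (hs : 0 < s) (hρ : ρ ≤ σ') :
    expectation (productWeight w) (fun a => (cappedNullity (shiftedMatrix a z) y σ' : ℝ)) ≤
      expectation (productWeight w) (fun a => (cappedNullity (shiftedMatrix a z) y σ : ℝ)) +
        (ε + 2 * probability (productWeight w) (fun a => ¬IsRobust v z y κ κ' δ ε σ₀ a) +
          y * (s + densityMoment v w / (Fintype.card ι * s)) -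
          δ * probability (productWeight w)
            (fun a => HasApproxNullity (shiftedMatrix a z) Set.univ ρ 1)) := by
  classical
  have : Nonempty ι := Fintype.card_pos_iff.1 hn
  have hresample := expectation_le_expectation_average_resample hw hpos hv
    (F := fun a : ι → ι → Bool => (cappedNullity (shiftedMatrix a z) y σ' : ℝ)) (y := y) hs
    (fun _ => Nat.cast_nonneg _) (fun _ => Nat.cast_le.2 (cappedNullity_le _ _ _)) y.cast_nonneg
  rw [expectation_const_mul] at hresample
  have hdrift := hw.productWeight.expectation_mono fun a =>
    average_expectation_cappedNullity_le_add_indicator (y := y) hσ₀ hscale hv hn hδ0 hδ1 hε hρ a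
  simp only [expectation_sub, expectation_add, expectation_const_mul,
    hw.productWeight.expectation_const, ← probability_eq_expectation] at hdrift
  linarith

lemma isScaleStep_pow_mul {n : ℕ} {D : ℝ} (hD : 1 ≤ D) (hκ0 : 0 < κ) (hκ1 : κ ≤ 1)
    (hκ'0 : 0 < κ') (hκ'1 : κ' ≤ 1) (hτ0 : 0 ≤ τ) (hτ : 8 * n ^ 2 * D * τ ≤ κ * κ')
    (hτ1 : τ ≤ 1) (hσ0 : 0 ≤ σ) (hσ1 : σ ≤ 1) (k : ℕ) :
    IsScaleStep n D κ κ' (τ ^ k * σ) (τ ^ (k + 1) * σ) where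
  pos := hκ0
  le_one := hκ1
  pos' := hκ'0
  le_one' := hκ'1
  one_le := hD
  scale_nonneg := by positivity
  scale_le_one := mul_le_one₀ (pow_le_one₀ hτ0 hτ1) hσ0 hσ1
  scale_le :=
    calc 8 * n ^ 2 * D * (τ ^ (k + 1) * σ) = 8 * n ^ 2 * D * τ * (τ ^ k * σ) := by ring
      _ ≤ κ * κ' * (τ ^ k * σ) := by gcongr

lemma nonneg_div_add_of_forall_le_add {f : ℕ → ℝ} {A B : ℝ} (hL : 0 < L) (h0 : f 0 ≤ A)
    (hL0 : 0 ≤ f L) (hf : ∀ k < L, f (k + 1) ≤ f k + B) : 0 ≤ A / L + B := by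
  have hind : ∀ k ≤ L, f k ≤ A + k * B := by
    intro k hk
    induction k with
    | zero => simpa using h0
    | succ k ih =>
      push_cast
      linarith [hf k hk, ih (Nat.le_of_succ_le hk)]
  have h := hL0.trans (hind L le_rfl)
  have hLB : (A + L * B) / L = A / L + B := by field_simp
  rw [← hLB]
  positivity

/-- The expected capped nullity drops at each of the `L` scales, but it only takes values in
`[0, y]`. -/
lemma mul_probability_hasApproxNullity_le (hw : IsProbWeight w) (hpos : ∀ r, 0 < w r)
    (hv : IsProbWeight v) (hn : 0 < Fintype.card ι) (hL : 0 < L) (hδ0 : 0 ≤ δ) (hδ1 : δ ≤ 1)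
    (hε : 0 ≤ ε) (hs : 0 < s) (hκ0 : 0 < κ) (hκ1 : κ ≤ 1) (hκ'0 : 0 < κ') (hκ'1 : κ' ≤ 1)
    (hτ0 : 0 ≤ τ) (hτ : 8 * Fintype.card ι ^ 3 * (1 + ‖z‖) * τ ≤ κ * κ') (hσ0 : 0 ≤ σ)
    (hσ1 : σ ≤ 1) :
    δ * probability (productWeight w)
        (fun a : ι → ι → Bool => HasApproxNullity (shiftedMatrix a z) Set.univ (τ ^ L * σ) 1) ≤
      y / L + ε + 2 * probability (productWeight w) (fun a => ¬IsRobust v z y κ κ' δ ε σ a) +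
        y * (s + densityMoment v w / (Fintype.card ι * s)) := by
  have hn1 : (1 : ℝ) ≤ Fintype.card ι := by exact_mod_cast hn
  have hz1 : 1 ≤ 1 + ‖z‖ := le_add_of_nonneg_right (norm_nonneg z)
  have hτ1 : τ ≤ 1 :=
    calc τ ≤ 8 * Fintype.card ι ^ 3 * (1 + ‖z‖) * τ :=
          le_mul_of_one_le_left hτ0 (one_le_mul_of_one_le_of_one_le
            (one_le_mul_of_one_le_of_one_le (by norm_num) (one_le_pow₀ hn1)) hz1)
      _ ≤ κ * κ' := hτ
      _ ≤ 1 := mul_le_one₀ hκ1 hκ'0.le hκ'1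
  have hstep (k : ℕ) := isScaleStep_pow_mul (one_le_mul_of_one_le_of_one_le hn1 hz1) hκ0 hκ1
    hκ'0 hκ'1 hτ0 (le_trans (by ring_nf; rfl) hτ) hτ1 hσ0 hσ1 k
  have h := nonneg_div_add_of_forall_le_add (f := fun k => expectation (productWeight w)
      fun a : ι → ι → Bool => (cappedNullity (shiftedMatrix a z) y (τ ^ k * σ) : ℝ)) hL
    (hw.productWeight.expectation_le_const fun a => Nat.cast_le.2 (cappedNullity_le _ y _))
    (hw.productWeight.expectation_nonneg fun a => Nat.cast_nonneg _)
    fun k hk => expectation_cappedNullity_le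
      (mul_le_of_le_one_left hσ0 (pow_le_one₀ hτ0 hτ1)) (hstep k) hw hpos hv hn hδ0 hδ1 hε hs
      (mul_le_mul_of_nonneg_right (pow_le_pow_of_le_one hτ0 hτ1 hk) hσ0)
  linarith

end Drift

section Robustness

open Finset Function Matrix

variable {ι : Type*} [Fintype ι]

lemma IsDelocalized.le_card_superlevel {M : Matrix ι ι ℂ} {m : ℕ} {δ κ η γ β : ℝ}
    (hM : IsDelocalized M m δ κ η γ β) {g : ι → ℂ} (hg : ‖g‖ = 1)
    (hη : ∀ i, ‖(M *ᵥ g) i‖ ≤ η) : δ * Fintype.card ι ≤ #(superlevel g κ) :=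
  (hM g ∅ hg (by simp) fun i _ => hη i).resolve_right fun ⟨_, hi, _⟩ => notMem_empty _ hi

lemma le_norm_sum_ite_add_of_forall_mem_eq_false {g : ι → ℂ} {β : ℝ} {S : Finset ι} {r : ι → Bool}
    (hβ0 : 0 ≤ β) (hr : ∀ j ∈ S, r j = false) (hS : ∀ j ∉ S, ‖g j‖ < β) (c : ℂ) :
    ‖c‖ - Fintype.card ι * β ≤ ‖∑ j, (if r j then g j else 0) + c‖ := by
  have hsum : ‖∑ j, (if r j then g j else 0)‖ ≤ Fintype.card ι * β := by
    rw [← nsmul_eq_mul, Fintype.card, ← sum_const]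
    refine norm_sum_le_of_le _ fun j _ => ?_
    by_cases hj : j ∈ S
    · simpa [hr j hj] using hβ0
    · split_ifs
      · exact (hS j hj).le
      · simpa using hβ0
  have htri := norm_le_add_norm_add c (∑ j, (if r j then g j else 0))
  rw [add_comm c] at htri
  linarith

variable [DecidableEq ι] {m : ℕ} {z : ℂ} {p κ κ' γ β : ℝ}

lemma shiftedMatrix_update_self_mulVec_apply (a : ι → ι → Bool) (z : ℂ) (i : ι) (r : ι → Bool)
    (g : ι → ℂ) : (shiftedMatrix (update a i r) z *ᵥ g) i =
      ∑ j, (if r j then g j else 0) + -(z * g i) := by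
  simp only [mulVec, dotProduct, shiftedMatrix_apply, update_self, sub_mul, sum_sub_distrib,
    ite_mul, one_mul, zero_mul, sum_ite_eq, mem_univ, if_true]
  exact sub_eq_add_neg _ _

lemma probability_norm_sum_add_lt_le_of_isLocalizedAt (h0 : 0 ≤ p) (h1 : p ≤ 1) (hβ0 : 0 ≤ β)
    {g : ι → ℂ} {i : ι} (hg : IsLocalizedAt g {i} m γ β)
    (hκ' : κ' ≤ ‖z‖ * γ - Fintype.card ι * β) :
    probability (productWeight (bernoulliWeight p))
      (fun r : ι → Bool => ‖∑ j, (if r j then g j else 0) + -(z * g i)‖ < κ') ≤ m * p := by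
  classical
  obtain ⟨k, hk, S, hS, -, hγ, hoff⟩ := hg
  rw [mem_singleton.1 hk] at hγ
  have hw : IsProbWeight (productWeight (bernoulliWeight p) : (ι → Bool) → ℝ) :=
    (isProbWeight_bernoulliWeight h0 h1).productWeight
  have hbig {r : ι → Bool} (hr : ∀ j ∈ S, r j = false) :
      κ' ≤ ‖∑ j, (if r j then g j else 0) + -(z * g i)‖ :=
    calc κ' ≤ ‖z‖ * ‖g i‖ - Fintype.card ι * β := hκ'.trans (by gcongr)
      _ = ‖-(z * g i)‖ - Fintype.card ι * β := by rw [norm_neg, norm_mul]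
      _ ≤ _ := le_norm_sum_ite_add_of_forall_mem_eq_false hβ0 hr hoff _
  calc _ ≤ expectation (productWeight (bernoulliWeight p))
        (fun r : ι → Bool => 1 - if ∀ j ∈ S, r j = false then 1 else 0) :=
        hw.probability_le_expectation (fun r => by split_ifs <;> simp) fun r hr => by
          simp [show ¬∀ j ∈ S, r j = false from fun h => (hbig h).not_gt hr]
    _ = 1 - (1 - p) ^ #S := by
        rw [expectation_sub, hw.expectation_const, ← probability_eq_expectation,
          probability_forall_mem_eq_false]
    _ ≤ m * p := by linarith [one_sub_mul_le_one_sub_pow h0 h1 hS]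

lemma isRobust_of_isDelocalized {a : ι → ι → Bool} {y : ℕ} {δ ε η σ : ℝ} (h0 : 0 ≤ p)
    (h1 : p ≤ 1) (hβ0 : 0 ≤ β) (hε : 0 ≤ ε) (hη0 : 0 ≤ η) (hκσ : κ * σ / 2 ≤ η)
    (hκ' : κ' ≤ κ / 4) (hκ'γ : κ' ≤ ‖z‖ * γ - Fintype.card ι * β)
    (hbin : ∀ n k : ℕ, δ * Fintype.card ι / 4 ≤ n → k ≤ n → binomialMass p n k ≤ ε)
    (hdet : (shiftedMatrix a z).det ≠ 0)
    (hnul : ¬HasApproxNullity (shiftedMatrix a z) Set.univ σ y)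
    (ha : IsDelocalized (shiftedMatrix a z) m δ κ η γ β)
    (ha' : IsDelocalized (shiftedMatrix a z)ᵀ m δ κ η γ β) :
    IsRobust (productWeight (bernoulliWeight p)) z y κ κ' δ (ε + m * p) σ a where
  det_ne_zero := hdet
  not_hasApproxNullity := hnul
  le_card_superlevel u hu huσ := ha'.le_card_superlevel hu fun j => (huσ j).trans hκσ
  probability_le i g hg hgi := by
    simp only [shiftedMatrix_update_self_mulVec_apply]
    have hmp : 0 ≤ m * p := mul_nonneg (Nat.cast_nonneg m) h0
    rcases ha g {i} hg (by simp) fun j hj => by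
        rwa [hgi j (by simpa using hj), norm_zero] with hspread | hloc
    · have hw : IsProbWeight (productWeight (bernoulliWeight p) : (ι → Bool) → ℝ) :=
        (isProbWeight_bernoulliWeight h0 h1).productWeight
      refine (hw.probability_mono fun r hr => hr.trans_le hκ').trans ?_
      exact (probability_norm_sum_add_lt_le h0 h1 hε hspread hbin _).trans
        (le_add_of_nonneg_right hmp)
    · exact (probability_norm_sum_add_lt_le_of_isLocalizedAt h0 h1 hβ0 hloc hκ'γ).trans
        (le_add_of_nonneg_left hε)

end Robustness

section SpectralMeasure

open Matrix

variable {ι : Type*} [Fintype ι] [DecidableEq ι]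

lemma nnnorm_det_sub_smul_one (M : Matrix ι ι ℂ) (z : ℂ) :
    ‖(M - z • 1).det‖₊ = (M.charpoly.roots.map fun w => ‖z - w‖₊).prod := by
  have hsplits : M.charpoly.Splits := IsAlgClosed.splits _
  have hdet : (M - z • 1).det = (-1) ^ Fintype.card ι * M.charpoly.eval z := by
    rw [eval_charpoly, ← det_neg, neg_sub, scalar_apply, smul_one_eq_diagonal]
  rw [hdet, hsplits.eval_eq_prod_roots_of_monic M.charpoly_monic, nnnorm_mul, nnnorm_pow,
    nnnorm_neg, nnnorm_one, one_pow, one_mul]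
  exact (map_multiset_prod (nnnormHom : ℂ →*₀ NNReal) _).trans (by rw [Multiset.map_map]; rfl)

lemma card_roots_charpoly (M : Matrix ι ι ℂ) : M.charpoly.roots.card = Fintype.card ι := by
  rw [← (IsAlgClosed.splits M.charpoly).natDegree_eq_card_roots, charpoly_natDegree_eq_dim]

lemma ae_det_sub_smul_one_ne_zero (M : Matrix ι ι ℂ) : ∀ᵐ z : ℂ, (M - z • 1).det ≠ 0 := by
  have hfin : {w | w ∈ M.charpoly.roots.toFinset}.Finite := M.charpoly.roots.toFinset.finite_toSet
  filter_upwards [hfin.countable.ae_notMem volume] with z hz hdet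
  rw [← nnnorm_eq_zero, nnnorm_det_sub_smul_one, Multiset.prod_eq_zero_iff,
    Multiset.mem_map] at hdet
  obtain ⟨w, hw, hzw⟩ := hdet
  rw [nnnorm_eq_zero, sub_eq_zero] at hzw
  exact hz (Multiset.mem_toFinset.2 (hzw ▸ hw))

lemma volume_norm_det_sub_smul_one_lt_le (M : Matrix ι ι ℂ) {ρ : ℝ} (hρ : 0 ≤ ρ) :
    volume {z : ℂ | ‖(M - z • 1).det‖ < ρ ^ Fintype.card ι} ≤
      ENNReal.ofReal (Fintype.card ι * (ρ ^ 2 * Real.pi)) := by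
  lift ρ to NNReal using hρ
  have hsub : {z : ℂ | ‖(M - z • 1).det‖ < ρ ^ Fintype.card ι} ⊆
      ⋃ w ∈ M.charpoly.roots.toFinset, Metric.ball w ρ := by
    intro z hz
    by_contra hfar
    simp only [Set.mem_iUnion, Metric.mem_ball, not_exists, not_lt, Multiset.mem_toFinset,
      dist_eq_norm] at hfar
    have hle : ρ ^ Fintype.card ι ≤ ‖(M - z • 1).det‖₊ := by
      rw [nnnorm_det_sub_smul_one, ← card_roots_charpoly M,
        ← Multiset.card_map (fun w => ‖z - w‖₊)]
      exact Multiset.pow_card_le_prod (Multiset.forall_mem_map_iff.2 hfar)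
    exact not_lt_of_ge (NNReal.coe_le_coe.2 hle) hz
  calc _ ≤ ∑ w ∈ M.charpoly.roots.toFinset, volume (Metric.ball w ρ) :=
        (measure_mono hsub).trans (measure_biUnion_finset_le _ _)
    _ = M.charpoly.roots.toFinset.card * ENNReal.ofReal (ρ ^ 2 * Real.pi) := by
        simp only [Complex.volume_ball, Finset.sum_const, nsmul_eq_mul]
        rw [ENNReal.ofReal_mul (by positivity), ENNReal.ofReal_pow (by positivity),
          ← NNReal.coe_real_pi, ENNReal.ofReal_coe_nnreal, ENNReal.ofReal_coe_nnreal]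
    _ ≤ Fintype.card ι * ENNReal.ofReal (ρ ^ 2 * Real.pi) := by
        gcongr
        exact (Multiset.toFinset_card_le _).trans (card_roots_charpoly M).le
    _ = _ := by rw [ENNReal.ofReal_mul (Nat.cast_nonneg _), ENNReal.ofReal_natCast]

lemma measurableSet_norm_det_sub_smul_one_lt (M : Matrix ι ι ℂ) (r : ℝ) :
    MeasurableSet {z : ℂ | ‖(M - z • 1).det‖ < r} :=
  (isOpen_lt (by fun_prop) continuous_const).measurableSet

lemma norm_det_mul_norm_le {𝕜 : Type*} [NormedField 𝕜] {M : Matrix ι ι 𝕜} {D : ℝ} (hD : 1 ≤ D)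
    (hM : ∀ i j, ‖M i j‖ ≤ D) (v : ι → 𝕜) :
    ‖M.det‖ * ‖v‖ ≤
      Fintype.card ι * ((Fintype.card ι).factorial * D ^ Fintype.card ι) * ‖M *ᵥ v‖ := by
  have hadj : M.det • v = M.adjugate *ᵥ (M *ᵥ v) := by
    rw [mulVec_mulVec, adjugate_mul, smul_mulVec, one_mulVec]
  rw [← norm_smul, hadj, pi_norm_le_iff_of_nonneg (by positivity)]
  refine norm_mulVec_apply_le (fun i j => ?_) _
  rw [adjugate_apply]
  refine (norm_det_le_factorial_mul_prod (c := fun _ => D) _ fun k l => ?_).trans_eq (by simp)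
  rcases eq_or_ne k j with rfl | hk
  · rw [updateRow_self, Pi.single_apply]
    split_ifs
    · rwa [norm_one]
    · rw [norm_zero]
      exact zero_le_one.trans hD
  · rw [updateRow_ne hk]
    exact hM k l

end SpectralMeasure

section BorelCantelli

open Filter Topology

lemma measurable_probability_mem {α X : Type*} [Fintype α] [MeasurableSpace X]
    (w : α → ℝ) {S : α → Set X} (hS : ∀ a, MeasurableSet (S a)) :
    Measurable fun x => probability w (fun a => x ∈ S a) := by
  classical
  simp only [probability_eq_expectation, expectation]
  exact Finset.measurable_sum _ fun a _ =>
    (Measurable.ite (hS a) measurable_const measurable_const).const_mul _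

lemma IsProbWeight.lintegral_probability_mem_le {α X : Type*} [Fintype α] [MeasurableSpace X]
    {μ : Measure X} {w : α → ℝ} (hw : IsProbWeight w) {S : α → Set X}
    (hS : ∀ a, MeasurableSet (S a)) {c : ENNReal} (hc : ∀ a, μ (S a) ≤ c) :
    ∫⁻ x, ENNReal.ofReal (probability w (fun a => x ∈ S a)) ∂μ ≤ c := by
  classical
  have hind (x : X) : ENNReal.ofReal (probability w (fun a => x ∈ S a)) =
      ∑ a, ENNReal.ofReal (w a) * (S a).indicator 1 x := by
    rw [probability_eq_expectation, expectation, ENNReal.ofReal_sum_of_nonneg fun a _ =>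
      mul_nonneg (hw.nonneg a) (by split_ifs <;> simp)]
    refine Finset.sum_congr rfl fun a _ => ?_
    by_cases hx : x ∈ S a <;> simp [hx]
  calc _ = ∑ a, ENNReal.ofReal (w a) * μ (S a) := by
        simp only [hind]
        rw [lintegral_finsetSum _ fun a _ => (measurable_one.indicator (hS a)).const_mul _]
        refine Finset.sum_congr rfl fun a _ => ?_
        rw [lintegral_const_mul _ (measurable_one.indicator (hS a)),
          lintegral_indicator_one (hS a)]
    _ ≤ ∑ a, ENNReal.ofReal (w a) * c := by gcongr with a; exact hc a
    _ = c := by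
        rw [← Finset.sum_mul, ← ENNReal.ofReal_sum_of_nonneg fun a _ => hw.nonneg a,
          hw.sum_eq_one, ENNReal.ofReal_one, one_mul]

lemma ae_tendsto_zero_of_lintegral_le {X : Type*} [MeasurableSpace X] {μ : Measure X}
    {f : ℕ → X → ℝ} {b : ℕ → ℝ} (hf : ∀ n, AEMeasurable (f n) μ)
    (hf0 : ∀ᶠ n in atTop, ∀ x, 0 ≤ f n x)
    (hfb : ∀ᶠ n in atTop, ∫⁻ x, ENNReal.ofReal (f n x) ∂μ ≤ ENNReal.ofReal (b n))
    (hb : Summable b) : ∀ᵐ x ∂μ, Tendsto (fun n => f n x) atTop (𝓝 0) := by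
  obtain ⟨N, hN⟩ := eventually_atTop.1 hfb
  have hmeas (n : ℕ) : AEMeasurable (fun x => ENNReal.ofReal (f (n + N) x)) μ :=
    (hf (n + N)).ennreal_ofReal
  have htsum : ∫⁻ x, ∑' n, ENNReal.ofReal (f (n + N) x) ∂μ ≠ ⊤ := by
    rw [lintegral_tsum hmeas]
    exact ne_top_of_le_ne_top ((summable_nat_add_iff N).2 hb).tsum_ofReal_ne_top
      (ENNReal.tsum_le_tsum fun n => hN (n + N) (Nat.le_add_left N n))
  filter_upwards [ae_lt_top' (AEMeasurable.tsum hmeas) htsum] with x hx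
  have hzero : Tendsto (fun n => ENNReal.ofReal (f n x)) atTop (𝓝 0) :=
    (tendsto_add_atTop_iff_nat N).1 (ENNReal.tendsto_atTop_zero_of_tsum_ne_top hx.ne)
  refine ((ENNReal.tendsto_toReal ENNReal.zero_ne_top).comp hzero).congr' ?_
  filter_upwards [hf0] with n hn
  exact ENNReal.toReal_ofReal (hn x)

end BorelCantelli

section GenericShift

open Matrix Filter Topology

lemma ae_tendsto_probability_norm_det_shiftedMatrix_lt {d : ℝ} (hd : 0 ≤ d) :
    ∀ᵐ z : ℂ, Tendsto (fun n : ℕ => probability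
      (productWeight (productWeight (bernoulliWeight (d / n))))
      fun a : Fin n → Fin n → Bool => ‖(shiftedMatrix a z).det‖ < (1 / (n : ℝ) ^ 2) ^ n)
      atTop (𝓝 0) := by
  let S (n : ℕ) (a : Fin n → Fin n → Bool) : Set ℂ :=
    {z | ‖(shiftedMatrix a z).det‖ < (1 / (n : ℝ) ^ 2) ^ n}
  have hS (n : ℕ) (a : Fin n → Fin n → Bool) : MeasurableSet (S n a) :=
    measurableSet_norm_det_sub_smul_one_lt _ _
  have hvol (n : ℕ) (a : Fin n → Fin n → Bool) :
      volume (S n a) ≤ ENNReal.ofReal (Real.pi * (1 / (n : ℝ) ^ 2)) := by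
    have h := volume_norm_det_sub_smul_one_lt_le
      (of fun i j => if a i j then (1 : ℂ) else 0) (ρ := 1 / (n : ℝ) ^ 2) (by positivity)
    rw [Fintype.card_fin] at h
    refine h.trans (ENNReal.ofReal_le_ofReal ?_)
    rcases n.eq_zero_or_pos with rfl | hn
    · simp
    · have hn1 : (1 : ℝ) ≤ n := by exact_mod_cast hn
      calc n * ((1 / (n : ℝ) ^ 2) ^ 2 * Real.pi) = Real.pi * (1 / (n : ℝ) ^ 3) := by field_simp
        _ ≤ Real.pi * (1 / (n : ℝ) ^ 2) := by gcongr; norm_num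
  have hw : ∀ᶠ n : ℕ in atTop, IsProbWeight
      (productWeight (productWeight (bernoulliWeight (d / n))) : (Fin n → Fin n → Bool) → ℝ) := by
    filter_upwards [eventually_ge_atTop ⌈d⌉₊] with n hn
    exact (isProbWeight_bernoulliWeight (by positivity)
      (div_le_one_of_le₀ (Nat.ceil_le.1 hn) (Nat.cast_nonneg n))).productWeight.productWeight
  exact ae_tendsto_zero_of_lintegral_le
    (fun n => (measurable_probability_mem _ (hS n)).aemeasurable)
    (hw.mono fun n hn z => hn.probability_nonneg _)
    (hw.mono fun n hn => hn.lintegral_probability_mem_le (hS n) (hvol n))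
    ((Real.summable_one_div_nat_pow.2 one_lt_two).mul_left _)

lemma volume_iUnion_norm_det_shiftedMatrix_lt_le (m : ℕ) :
    volume (⋃ B : Fin m → Fin m → Bool,
      {z : ℂ | ‖(shiftedMatrix B z).det‖ < ((1 / 2) ^ m ^ 2) ^ m}) ≤
      ENNReal.ofReal (Real.pi * (m ^ 1 * (1 / 2) ^ m)) := by
  have hball (B : Fin m → Fin m → Bool) :
      volume {z : ℂ | ‖(shiftedMatrix B z).det‖ < ((1 / 2) ^ m ^ 2) ^ m} ≤
        ENNReal.ofReal (m * (((1 / 2) ^ m ^ 2) ^ 2 * Real.pi)) := by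
    have h := volume_norm_det_sub_smul_one_lt_le
      (of fun i j => if B i j then (1 : ℂ) else 0) (ρ := (1 / 2) ^ m ^ 2) (by positivity)
    rwa [Fintype.card_fin] at h
  have hcard : Fintype.card (Fin m → Fin m → Bool) = 2 ^ m ^ 2 := by
    simp [← pow_mul, sq]
  calc _ ≤ ∑ _B : Fin m → Fin m → Bool,
        ENNReal.ofReal (m * (((1 / 2) ^ m ^ 2) ^ 2 * Real.pi)) :=
        (measure_iUnion_fintype_le _ _).trans (Finset.sum_le_sum fun B _ => hball B)
    _ = ENNReal.ofReal (2 ^ m ^ 2 * (m * (((1 / 2) ^ m ^ 2) ^ 2 * Real.pi))) := by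
        rw [Finset.sum_const, Finset.card_univ, hcard, nsmul_eq_mul,
          ENNReal.ofReal_mul (p := 2 ^ m ^ 2) (by positivity), ENNReal.ofReal_pow (by norm_num)]
        simp
    _ = ENNReal.ofReal (Real.pi * (m ^ 1 * (1 / 2) ^ m ^ 2)) := by
        congr 1
        simp only [_root_.one_div_pow]
        field_simp
    _ ≤ _ := by
        have h : (1 / 2 : ℝ) ^ m ^ 2 ≤ (1 / 2) ^ m :=
          pow_le_pow_of_le_one (by norm_num) (by norm_num) (Nat.le_self_pow two_ne_zero m)
        gcongr

lemma ae_exists_forall_le_norm_det_shiftedMatrix : ∀ᵐ z : ℂ, ∃ C > 0,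
    ∀ (m : ℕ) (B : Fin m → Fin m → Bool), C * (1 / 2) ^ m ^ 3 ≤ ‖(shiftedMatrix B z).det‖ := by
  have hsum : ∑' m : ℕ, volume (⋃ B : Fin m → Fin m → Bool,
      {z : ℂ | ‖(shiftedMatrix B z).det‖ < ((1 / 2) ^ m ^ 2) ^ m}) ≠ ⊤ :=
    ne_top_of_le_ne_top ((summable_pow_mul_geometric_of_norm_lt_one 1 (by norm_num)).mul_left
      Real.pi).tsum_ofReal_ne_top
      (ENNReal.tsum_le_tsum volume_iUnion_norm_det_shiftedMatrix_lt_le)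
  have hne : ∀ᵐ z : ℂ, ∀ (m : ℕ) (B : Fin m → Fin m → Bool), (shiftedMatrix B z).det ≠ 0 :=
    ae_all_iff.2 fun m => ae_all_iff.2 fun B => ae_det_sub_smul_one_ne_zero _
  filter_upwards [ae_eventually_notMem hsum, hne] with z hlarge hz
  obtain ⟨N, hN⟩ := eventually_atTop.1 hlarge
  have hsmall : ∀ᶠ C in 𝓝[>] (0 : ℝ), ∀ x : Σ m : Fin N, (Fin m → Fin m → Bool),
      C < ‖(shiftedMatrix x.2 z).det‖ :=
    eventually_all.2 fun x => nhdsWithin_le_nhds (eventually_lt_nhds (norm_pos_iff.2 (hz _ x.2)))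
  obtain ⟨C, ⟨hC, hC1⟩, hC0⟩ := ((hsmall.and (nhdsWithin_le_nhds (eventually_lt_nhds
    zero_lt_one))).and self_mem_nhdsWithin).exists
  refine ⟨C, hC0, fun m B => ?_⟩
  have hpow : (1 / 2 : ℝ) ^ m ^ 3 ≤ 1 := pow_le_one₀ (by norm_num) (by norm_num)
  by_cases hm : m < N
  · exact (mul_le_of_le_one_right (le_of_lt hC0) hpow).trans (hC ⟨⟨m, hm⟩, B⟩).le
  · have hnot := hN m (not_lt.1 hm)
    simp only [Set.mem_iUnion, Set.mem_ofPred_eq, not_exists, not_lt] at hnot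
    calc C * (1 / 2) ^ m ^ 3 ≤ (1 / 2) ^ m ^ 3 := mul_le_of_le_one_left (by positivity) hC1.le
      _ = ((1 / 2) ^ m ^ 2) ^ m := by rw [← pow_mul, ← pow_succ]
      _ ≤ _ := hnot B

/-- A bound for the inverses of all blocks `B - z • 1` of size at most `m`, when `‖z‖ = r` and their
determinants are at least `2 ^ (-m ^ 3) / C`. -/
noncomputable def blockInverseBound (C r : ℝ) (m : ℕ) : ℝ :=
  C * (m * (m.factorial * (1 + r) ^ m) * 2 ^ m ^ 3)

lemma ae_exists_smallBlocksInvertible : ∀ᵐ z : ℂ, ∃ C > 0, ∀ m,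
    SmallBlocksInvertible z m (blockInverseBound C ‖z‖ m) := by
  filter_upwards [ae_exists_forall_le_norm_det_shiftedMatrix] with z ⟨C, hC0, hC⟩
  refine ⟨1 / C, by positivity, fun m k hk B v => ?_⟩
  have hz : 1 ≤ 1 + ‖z‖ := le_add_of_nonneg_right (norm_nonneg z)
  have hinv := norm_det_mul_norm_le hz (norm_shiftedMatrix_apply_le B z) v
  rw [Fintype.card_fin] at hinv
  calc ‖v‖ = 1 / C * 2 ^ k ^ 3 * (C * (1 / 2) ^ k ^ 3 * ‖v‖) := by
        rw [_root_.one_div_pow]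
        field_simp
    _ ≤ 1 / C * 2 ^ k ^ 3 *
          (k * (k.factorial * (1 + ‖z‖) ^ k) * ‖shiftedMatrix B z *ᵥ v‖) := by
        refine mul_le_mul_of_nonneg_left ?_ (by positivity)
        exact (mul_le_mul_of_nonneg_right (hC k B) (norm_nonneg v)).trans hinv
    _ = blockInverseBound (1 / C) ‖z‖ k * ‖shiftedMatrix B z *ᵥ v‖ := by
        unfold blockInverseBound
        ring
    _ ≤ blockInverseBound (1 / C) ‖z‖ m * ‖shiftedMatrix B z *ᵥ v‖ := by
        unfold blockInverseBound
        gcongr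
        norm_num

end GenericShift

section AtomicMeasure

variable {α β : Type*} [Fintype α] [MeasurableSpace β] {w : α → ℝ} {f : α → β}

/-- The law of `f` under the mass function `w`. -/
noncomputable def atomicMeasure (w : α → ℝ) (f : α → β) : Measure β :=
  ∑ a, ENNReal.ofReal (w a) • Measure.dirac (f a)

instance isFiniteMeasure_atomicMeasure : IsFiniteMeasure (atomicMeasure w f) where
  measure_univ_lt_top := by
    simp only [atomicMeasure, Measure.finsetSum_apply, Measure.smul_apply, measure_univ,
      smul_eq_mul, mul_one]
    exact ENNReal.sum_lt_top.2 fun a _ => ENNReal.ofReal_lt_top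

lemma atomicMeasure_apply_of_measurableSet {E : Set β} (hE : MeasurableSet E) :
    atomicMeasure w f E = ∑ a, ENNReal.ofReal (w a) * E.indicator 1 (f a) := by
  simp only [atomicMeasure, Measure.finsetSum_apply, Measure.smul_apply, smul_eq_mul,
    Measure.dirac_apply' _ hE]

lemma atomicMeasure_apply [MeasurableSingletonClass β] (hw : ∀ a, 0 ≤ w a) (E : Set β) :
    atomicMeasure w f E = ENNReal.ofReal (probability w fun a => f a ∈ E) := by
  classical
  rw [probability_eq_expectation, expectation, ENNReal.ofReal_sum_of_nonneg fun a _ =>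
    mul_nonneg (hw a) (by split_ifs <;> simp)]
  simp only [atomicMeasure, Measure.finsetSum_apply, Measure.smul_apply, smul_eq_mul,
    Measure.dirac_apply]
  refine Finset.sum_congr rfl fun a _ => ?_
  by_cases ha : f a ∈ E <;> simp [ha]

lemma pi_atomicMeasure {ι : Type*} [Fintype ι] [DecidableEq ι] (hw : ∀ a, 0 ≤ w a) :
    Measure.pi (fun _ : ι => atomicMeasure w f) =
      atomicMeasure (productWeight w) fun x i => f (x i) := by
  refine Measure.pi_eq fun s hs => ?_
  rw [atomicMeasure_apply_of_measurableSet (MeasurableSet.univ_pi hs)]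
  simp only [atomicMeasure_apply_of_measurableSet (hs _)]
  rw [Fintype.prod_sum]
  refine Finset.sum_congr rfl fun x _ => ?_
  rw [productWeight, ENNReal.ofReal_prod_of_nonneg fun i _ => hw (x i), Finset.prod_mul_distrib]
  congr 1
  by_cases hx : ∀ i, f (x i) ∈ s i
  · simp [hx]
  · obtain ⟨i, hi⟩ := not_forall.1 hx
    rw [Set.indicator_of_notMem (by simpa using hx), Finset.prod_eq_zero (Finset.mem_univ i)]
    simp [hi]

lemma bernoulliC_eq_atomicMeasure (p : ℝ) :
    bernoulliC p = atomicMeasure (bernoulliWeight p) fun b => if b then (1 : ℂ) else 0 := by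
  simp [bernoulliC, atomicMeasure, bernoulliWeight]

lemma iidMatrixLaw_apply {p : ℝ} (h0 : 0 ≤ p) (h1 : p ≤ 1) (n : ℕ)
    (E : Set (Fin n → Fin n → ℂ)) :
    iidMatrixLaw n p E = ENNReal.ofReal (probability
      (productWeight (productWeight (bernoulliWeight p)))
      fun a : Fin n → Fin n → Bool => (fun i j => if a i j then (1 : ℂ) else 0) ∈ E) := by
  have hw := isProbWeight_bernoulliWeight h0 h1
  simp only [iidMatrixLaw, bernoulliC_eq_atomicMeasure, pi_atomicMeasure hw.nonneg,
    pi_atomicMeasure hw.productWeight.nonneg]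
  exact atomicMeasure_apply hw.productWeight.productWeight.nonneg E

end AtomicMeasure

section LeastSingularValue

open Matrix

variable {n : ℕ}

lemma norm_apply_le_vecNorm2 (v : Fin n → ℂ) (i : Fin n) : ‖v i‖ ≤ vecNorm2 v :=
  Real.le_sqrt_of_sq_le <|
    Finset.single_le_sum (f := fun i => ‖v i‖ ^ 2) (fun _ _ => by positivity) (Finset.mem_univ i)

lemma vecNorm2_le_mul_norm (v : Fin n → ℂ) : vecNorm2 v ≤ n * ‖v‖ := by
  refine Real.sqrt_le_iff.2 ⟨by positivity, ?_⟩
  calc ∑ i, ‖v i‖ ^ 2 ≤ ∑ _i : Fin n, ‖v‖ ^ 2 :=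
        Finset.sum_le_sum fun i _ => pow_le_pow_left₀ (norm_nonneg _) (norm_le_pi_norm v i) 2
    _ = n * ‖v‖ ^ 2 := by simp
    _ ≤ n ^ 2 * ‖v‖ ^ 2 := by
        gcongr
        exact_mod_cast Nat.le_self_pow two_ne_zero n
    _ = (n * ‖v‖) ^ 2 := by ring

lemma hasApproxNullity_of_leastSingVal_lt {M : Matrix (Fin n) (Fin n) ℂ} {x : ℝ} (hn : 0 < n)
    (h : leastSingVal M < x) : HasApproxNullity M Set.univ (n * x) 1 := by
  have hne : {r | ∃ v : Fin n → ℂ, vecNorm2 v = 1 ∧ r = vecNorm2 (M *ᵥ v)}.Nonempty := by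
    refine ⟨_, Pi.single ⟨0, hn⟩ 1, ?_, rfl⟩
    rw [vecNorm2, Finset.sum_eq_single ⟨0, hn⟩ (fun i _ hi => by simp [hi]) (by simp)]
    simp
  obtain ⟨_, ⟨v, hv, rfl⟩, hx⟩ := exists_lt_of_csInf_lt hne h
  have hv0 : v ≠ 0 := by
    rintro rfl
    simp [vecNorm2] at hv
  have hx0 : 0 ≤ x := (Real.sqrt_nonneg _).trans hx.le
  refine ⟨Submodule.span ℂ {v}, (finrank_span_singleton hv0).ge, fun w hw i _ => ?_⟩
  obtain ⟨c, rfl⟩ := Submodule.mem_span_singleton.1 hw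
  calc ‖(M *ᵥ (c • v)) i‖ = ‖c‖ * ‖(M *ᵥ v) i‖ := by
        rw [mulVec_smul, Pi.smul_apply, norm_smul]
    _ ≤ ‖c‖ * (x * (n * ‖v‖)) := by
        gcongr
        calc ‖(M *ᵥ v) i‖ ≤ x := (norm_apply_le_vecNorm2 _ i).trans hx.le
          _ ≤ x * (n * ‖v‖) := le_mul_of_one_le_right hx0 (hv ▸ vecNorm2_le_mul_norm v)
    _ = n * x * ‖c • v‖ := by
        rw [norm_smul]
        ring

end LeastSingularValue

section AdmissibleScale

open Matrix

lemma one_add_pow_le_exp {r : ℝ} (hr : 0 ≤ r) (m : ℕ) : (1 + r) ^ m ≤ Real.exp (r * m) :=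
  calc (1 + r) ^ m ≤ Real.exp r ^ m := by
        gcongr
        linarith [Real.add_one_le_exp r]
    _ = Real.exp (r * m) := by rw [← Real.exp_nat_mul, mul_comm]

lemma two_pow_le_exp (m : ℕ) : (2 : ℝ) ^ m ≤ Real.exp m := by
  simpa [one_add_one_eq_two] using one_add_pow_le_exp zero_le_one m

lemma natCast_le_exp_of_lt_two_pow {n l : ℕ} (h : n < 2 ^ (l + 1)) :
    (n : ℝ) ≤ Real.exp (l + 1) :=
  calc (n : ℝ) ≤ 2 ^ (l + 1) := by exact_mod_cast h.le
    _ ≤ Real.exp ((l + 1 : ℕ) : ℝ) := two_pow_le_exp _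
    _ = Real.exp (l + 1) := by push_cast; rfl

lemma exp_neg_three_le : Real.exp (-3) ≤ 1 / 8 := by
  rw [Real.exp_neg, one_div]
  exact inv_anti₀ (by norm_num) (by simpa using (two_pow_le_exp 3).trans' (by norm_num))

lemma natCast_le_exp (m : ℕ) : (m : ℝ) ≤ Real.exp m := by
  linarith [Real.add_one_le_exp (m : ℝ)]

lemma factorial_le_exp_sq (m : ℕ) : (m.factorial : ℝ) ≤ Real.exp (m ^ 2) :=
  calc (m.factorial : ℝ) ≤ (m : ℝ) ^ m := by exact_mod_cast m.factorial_le_pow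
    _ ≤ Real.exp m ^ m := by
        gcongr
        exact natCast_le_exp m
    _ = Real.exp (m ^ 2) := by rw [← Real.exp_nat_mul, sq]

lemma natCast_lt_one_add_inv_pow {n l y : ℕ} (hy : 0 < y) (hn : n < 2 ^ l) :
    (n : ℝ) < (1 + 1 / (y : ℝ)) ^ (y * l) :=
  calc (n : ℝ) < 2 ^ l := by exact_mod_cast hn
    _ ≤ ((1 + 1 / (y : ℝ)) ^ y) ^ l := by
        gcongr
        have hinv : 0 ≤ 1 / (y : ℝ) := by positivity
        have hbernoulli := one_add_mul_le_pow (a := 1 / (y : ℝ)) (by linarith) y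
        rwa [mul_one_div_cancel (by positivity), one_add_one_eq_two] at hbernoulli
    _ = (1 + 1 / (y : ℝ)) ^ (y * l) := by rw [← pow_mul]

lemma blockInverseBound_le_exp {C r s : ℝ} (hr : 0 ≤ r) (hCs : C ≤ Real.exp s)
    (hrs : 1 + r ≤ Real.exp s) (m : ℕ) :
    blockInverseBound C r m ≤ Real.exp (s + m + m ^ 2 + s * m + m ^ 3) :=
  calc C * (m * (m.factorial * (1 + r) ^ m) * 2 ^ m ^ 3)
    _ ≤ Real.exp s * (Real.exp m * (Real.exp (m ^ 2) * Real.exp s ^ m) *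
          Real.exp ((m ^ 3 : ℕ) : ℝ)) := by
        gcongr
        · exact natCast_le_exp m
        · exact factorial_le_exp_sq m
        · exact two_pow_le_exp (m ^ 3)
    _ = Real.exp (s + m + m ^ 2 + s * m + m ^ 3) := by
        simp only [← Real.exp_nat_mul, ← Real.exp_add]
        push_cast
        ring_nf

/-- The scale `l` is about `log₂ n`, and large enough for `exp l` to dominate the constants attached
to the shift `z`. All the thresholds of the argument are then of the form `exp (± l ^ k)`. -/
structure IsAdmissibleScale (z : ℂ) (C : ℝ) (n l : ℕ) : Prop where
  hundred_le : 100 ≤ l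
  lt_two_pow : n < 2 ^ (l + 1)
  le_exp : C ≤ Real.exp l
  one_add_norm_le_exp : 1 + ‖z‖ ≤ Real.exp l
  exp_neg_le_norm : Real.exp (-l) ≤ ‖z‖
  exp_neg_le_norm_one_sub : Real.exp (-l) ≤ ‖1 - z‖

namespace IsAdmissibleScale

variable {z : ℂ} {C : ℝ} {n l : ℕ}

lemma hundred_mul_pow_le (h : IsAdmissibleScale z C n l) (j k : ℕ) (hjk : j < k := by norm_num) :
    100 * (l : ℝ) ^ j ≤ (l : ℝ) ^ k := by
  have hl : (100 : ℝ) ≤ l := by exact_mod_cast h.hundred_le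
  calc 100 * (l : ℝ) ^ j ≤ l * (l : ℝ) ^ j := by gcongr
    _ = (l : ℝ) ^ (j + 1) := (pow_succ' _ _).symm
    _ ≤ (l : ℝ) ^ k := pow_le_pow_right₀ (by linarith) hjk

lemma natCast_le_exp (h : IsAdmissibleScale z C n l) : (n : ℝ) ≤ Real.exp (l + 1) :=
  natCast_le_exp_of_lt_two_pow h.lt_two_pow

lemma smallBlocksInvertible (h : IsAdmissibleScale z C n l)
    (hblocks : SmallBlocksInvertible z (2 * l ^ 2) (blockInverseBound C ‖z‖ (2 * l ^ 2))) :
    SmallBlocksInvertible z (2 * l ^ 2) (Real.exp (l ^ 7)) := by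
  have hbound : blockInverseBound C ‖z‖ (2 * l ^ 2) ≤ Real.exp (l ^ 7) := by
    refine (blockInverseBound_le_exp (norm_nonneg z) h.le_exp h.one_add_norm_le_exp _).trans
      (Real.exp_le_exp.2 ?_)
    push_cast
    linarith [h.hundred_mul_pow_le 1 7, h.hundred_mul_pow_le 2 7, h.hundred_mul_pow_le 3 7,
      h.hundred_mul_pow_le 4 7, h.hundred_mul_pow_le 6 7]
  exact fun k hk B v => (hblocks k hk B v).trans (by gcongr)

lemma exp_neg_pow_le_growth (h : IsAdmissibleScale z C n l) :
    Real.exp (-l ^ 11) ≤ Real.exp (-l ^ 8) ^ (2 * l ^ 2) *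
      (Real.exp (-l) / (2 * (n + 1) * (1 + ‖z‖))) ^ (2 * l ^ 2 * (3 * l + 1) * (l + 1)) := by
  have hfactor : Real.exp (-(3 * l + 4)) ≤ Real.exp (-l) / (2 * (n + 1) * (1 + ‖z‖)) := by
    rw [le_div_iff₀ (by positivity)]
    have htwo : (2 : ℝ) ≤ Real.exp 1 := by linarith [Real.add_one_le_exp 1]
    have hn : (n : ℝ) + 1 ≤ Real.exp (l + 2) :=
      calc (n : ℝ) + 1 ≤ Real.exp (l + 1) + Real.exp (l + 1) :=
            add_le_add h.natCast_le_exp (Real.one_le_exp (by positivity))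
        _ ≤ Real.exp 1 * Real.exp (l + 1) := by nlinarith [Real.exp_pos (l + 1)]
        _ = Real.exp (l + 2) := by rw [← Real.exp_add]; ring_nf
    calc Real.exp (-(3 * l + 4)) * (2 * (n + 1) * (1 + ‖z‖))
      _ ≤ Real.exp (-(3 * l + 4)) * (Real.exp 1 * Real.exp (l + 2) * Real.exp l) := by
          gcongr
          exact h.one_add_norm_le_exp
      _ = Real.exp (-l - 1) := by simp only [← Real.exp_add]; ring_nf
      _ ≤ Real.exp (-l) := Real.exp_le_exp.2 (by linarith)
  calc Real.exp (-l ^ 11)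
    _ ≤ Real.exp (-l ^ 8) ^ (2 * l ^ 2) *
          Real.exp (-(3 * l + 4)) ^ (2 * l ^ 2 * (3 * l + 1) * (l + 1)) := by
        rw [← Real.exp_nat_mul, ← Real.exp_nat_mul, ← Real.exp_add, Real.exp_le_exp]
        push_cast
        ring_nf
        linarith [h.hundred_mul_pow_le 0 10, h.hundred_mul_pow_le 2 10, h.hundred_mul_pow_le 3 10,
          h.hundred_mul_pow_le 4 10, h.hundred_mul_pow_le 5 10, h.hundred_mul_pow_le 10 11]
    _ ≤ _ := by gcongr

lemma exp_mul_add_le (h : IsAdmissibleScale z C n l) :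
    Real.exp (l ^ 7) * (Real.exp (-l) / 2 * Real.exp (-l ^ 11) +
      n * ((1 + ‖z‖) * Real.exp (-l ^ 8))) ≤ 1 / 4 := by
  have hfst : Real.exp (-l) / 2 * Real.exp (-l ^ 11) ≤ Real.exp (-3 - l ^ 7) :=
    calc Real.exp (-l) / 2 * Real.exp (-l ^ 11)
      _ ≤ 1 * Real.exp (-l ^ 11) := by
          gcongr
          linarith [Real.exp_le_one_iff.2 (neg_nonpos.2 (Nat.cast_nonneg (α := ℝ) l))]
      _ ≤ Real.exp (-3 - l ^ 7) := by
          rw [one_mul, Real.exp_le_exp]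
          linarith [h.hundred_mul_pow_le 0 11, h.hundred_mul_pow_le 7 11]
  have hsnd : n * ((1 + ‖z‖) * Real.exp (-l ^ 8)) ≤ Real.exp (-3 - l ^ 7) :=
    calc n * ((1 + ‖z‖) * Real.exp (-l ^ 8))
      _ ≤ Real.exp (l + 1) * (Real.exp l * Real.exp (-l ^ 8)) := by
          gcongr
          exacts [h.natCast_le_exp, h.one_add_norm_le_exp]
      _ ≤ Real.exp (-3 - l ^ 7) := by
          rw [← Real.exp_add, ← Real.exp_add, Real.exp_le_exp]
          linarith [h.hundred_mul_pow_le 0 8, h.hundred_mul_pow_le 1 8, h.hundred_mul_pow_le 7 8]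
  calc _ ≤ Real.exp (l ^ 7) * (Real.exp (-3 - l ^ 7) + Real.exp (-3 - l ^ 7)) := by gcongr
    _ = 2 * Real.exp (-3) := by
        rw [Real.exp_sub]
        field_simp
        ring
    _ ≤ 1 / 4 := by linarith [exp_neg_three_le]

lemma exp_neg_pow_le_div_four (h : IsAdmissibleScale z C n l) :
    Real.exp (-l ^ 12) ≤ Real.exp (-l ^ 11) / 4 :=
  calc Real.exp (-l ^ 12) ≤ Real.exp (-l ^ 11 + -3) := by
        rw [Real.exp_le_exp]
        linarith [h.hundred_mul_pow_le 0 12, h.hundred_mul_pow_le 11 12]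
    _ ≤ Real.exp (-l ^ 11) / 4 := by
        rw [Real.exp_add]
        nlinarith [exp_neg_three_le, Real.exp_pos (-l ^ 11)]

lemma exp_neg_pow_le_sub (h : IsAdmissibleScale z C n l) :
    Real.exp (-l ^ 12) ≤ ‖z‖ * (1 / (4 * Real.exp (l ^ 7) * (1 + ‖z‖))) -
      n * Real.exp (-l ^ 8) := by
  set x := Real.exp (-(l ^ 7 + 2 * l)) with hx
  have hpeak : x / 4 ≤ ‖z‖ * (1 / (4 * Real.exp (l ^ 7) * (1 + ‖z‖))) :=
    calc x / 4 = Real.exp (-l) * (1 / (4 * Real.exp (l ^ 7) * Real.exp l)) := by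
          rw [hx, neg_add, two_mul, neg_add, Real.exp_add, Real.exp_add, Real.exp_neg, Real.exp_neg]
          field_simp
      _ ≤ _ := by
          gcongr
          exacts [h.exp_neg_le_norm, h.one_add_norm_le_exp]
  have htail : n * Real.exp (-l ^ 8) ≤ x * Real.exp (-3) :=
    calc n * Real.exp (-l ^ 8) ≤ Real.exp (l + 1) * Real.exp (-l ^ 8) := by
          gcongr
          exact h.natCast_le_exp
      _ ≤ x * Real.exp (-3) := by
          rw [← Real.exp_add, ← Real.exp_add, Real.exp_le_exp]
          linarith [h.hundred_mul_pow_le 0 8, h.hundred_mul_pow_le 1 8, h.hundred_mul_pow_le 7 8]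
  have hκ' : Real.exp (-l ^ 12) ≤ x * Real.exp (-3) := by
    rw [← Real.exp_add, Real.exp_le_exp]
    linarith [h.hundred_mul_pow_le 0 12, h.hundred_mul_pow_le 1 12, h.hundred_mul_pow_le 7 12]
  nlinarith [exp_neg_three_le, Real.exp_pos (-(l ^ 7 + 2 * l))]

lemma cube_mul_exp_neg_pow_le (h : IsAdmissibleScale z C n l) :
    8 * n ^ 3 * (1 + ‖z‖) * Real.exp (-l ^ 13) ≤ Real.exp (-l ^ 11) * Real.exp (-l ^ 12) :=
  calc 8 * n ^ 3 * (1 + ‖z‖) * Real.exp (-l ^ 13)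
    _ ≤ Real.exp 3 * Real.exp (l + 1) ^ 3 * Real.exp l * Real.exp (-l ^ 13) := by
        gcongr
        · simpa using (two_pow_le_exp 3).trans' (by norm_num)
        · exact h.natCast_le_exp
        · exact h.one_add_norm_le_exp
    _ ≤ Real.exp (-l ^ 11) * Real.exp (-l ^ 12) := by
        simp only [← Real.exp_nat_mul, ← Real.exp_add, Real.exp_le_exp]
        push_cast
        linarith [h.hundred_mul_pow_le 0 13, h.hundred_mul_pow_le 1 13,
          h.hundred_mul_pow_le 11 13, h.hundred_mul_pow_le 12 13]

end IsAdmissibleScale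

/-- The likely properties of a realization `a`, at the scale `l`, under which the rows of
`shiftedMatrix a z` can be resampled: expansion and degree bounds for `a` and its transpose, and
nondegeneracy of `shiftedMatrix a z`. -/
structure IsTypical {ι : Type*} [Fintype ι] [DecidableEq ι] (z : ℂ) (l : ℕ) (δ σ : ℝ)
    (a : ι → ι → Bool) : Prop where
  expander : IsUniqueNeighborExpander a (2 * l ^ 2) (l ^ 2) δ
  expander_transpose : IsUniqueNeighborExpander (fun i j => a j i) (2 * l ^ 2) (l ^ 2) δ
  columnDegreeLE : ColumnDegreeLE a (3 * l)
  columnDegreeLE_transpose : ColumnDegreeLE (fun i j => a j i) (3 * l)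
  det_ne_zero : (shiftedMatrix a z).det ≠ 0
  not_hasApproxNullity : ¬HasApproxNullity (shiftedMatrix a z) Set.univ σ (l ^ 2)

section Robust

variable {ι : Type*} [Fintype ι] [DecidableEq ι] {z : ℂ} {C δ : ℝ} {l : ℕ} {a : ι → ι → Bool}

lemma IsAdmissibleScale.isDelocalized_shiftedMatrix (h : IsAdmissibleScale z C (Fintype.card ι) l)
    (hblocks : SmallBlocksInvertible z (2 * l ^ 2) (blockInverseBound C ‖z‖ (2 * l ^ 2)))
    (hexp : IsUniqueNeighborExpander a (2 * l ^ 2) (l ^ 2) δ) (hdeg : ColumnDegreeLE a (3 * l)) :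
    IsDelocalized (shiftedMatrix a z) (2 * l ^ 2) δ (Real.exp (-l ^ 11))
      (Real.exp (-l) / 2 * Real.exp (-l ^ 11)) (1 / (4 * Real.exp (l ^ 7) * (1 + ‖z‖)))
      (Real.exp (-l ^ 8)) := by
  have hl : 0 < l := h.hundred_le.trans_lt' (by norm_num)
  have hβ : Real.exp (-l ^ 8) ≤ 1 / 2 :=
    (Real.exp_le_exp.2 (by linarith [h.hundred_mul_pow_le 0 8])).trans
      (exp_neg_three_le.trans (by norm_num))
  exact _root_.isDelocalized_shiftedMatrix (Real.exp_pos _)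
    (Real.exp_le_one_iff.2 (neg_nonpos.2 l.cast_nonneg)) h.exp_neg_le_norm
    h.exp_neg_le_norm_one_sub (h.smallBlocksInvertible hblocks) (Real.one_le_exp (by positivity))
    hexp hdeg le_rfl (Nat.one_le_pow _ _ hl)
    (natCast_lt_one_add_inv_pow (by positivity) h.lt_two_pow) (Real.exp_pos _) hβ
    (Real.exp_pos _).le h.exp_neg_pow_le_growth h.exp_mul_add_le

lemma IsTypical.isRobust {p ε σ : ℝ} (ha : IsTypical z l δ σ a)
    (h : IsAdmissibleScale z C (Fintype.card ι) l)
    (hblocks : SmallBlocksInvertible z (2 * l ^ 2) (blockInverseBound C ‖z‖ (2 * l ^ 2)))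
    (h0 : 0 ≤ p) (h1 : p ≤ 1) (hσ : σ ≤ Real.exp (-l)) (hε : 0 ≤ ε)
    (hbin : ∀ n k : ℕ, δ * Fintype.card ι / 4 ≤ n → k ≤ n → binomialMass p n k ≤ ε) :
    IsRobust (productWeight (bernoulliWeight p)) z (l ^ 2) (Real.exp (-l ^ 11))
      (Real.exp (-l ^ 12)) δ (ε + (2 * l ^ 2 : ℕ) * p) σ a := by
  have hdeloc' := h.isDelocalized_shiftedMatrix hblocks ha.expander_transpose
    ha.columnDegreeLE_transpose
  rw [← shiftedMatrix_transpose] at hdeloc'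
  refine isRobust_of_isDelocalized h0 h1 (Real.exp_pos _).le hε (by positivity) ?_
    h.exp_neg_pow_le_div_four h.exp_neg_pow_le_sub hbin ha.det_ne_zero ha.not_hasApproxNullity
    (h.isDelocalized_shiftedMatrix hblocks ha.expander ha.columnDegreeLE) hdeloc'
  nlinarith [Real.exp_pos (-l ^ 11)]

end Robust

end AdmissibleScale

section LogarithmicScale

open Filter Topology

lemma lt_two_pow_natLog_add_one (n : ℕ) : n < 2 ^ (Nat.log 2 n + 1) :=
  Nat.lt_pow_succ_log_self one_lt_two n

lemma tendsto_natLog_two_atTop : Tendsto (Nat.log 2) atTop atTop :=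
  tendsto_atTop.2 fun b => (eventually_ge_atTop (2 ^ b)).mono fun _ hn =>
    Nat.le_log_of_pow_le one_lt_two hn

lemma tendsto_natCast_natLog_two_atTop : Tendsto (fun n => (Nat.log 2 n : ℝ)) atTop atTop :=
  tendsto_natCast_atTop_atTop.comp tendsto_natLog_two_atTop

lemma tendsto_natLog_two_pow_div (k : ℕ) :
    Tendsto (fun n : ℕ => (Nat.log 2 n : ℝ) ^ k / n) atTop (𝓝 0) := by
  have hpow := (tendsto_pow_const_div_const_pow_of_one_lt k (one_lt_two (α := ℝ))).comp
    tendsto_natLog_two_atTop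
  refine squeeze_zero' (Eventually.of_forall fun n => by positivity) ?_ hpow
  filter_upwards [eventually_ne_atTop 0] with n hn
  have hlog : (2 : ℝ) ^ Nat.log 2 n ≤ n := by exact_mod_cast Nat.pow_log_le_self 2 hn
  simp only [Function.comp_apply]
  gcongr

lemma tendsto_add_div_natLog_two_sq (c : ℝ) :
    Tendsto (fun n : ℕ => (Nat.log 2 n + c) / (Nat.log 2 n : ℝ) ^ 2) atTop (𝓝 0) := by
  have hinv := tendsto_inv_atTop_zero.comp tendsto_natCast_natLog_two_atTop
  have hsum := hinv.add ((hinv.pow 2).const_mul c)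
  simp only [zero_pow two_ne_zero, mul_zero, add_zero] at hsum
  refine hsum.congr' ?_
  filter_upwards [tendsto_natLog_two_atTop.eventually_ne_atTop 0] with n hn
  simp only [Function.comp_apply]
  field_simp

lemma tendsto_div_rpow_inv_natLog_two_sq {δ : ℝ} (hδ : 0 < δ) :
    Tendsto (fun n : ℕ => ((n : ℝ) / δ) ^ ((Nat.log 2 n ^ 2 : ℕ) : ℝ)⁻¹) atTop (𝓝 1) := by
  have hexp := (Real.continuous_exp.tendsto 0).comp (tendsto_add_div_natLog_two_sq (1 - Real.log δ))
  rw [Real.exp_zero] at hexp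
  refine tendsto_of_tendsto_of_tendsto_of_le_of_le' tendsto_const_nhds hexp ?_ ?_
  · filter_upwards [eventually_ge_atTop ⌈δ⌉₊] with n hn
    exact Real.one_le_rpow ((one_le_div hδ).2 (Nat.ceil_le.1 hn)) (by positivity)
  · filter_upwards [eventually_gt_atTop 0] with n hn
    have hn0 : (0 : ℝ) < n := Nat.cast_pos.2 hn
    rw [Real.rpow_def_of_pos (by positivity), ← div_eq_mul_inv, Real.log_div hn0.ne' hδ.ne',
      Nat.cast_pow]
    refine Real.exp_le_exp.2 (div_le_div_of_nonneg_right ?_ (by positivity))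
    have hlog := (Real.log_le_iff_le_exp hn0).2
      (natCast_le_exp_of_lt_two_pow (lt_two_pow_natLog_add_one n))
    linarith

end LogarithmicScale

section TypicalProbability

open Filter Topology

lemma exists_pos_add_mul_exp_lt_one {d : ℝ} (hd : d ≠ 1) : ∃ δ : ℝ, 0 < δ ∧ δ ≤ 1 ∧
    (δ + d) * Real.exp (1 - d + d * (2 + d) * δ) < 1 := by
  have hcont : Continuous fun δ : ℝ => (δ + d) * Real.exp (1 - d + d * (2 + d) * δ) := by
    fun_prop
  have hzero : (0 + d) * Real.exp (1 - d + d * (2 + d) * 0) < 1 := by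
    have hexp := Real.add_one_lt_exp (sub_ne_zero.2 hd)
    rw [sub_add_cancel, ← neg_sub 1 d, Real.exp_neg, ← one_div,
      lt_div_iff₀ (Real.exp_pos _)] at hexp
    rwa [mul_zero, add_zero, zero_add]
  obtain ⟨δ, hδ, hlt⟩ := ((eventually_mem_set.2 (Ioc_mem_nhdsGT (zero_lt_one (α := ℝ)))).and
    (((hcont.tendsto 0).eventually_lt_const hzero).filter_mono nhdsWithin_le_nhds)).exists
  exact ⟨δ, hδ.1, hδ.2, hlt⟩

lemma not_hasApproxNullity_of_le_norm_det {n l k : ℕ} {z : ℂ} {s : ℝ} {a : Fin n → Fin n → Bool}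
    (hn0 : 0 < n) (hn : n < 2 ^ (l + 1)) (hs : 3 * (l + 1) + ‖z‖ < s * k)
    (hdet : (1 / (n : ℝ) ^ 2) ^ n ≤ ‖(shiftedMatrix a z).det‖) :
    ¬HasApproxNullity (shiftedMatrix a z) Set.univ (Real.exp (-(s * n))) k := by
  intro h
  have hne := natCast_le_exp_of_lt_two_pow hn
  have hfact : (n.factorial : ℝ) ≤ Real.exp (l + 1) ^ n :=
    calc (n.factorial : ℝ) ≤ (n : ℝ) ^ n := by exact_mod_cast n.factorial_le_pow
      _ ≤ Real.exp (l + 1) ^ n := by gcongr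
  have hentries : (1 + ‖z‖) ^ (n - k) ≤ Real.exp (‖z‖ * n) :=
    (pow_le_pow_right₀ (le_add_of_nonneg_right (norm_nonneg z)) (n.sub_le k)).trans
      (one_add_pow_le_exp (norm_nonneg z) n)
  refine hdet.not_gt ?_
  calc ‖(shiftedMatrix a z).det‖
    _ ≤ n.factorial * (Real.exp (-(s * n)) ^ k * (1 + ‖z‖) ^ (n - k)) := by
        simpa using h.norm_det_le (norm_shiftedMatrix_apply_le a z)
    _ ≤ Real.exp (l + 1) ^ n * (Real.exp (-(s * n)) ^ k * Real.exp (‖z‖ * n)) := by gcongr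
    _ < (1 / Real.exp (l + 1) ^ 2) ^ n := by
        rw [one_div, ← Real.exp_nat_mul, ← Real.exp_nat_mul, ← Real.exp_nat_mul, ← Real.exp_neg,
          ← Real.exp_nat_mul, ← Real.exp_add, ← Real.exp_add, Real.exp_lt_exp]
        push_cast
        nlinarith [mul_lt_mul_of_pos_right hs (Nat.cast_pos (α := ℝ).2 hn0)]
    _ ≤ (1 / (n : ℝ) ^ 2) ^ n := by gcongr

lemma probability_not_isTypical_le {n l : ℕ} {d δ ρ s : ℝ} {z : ℂ} (hd : 0 < d) (hn : d ≤ n)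
    (hδ : 0 < δ) (hδ1 : δ ≤ 1) (hl : 0 < l) (hnl : n < 2 ^ (l + 1)) (hρ1 : ρ < 1)
    (hρ : (δ + d) * Real.exp (1 - d + d * (2 + d) * δ) * (n / δ) ^ ((l ^ 2 : ℕ) : ℝ)⁻¹ ≤ ρ)
    (hs : 3 * (l + 1) + ‖z‖ < s * (l ^ 2 : ℕ)) :
    probability (productWeight (productWeight (bernoulliWeight (d / n))))
        (fun a : Fin n → Fin n → Bool => ¬IsTypical z l δ (Real.exp (-(s * n))) a) ≤
      2 * (ρ ^ (2 * l ^ 2) / (1 - ρ)) + 2 * (n * (Real.exp d / 2 ^ (3 * l))) +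
        probability (productWeight (productWeight (bernoulliWeight (d / n))))
          (fun a : Fin n → Fin n → Bool => ‖(shiftedMatrix a z).det‖ < (1 / (n : ℝ) ^ 2) ^ n) := by
  have hn0 : (0 : ℝ) < n := hd.trans_le hn
  have h0 : 0 ≤ d / n := by positivity
  have h1 : d / n ≤ 1 := (div_le_one hn0).2 hn
  have hw : IsProbWeight (productWeight (ι := Fin n) (productWeight (ι := Fin n)
      (bernoulliWeight (d / n)))) :=
    (isProbWeight_bernoulliWeight h0 h1).productWeight.productWeight
  have hl2 : 1 ≤ l ^ 2 := Nat.one_le_pow _ _ hl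
  have hexp := probability_not_isUniqueNeighborExpander_le (ι := Fin n) (K := l ^ 2)
    (m := 2 * l ^ 2) hd (by simpa using hn) hδ hδ1 hl2 (by omega) hρ1
    (by simpa using hρ)
  have hdeg := probability_not_columnDegreeLE_le (ι := Fin n) h0 h1 (3 * l)
  simp only [Fintype.card_fin, div_mul_cancel₀ d hn0.ne'] at hexp hdeg
  have hexp' := (probability_transpose _ _).trans_le hexp
  have hdeg' := (probability_transpose _ _).trans_le hdeg
  refine (hw.probability_mono (E' := fun a =>
    ((¬IsUniqueNeighborExpander a (2 * l ^ 2) (l ^ 2) δ ∨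
        ¬IsUniqueNeighborExpander (fun i j => a j i) (2 * l ^ 2) (l ^ 2) δ) ∨
      (¬ColumnDegreeLE a (3 * l) ∨ ¬ColumnDegreeLE (fun i j => a j i) (3 * l))) ∨
      ‖(shiftedMatrix a z).det‖ < (1 / (n : ℝ) ^ 2) ^ n) fun a ha => ?_).trans ?_
  · by_contra! hcon
    obtain ⟨⟨⟨hE, hE'⟩, hD, hD'⟩, hdet⟩ := hcon
    have hdet0 : 0 < ‖(shiftedMatrix a z).det‖ := hdet.trans_lt' (by positivity)
    exact ha ⟨hE, hE', hD, hD', norm_pos_iff.1 hdet0,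
      not_hasApproxNullity_of_le_norm_det (Nat.cast_pos.1 hn0) hnl hs hdet⟩
  · rw [two_mul (ρ ^ (2 * l ^ 2) / (1 - ρ)), two_mul (n * (Real.exp d / 2 ^ (3 * l)))]
    exact (hw.probability_or_le _ _).trans (add_le_add_left ((hw.probability_or_le _ _).trans
      (add_le_add ((hw.probability_or_le _ _).trans (add_le_add hexp hexp'))
        ((hw.probability_or_le _ _).trans (add_le_add hdeg hdeg')))) _)

lemma tendsto_natCast_mul_div_two_pow_natLog {c : ℝ} (hc : 0 ≤ c) :
    Tendsto (fun n : ℕ => (n : ℝ) * (c / 2 ^ (3 * Nat.log 2 n))) atTop (𝓝 0) := by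
  refine squeeze_zero' (Eventually.of_forall fun n => by positivity) ?_
    (tendsto_const_div_atTop_nhds_zero_nat c)
  filter_upwards [eventually_gt_atTop 0, tendsto_natLog_two_atTop.eventually_ge_atTop 2]
    with n hn hl
  have hpow : (n : ℝ) ^ 2 ≤ 2 ^ (3 * Nat.log 2 n) :=
    calc (n : ℝ) ^ 2 ≤ (2 ^ (Nat.log 2 n + 1)) ^ 2 := by
          gcongr
          exact_mod_cast (lt_two_pow_natLog_add_one n).le
      _ ≤ 2 ^ (3 * Nat.log 2 n) := by
          rw [← pow_mul]
          exact pow_le_pow_right₀ one_le_two (by omega)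
  calc (n : ℝ) * (c / 2 ^ (3 * Nat.log 2 n)) ≤ n * (c / (n : ℝ) ^ 2) := by gcongr
    _ = c / n := by field_simp

lemma eventually_natLog_lt_mul_sq {s : ℝ} (hs : 0 < s) (c : ℝ) :
    ∀ᶠ n : ℕ in atTop, 3 * (Nat.log 2 n + 1) + c < s * (Nat.log 2 n ^ 2 : ℕ) := by
  filter_upwards [(tendsto_add_div_natLog_two_sq (1 + c / 3)).eventually_lt_const
    (show 0 < s / 3 by positivity), tendsto_natLog_two_atTop.eventually_gt_atTop 0] with n hn hl
  rw [div_lt_iff₀ (by positivity)] at hn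
  push_cast
  linarith

lemma tendsto_probability_not_isTypical {d δ s : ℝ} {z : ℂ} (hd : 0 < d) (hs : 0 < s)
    (hδ : 0 < δ) (hδ1 : δ ≤ 1) (hlt : (δ + d) * Real.exp (1 - d + d * (2 + d) * δ) < 1)
    (hdet : Tendsto (fun n : ℕ => probability
      (productWeight (productWeight (bernoulliWeight (d / n))))
      fun a : Fin n → Fin n → Bool => ‖(shiftedMatrix a z).det‖ < (1 / (n : ℝ) ^ 2) ^ n)
      atTop (𝓝 0)) :
    Tendsto (fun n : ℕ => probability (productWeight (productWeight (bernoulliWeight (d / n))))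
      fun a : Fin n → Fin n → Bool => ¬IsTypical z (Nat.log 2 n) δ (Real.exp (-(s * n))) a)
      atTop (𝓝 0) := by
  have hbase := (tendsto_div_rpow_inv_natLog_two_sq hδ).const_mul
    ((δ + d) * Real.exp (1 - d + d * (2 + d) * δ))
  rw [mul_one] at hbase
  obtain ⟨ρ, hρ, hρ1⟩ := exists_between hlt
  have hρ0 : 0 ≤ ρ := hρ.le.trans' (by positivity)
  have hexp : Tendsto (fun n => ρ ^ (2 * Nat.log 2 n ^ 2) / (1 - ρ)) atTop (𝓝 (0 / (1 - ρ))) :=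
    ((tendsto_pow_atTop_nhds_zero_of_lt_one hρ0 hρ1).comp
      (((tendsto_pow_atTop two_ne_zero).comp tendsto_natLog_two_atTop).const_mul_atTop'
        two_pos)).div_const _
  have hsum := ((hexp.const_mul 2).add ((tendsto_natCast_mul_div_two_pow_natLog
    (Real.exp_pos d).le).const_mul 2)).add hdet
  simp only [zero_div, mul_zero, add_zero] at hsum
  refine squeeze_zero' ?_ ?_ hsum
  · filter_upwards [eventually_ge_atTop ⌈d⌉₊] with n hn
    have hdn : d ≤ n := Nat.ceil_le.1 hn
    exact (isProbWeight_bernoulliWeight (by positivity) (div_le_one_of_le₀ hdn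
      n.cast_nonneg)).productWeight.productWeight.probability_nonneg _
  · filter_upwards [eventually_ge_atTop ⌈d⌉₊, hbase.eventually_le_const hρ,
      eventually_natLog_lt_mul_sq hs ‖z‖, tendsto_natLog_two_atTop.eventually_gt_atTop 0]
      with n hn hnρ hns hl
    exact probability_not_isTypical_le hd (Nat.ceil_le.1 hn) hδ hδ1 hl
      (lt_two_pow_natLog_add_one n) hρ1 hnρ hns

end TypicalProbability

section SmallNullity

open Filter Topology

lemma densityMoment_productWeight_bernoulliWeight_le {ι : Type*} [Fintype ι] [DecidableEq ι]
    {p P : ℝ} (h0 : 0 < p) (h1 : p ≤ 1 / 2) :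
    densityMoment (productWeight (bernoulliWeight P) : (ι → Bool) → ℝ)
      (productWeight (bernoulliWeight p)) ≤
      Real.exp (2 * (P - p) ^ 2 / p * Fintype.card ι) := by
  rw [densityMoment_productWeight, densityMoment_bernoulliWeight h0 (by linarith)]
  have hp : 0 < p * (1 - p) := mul_pos h0 (by linarith)
  refine (one_add_pow_le_exp (by positivity) _).trans (Real.exp_le_exp.2 ?_)
  gcongr ?_ * _
  rw [div_le_div_iff₀ hp h0]
  have hhalf : p ≤ 2 * (p * (1 - p)) := by nlinarith
  nlinarith [mul_le_mul_of_nonneg_left hhalf (sq_nonneg (P - p))]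

lemma binomialMass_le_two_div {p s : ℝ} {m k : ℕ} (h0 : 0 < p) (h1 : p ≤ 1 / 2) (hk : k ≤ m)
    (hs : 0 < s) (hsm : 2 * s ^ 2 ≤ m * p) : binomialMass p m k ≤ 2 / s := by
  have hvar : s ^ 2 ≤ (m + 1 : ℕ) * p * (1 - p) := by
    push_cast
    nlinarith
  calc binomialMass p m k
    _ ≤ s / ((m + 1 : ℕ) * p * (1 - p)) + 1 / s := binomialMass_le h0 (by linarith) hk hs
    _ ≤ s / s ^ 2 + 1 / s := by gcongr
    _ = 2 / s := by
        field_simp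
        norm_num

lemma IsAdmissibleScale.mul_probability_hasApproxNullity_le {n l : ℕ} {C p P δ ε σ : ℝ} {z : ℂ}
    (h : IsAdmissibleScale z C n l)
    (hblocks : SmallBlocksInvertible z (2 * l ^ 2) (blockInverseBound C ‖z‖ (2 * l ^ 2)))
    (hn : 0 < n) (hp0 : 0 < p) (hp1 : p < 1) (hP0 : 0 ≤ P) (hP1 : P ≤ 1) (hδ : 0 ≤ δ) (hδ1 : δ ≤ 1)
    (hε : 0 ≤ ε) (hbin : ∀ m k : ℕ, δ * n / 4 ≤ m → k ≤ m → binomialMass P m k ≤ ε)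
    (hσ0 : 0 ≤ σ) (hσ : σ ≤ Real.exp (-l)) :
    δ * probability (productWeight (productWeight (bernoulliWeight p)))
        (fun a : Fin n → Fin n → Bool => HasApproxNullity (shiftedMatrix a z) Set.univ
          (Real.exp (-l ^ 13) ^ l ^ 3 * σ) 1) ≤
      (l : ℝ)⁻¹ + (ε + 2 * l ^ 2 * P) +
        2 * probability (productWeight (productWeight (bernoulliWeight p)))
          (fun a : Fin n → Fin n → Bool => ¬IsTypical z l δ σ a) +
        ((l : ℝ)⁻¹ + densityMoment (productWeight (ι := Fin n) (bernoulliWeight P))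
          (productWeight (bernoulliWeight p)) * (l ^ 5 / n)) := by
  have hl : 0 < l := h.hundred_le.trans_lt' (by norm_num)
  have hw := isProbWeight_bernoulliWeight hp0.le hp1.le
  have hmain := _root_.mul_probability_hasApproxNullity_le (ι := Fin n) (z := z) (y := l ^ 2)
    (v := productWeight (bernoulliWeight P)) (w := productWeight (bernoulliWeight p))
    (L := l ^ 3) (s := ((l : ℝ) ^ 3)⁻¹) (ε := ε + (2 * l ^ 2 : ℕ) * P)
    (κ := Real.exp (-l ^ 11)) (κ' := Real.exp (-l ^ 12)) (τ := Real.exp (-l ^ 13)) (σ := σ)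
    hw.productWeight (productWeight_pos (bernoulliWeight_pos hp0 hp1))
    (isProbWeight_bernoulliWeight hP0 hP1).productWeight (by simpa using hn) (by positivity) hδ hδ1
    (by positivity)
    (by positivity) (Real.exp_pos _) (Real.exp_le_one_iff.2 (by simp)) (Real.exp_pos _)
    (Real.exp_le_one_iff.2 (by simp)) (Real.exp_pos _).le
    (by simpa using h.cube_mul_exp_neg_pow_le) hσ0
    (hσ.trans (Real.exp_le_one_iff.2 (by simp)))
  have hrobust (a : Fin n → Fin n → Bool) (hnot : ¬IsRobust (productWeight (bernoulliWeight P)) z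
      (l ^ 2) (Real.exp (-l ^ 11)) (Real.exp (-l ^ 12)) δ (ε + (2 * l ^ 2 : ℕ) * P) σ a) :
      ¬IsTypical z l δ σ a := fun htyp =>
    hnot (htyp.isRobust (by simpa using h) hblocks hP0 hP1 hσ hε (by simpa using hbin))
  have hfst : ((l ^ 2 : ℕ) : ℝ) / (l ^ 3 : ℕ) = (l : ℝ)⁻¹ := by
    push_cast
    field_simp
  have hlast (v : ℝ) : ((l ^ 2 : ℕ) : ℝ) * (((l : ℝ) ^ 3)⁻¹ + v / (n * ((l : ℝ) ^ 3)⁻¹)) =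
      (l : ℝ)⁻¹ + v * (l ^ 5 / n) := by
    push_cast
    field_simp
  rw [Fintype.card_fin, hfst, hlast] at hmain
  push_cast at hmain hrobust
  linarith [hw.productWeight.productWeight.probability_mono hrobust]

lemma mul_probability_hasApproxNullity_exp_le {n l : ℕ} {C d D δ s σ : ℝ} {z : ℂ}
    (h : IsAdmissibleScale z C n l)
    (hblocks : SmallBlocksInvertible z (2 * l ^ 2) (blockInverseBound C ‖z‖ (2 * l ^ 2)))
    (hd : 0 < d) (hdn : 2 * d ≤ n) (hD : 0 < D) (hDn : 2 * D ≤ n) (hδ : 0 ≤ δ) (hδ1 : δ ≤ 1)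
    (hs : 0 < s) (hsD : 8 * s ^ 2 ≤ δ * D) (hσ0 : 0 ≤ σ) (hσ : σ ≤ Real.exp (-l)) :
    δ * probability (productWeight (productWeight (bernoulliWeight (d / n))))
        (fun a : Fin n → Fin n → Bool => HasApproxNullity (shiftedMatrix a z) Set.univ
          (Real.exp (-l ^ 13) ^ l ^ 3 * σ) 1) ≤
      (l : ℝ)⁻¹ + (2 / s + 2 * D * (l ^ 2 / n)) +
        2 * probability (productWeight (productWeight (bernoulliWeight (d / n))))
          (fun a : Fin n → Fin n → Bool => ¬IsTypical z l δ σ a) +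
        ((l : ℝ)⁻¹ + Real.exp (2 * (D - d) ^ 2 / d) * (l ^ 5 / n)) := by
  have hn : (0 : ℝ) < n := by linarith
  have hp0 : 0 < d / n := by positivity
  have hP0 : 0 < D / n := by positivity
  have hp1 : d / n ≤ 1 / 2 := by
    rw [div_le_iff₀ hn]
    linarith
  have hP1 : D / n ≤ 1 / 2 := by
    rw [div_le_iff₀ hn]
    linarith
  have hbin (m k : ℕ) (hm : δ * n / 4 ≤ m) (hk : k ≤ m) : binomialMass (D / n) m k ≤ 2 / s := by
    refine binomialMass_le_two_div hP0 hP1 hk hs ?_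
    calc 2 * s ^ 2 ≤ δ * n / 4 * (D / n) := by
          field_simp
          linarith
      _ ≤ m * (D / n) := by gcongr
  refine (h.mul_probability_hasApproxNullity_le hblocks (Nat.cast_pos.1 hn) hp0
    (by linarith) hP0.le (by linarith) hδ hδ1 (by positivity) hbin hσ0 hσ).trans ?_
  have hmoment : densityMoment (productWeight (ι := Fin n) (bernoulliWeight (D / n)))
      (productWeight (bernoulliWeight (d / n))) ≤ Real.exp (2 * (D - d) ^ 2 / d) := by
    refine (densityMoment_productWeight_bernoulliWeight_le hp0 hp1).trans_eq ?_
    rw [Fintype.card_fin, ← sub_div]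
    field_simp
  rw [show 2 * (l : ℝ) ^ 2 * (D / n) = 2 * D * (l ^ 2 / n) by ring]
  gcongr

lemma eventually_isAdmissibleScale {z : ℂ} (hz0 : z ≠ 0) (hz1 : z ≠ 1) (C : ℝ) :
    ∀ᶠ n in atTop, IsAdmissibleScale z C n (Nat.log 2 n) := by
  have hexp := Real.tendsto_exp_atTop.comp tendsto_natCast_natLog_two_atTop
  have hexp_neg := Real.tendsto_exp_neg_atTop_nhds_zero.comp tendsto_natCast_natLog_two_atTop
  filter_upwards [tendsto_natLog_two_atTop.eventually_ge_atTop 100, hexp.eventually_ge_atTop C,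
    hexp.eventually_ge_atTop (1 + ‖z‖), hexp_neg.eventually_le_const (norm_pos_iff.2 hz0),
    hexp_neg.eventually_le_const (norm_pos_iff.2 (sub_ne_zero.2 hz1.symm))] with n h1 h2 h3 h4 h5
  exact ⟨h1, lt_two_pow_natLog_add_one n, h2, h3, h4, h5⟩

lemma eventually_natLog_pow_lt {ε : ℝ} (hε : 0 < ε) :
    ∀ᶠ n : ℕ in atTop, (Nat.log 2 n : ℝ) ^ 16 + Nat.log 2 n + 2 < ε * n := by
  have hsum := ((tendsto_natLog_two_pow_div 16).add (tendsto_natLog_two_pow_div 1)).add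
    (tendsto_const_div_atTop_nhds_zero_nat 2)
  simp only [add_zero, pow_one, ← add_div] at hsum
  filter_upwards [hsum.eventually_lt_const hε, eventually_gt_atTop 0] with n hn hn0
  rwa [div_lt_iff₀ (Nat.cast_pos.2 hn0)] at hn

lemma natCast_mul_exp_neg_le {n l : ℕ} {ε : ℝ} (hnl : n < 2 ^ (l + 1))
    (hl : (l : ℝ) ^ 16 + l + 2 ≤ ε / 2 * n) :
    n * (2 * Real.exp (-(ε * n))) ≤ Real.exp (-l ^ 13) ^ l ^ 3 * Real.exp (-(ε / 2 * n)) :=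
  calc n * (2 * Real.exp (-(ε * n)))
    _ ≤ Real.exp (l + 1) * (Real.exp 1 * Real.exp (-(ε * n))) := by
        gcongr
        · exact natCast_le_exp_of_lt_two_pow hnl
        · linarith [Real.add_one_le_exp 1]
    _ ≤ Real.exp (-l ^ 13) ^ l ^ 3 * Real.exp (-(ε / 2 * n)) := by
        rw [← Real.exp_nat_mul, ← Real.exp_add, ← Real.exp_add, ← Real.exp_add, Real.exp_le_exp]
        push_cast
        linarith [show (l : ℝ) ^ 3 * -l ^ 13 = -l ^ 16 by ring]

lemma eventually_mul_probability_hasApproxNullity_le {d δ D s ε C : ℝ} {z : ℂ} (hd : 0 < d)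
    (hδ : 0 ≤ δ) (hδ1 : δ ≤ 1) (hD : 0 < D) (hs : 0 < s) (hsD : 8 * s ^ 2 ≤ δ * D) (hε : 0 < ε)
    (hz0 : z ≠ 0) (hz1 : z ≠ 1)
    (hblocks : ∀ m, SmallBlocksInvertible z m (blockInverseBound C ‖z‖ m)) :
    ∀ᶠ n : ℕ in atTop,
      δ * probability (productWeight (productWeight (bernoulliWeight (d / n))))
        (fun a : Fin n → Fin n → Bool => HasApproxNullity (shiftedMatrix a z) Set.univ
          (n * (2 * Real.exp (-(ε * n)))) 1) ≤
      (Nat.log 2 n : ℝ)⁻¹ + (2 / s + 2 * D * (Nat.log 2 n ^ 2 / n)) +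
        2 * probability (productWeight (productWeight (bernoulliWeight (d / n))))
          (fun a : Fin n → Fin n → Bool =>
            ¬IsTypical z (Nat.log 2 n) δ (Real.exp (-(ε / 2 * n))) a) +
        ((Nat.log 2 n : ℝ)⁻¹ + Real.exp (2 * (D - d) ^ 2 / d) * (Nat.log 2 n ^ 5 / n)) := by
  have hlarge (c : ℝ) : ∀ᶠ n : ℕ in atTop, c ≤ n :=
    tendsto_natCast_atTop_atTop.eventually_ge_atTop c
  filter_upwards [eventually_isAdmissibleScale hz0 hz1 C, eventually_natLog_pow_lt (half_pos hε),
    hlarge (2 * d), hlarge (2 * D)] with n hscale hlog hnd hnD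
  have hσ : Real.exp (-(ε / 2 * n)) ≤ Real.exp (-Nat.log 2 n) :=
    Real.exp_le_exp.2 (by linarith [pow_nonneg (Nat.cast_nonneg (α := ℝ) (Nat.log 2 n)) 16])
  have hw := isProbWeight_bernoulliWeight (p := d / n) (by positivity)
    (div_le_one_of_le₀ (by linarith) n.cast_nonneg)
  have hmono (a : Fin n → Fin n → Bool)
      (ha : HasApproxNullity (shiftedMatrix a z) Set.univ (n * (2 * Real.exp (-(ε * n)))) 1) :=
    ha.mono le_rfl (natCast_mul_exp_neg_le hscale.lt_two_pow hlog.le) le_rfl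
  exact (mul_le_mul_of_nonneg_left (hw.productWeight.productWeight.probability_mono hmono)
    hδ).trans (mul_probability_hasApproxNullity_exp_le hscale (hblocks _) hd hnd hD hnD hδ hδ1
      hs hsD (Real.exp_pos _).le hσ)

lemma tendsto_probability_hasApproxNullity {d ε C : ℝ} {z : ℂ} (hd : 0 < d) (hd1 : d ≠ 1)
    (hε : 0 < ε) (hz0 : z ≠ 0) (hz1 : z ≠ 1)
    (hblocks : ∀ m, SmallBlocksInvertible z m (blockInverseBound C ‖z‖ m))
    (hdet : Tendsto (fun n : ℕ => probability
      (productWeight (productWeight (bernoulliWeight (d / n))))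
      fun a : Fin n → Fin n → Bool => ‖(shiftedMatrix a z).det‖ < (1 / (n : ℝ) ^ 2) ^ n)
      atTop (𝓝 0)) :
    Tendsto (fun n : ℕ => probability (productWeight (productWeight (bernoulliWeight (d / n))))
      fun a : Fin n → Fin n → Bool => HasApproxNullity (shiftedMatrix a z) Set.univ
        (n * (2 * Real.exp (-(ε * n)))) 1) atTop (𝓝 0) := by
  obtain ⟨δ, hδ, hδ1, hlt⟩ := exists_pos_add_mul_exp_lt_one hd1
  have htyp := tendsto_probability_not_isTypical hd (half_pos hε) hδ hδ1 hlt hdet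
  refine tendsto_order.2 ⟨fun e he => ?_, fun e he => ?_⟩
  · filter_upwards [tendsto_natCast_atTop_atTop.eventually_ge_atTop d] with n hn
    exact he.trans_le ((isProbWeight_bernoulliWeight (by positivity) (div_le_one_of_le₀ hn
      n.cast_nonneg)).productWeight.productWeight.probability_nonneg _)
  obtain ⟨s, hs, hse⟩ : ∃ s, 0 < s ∧ 2 / s < δ * e :=
    ⟨4 / (δ * e), by positivity, by field_simp; norm_num⟩
  obtain ⟨D, hD, hsD⟩ : ∃ D, 0 < D ∧ 8 * s ^ 2 ≤ δ * D :=
    ⟨8 * s ^ 2 / δ, by positivity, by field_simp; rfl⟩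
  have hinv := tendsto_inv_atTop_zero.comp tendsto_natCast_natLog_two_atTop
  have herr := ((hinv.add (((tendsto_natLog_two_pow_div 2).const_mul (2 * D)).const_add
    (2 / s))).add (htyp.const_mul 2)).add
    (hinv.add ((tendsto_natLog_two_pow_div 5).const_mul (Real.exp (2 * (D - d) ^ 2 / d))))
  simp only [mul_zero, add_zero, zero_add, Function.comp_apply] at herr
  filter_upwards [herr.eventually_lt_const hse, eventually_mul_probability_hasApproxNullity_le hd
    hδ.le hδ1 hD hs hsD hε hz0 hz1 hblocks] with n hlt_n hle
  exact lt_of_mul_lt_mul_left (hle.trans_lt hlt_n) hδ.le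

end SmallNullity

theorem least_singular_value_shifted_general (d ε : ℝ) (hd : 0 < d) (hd1 : d ≠ 1) (hε : 0 < ε) :
    ∀ᵐ z ∂(volume : Measure ℂ),
      Filter.Tendsto
        (fun n : ℕ =>
          iidMatrixLaw n (d / n)
            {A | leastSingVal (Matrix.of A - z • 1) ≤ Real.exp (-(ε * n))})
        Filter.atTop (nhds 0) := by
  filter_upwards [ae_tendsto_probability_norm_det_shiftedMatrix_lt hd.le,
    ae_exists_smallBlocksInvertible, volume.ae_ne 0, volume.ae_ne 1]
    with z hdet ⟨C, _, hblocks⟩ hz0 hz1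
  have hnullity := ENNReal.tendsto_ofReal
    (tendsto_probability_hasApproxNullity hd hd1 hε hz0 hz1 hblocks hdet)
  rw [ENNReal.ofReal_zero] at hnullity
  refine tendsto_of_tendsto_of_tendsto_of_le_of_le' tendsto_const_nhds hnullity
    (Filter.Eventually.of_forall fun _ => zero_le) ?_
  filter_upwards [tendsto_natCast_atTop_atTop.eventually_ge_atTop d] with n hn
  have hp0 : 0 ≤ d / n := by positivity
  have hp1 : d / n ≤ 1 := div_le_one_of_le₀ hn n.cast_nonneg
  have hlsv (a : Fin n → Fin n → Bool)
      (ha : leastSingVal (shiftedMatrix a z) ≤ Real.exp (-(ε * n))) :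
      HasApproxNullity (shiftedMatrix a z) Set.univ (n * (2 * Real.exp (-(ε * n)))) 1 :=
    hasApproxNullity_of_leastSingVal_lt (Nat.cast_pos.1 (hd.trans_le hn))
      (ha.trans_lt (lt_mul_of_one_lt_left (Real.exp_pos _) one_lt_two))
  rw [iidMatrixLaw_apply hp0 hp1]
  exact ENNReal.ofReal_le_ofReal ((isProbWeight_bernoulliWeight hp0
    hp1).productWeight.productWeight.probability_mono hlsv)

theorem least_singular_value_shifted (d ε : ℝ) (hd : 1 < d) (hε : 0 < ε) :
    ∀ᵐ z ∂(volume : Measure ℂ),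
      Filter.Tendsto
        (fun n : ℕ =>
          iidMatrixLaw n (d / n)
            {A | leastSingVal (Matrix.of A - z • 1) ≤ Real.exp (-(ε * n))})
        Filter.atTop (nhds 0) :=
  least_singular_value_shifted_general d ε (zero_lt_one.trans hd) hd.ne' hε
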